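/- Let p ∈ [3, 9/2) and let (u, w, b, Π) be a smooth solution of the stationary magneto-micropolar equations on ℝ³. Then there exists a constant C > 0 (depending only on p) such that for all ρ > 1: ∫_{B_ρ} (|∇u|² + |∇b|² + |∇w|²) dx ≤ C [ ρ^{1 − 6/p} (‖u‖_{L^p(B_{2ρ})} + ‖b‖_{L^p(B_{2ρ})} + ‖w‖_{L^p(B_{2ρ})})² + ρ^{2 − 9/p} (‖u‖_{L^p(B_{2ρ})} + ‖b‖_{L^p(B_{2ρ})} + ‖w‖_{L^p(B_{2ρ})})³ ]. -/

import Mathlib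

open MeasureTheory Real Filter Metric
open scoped Topology ENNReal

noncomputable section

/-- Three-dimensional Euclidean space. -/
abbrev E3 := EuclideanSpace ℝ (Fin 3)

/-- Partial derivative in the `i`-th coordinate direction. -/
def pd (i : Fin 3) (f : E3 → ℝ) (x : E3) : ℝ := fderiv ℝ f x (EuclideanSpace.single i 1)

/-- Laplacian of a scalar function. -/
def lap (f : E3 → ℝ) (x : E3) : ℝ := ∑ i, pd i (fun y => pd i f y) x

/-- Divergence of a vector field. -/
def vdiv (v : E3 → E3) (x : E3) : ℝ := ∑ i, pd i (fun y => v y i) x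

/-- Curl of a vector field on ℝ³. -/
def curl3 (v : E3 → E3) (x : E3) : Fin 3 → ℝ :=
  ![pd 1 (fun y => v y 2) x - pd 2 (fun y => v y 1) x,
    pd 2 (fun y => v y 0) x - pd 0 (fun y => v y 2) x,
    pd 0 (fun y => v y 1) x - pd 1 (fun y => v y 0) x]

/-- Squared norm of the full gradient of a vector field: |∇v|² = Σᵢⱼ (∂ᵢ vⱼ)². -/
def gradSq (v : E3 → E3) (x : E3) : ℝ := ∑ j, ∑ i, (pd i (fun y => v y j) x) ^ 2

/-- The open ball of radius `r` centered at the origin. -/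
def ball3 (r : ℝ) : Set E3 := Metric.ball (0 : E3) r

/-- `(u, w, b, Π)` is a smooth solution of the stationary magneto-micropolar equations on ℝ³
(with all physical constants set to 1):
−Δu + (u·∇)u + ∇Π = ∇×w + (b·∇)b; −Δw + (u·∇)w = ∇(div w) + ∇×u − 2w;
−Δb + (u·∇)b = (b·∇)u; div u = 0, div b = 0. -/
structure IsMMPSolution (u w b : E3 → E3) (P : E3 → ℝ) : Prop where
  smooth_u : ContDiff ℝ (⊤ : ℕ∞) u
  smooth_w : ContDiff ℝ (⊤ : ℕ∞) w
  smooth_b : ContDiff ℝ (⊤ : ℕ∞) b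
  smooth_P : ContDiff ℝ (⊤ : ℕ∞) P
  eq_u : ∀ x : E3, ∀ j : Fin 3,
    -(lap (fun y => u y j) x) + (∑ i, u x i * pd i (fun y => u y j) x) + pd j P x
      = curl3 w x j + ∑ i, b x i * pd i (fun y => b y j) x
  eq_w : ∀ x : E3, ∀ j : Fin 3,
    -(lap (fun y => w y j) x) + (∑ i, u x i * pd i (fun y => w y j) x)
      = pd j (fun y => vdiv w y) x + curl3 u x j - 2 * w x j
  eq_b : ∀ x : E3, ∀ j : Fin 3,
    -(lap (fun y => b y j) x) + (∑ i, u x i * pd i (fun y => b y j) x)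
      = ∑ i, b x i * pd i (fun y => u y j) x
  div_u : ∀ x : E3, vdiv u x = 0
  div_b : ∀ x : E3, vdiv b x = 0

/-- The `Lᵖ` norm of a vector field over a set `S` (for `p` a positive real). -/
def lpnorm (p : ℝ) (v : E3 → E3) (S : Set E3) : ℝ := (∫ x in S, ‖v x‖ ^ p) ^ (1 / p)

/-- Smooth compactly supported functions. -/
structure IsTest (f : E3 → ℝ) : Prop where
  smooth : ContDiff ℝ (⊤ : ℕ∞) f
  compact : HasCompactSupport f

theorem ContDiff.differentiable_top {f : E3 → ℝ} (hf : ContDiff ℝ (⊤ : ℕ∞) f) :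
    Differentiable ℝ f :=
  hf.differentiable (by simp)

theorem contDiff_fderiv_apply_const {f : E3 → ℝ} (hf : ContDiff ℝ (⊤ : ℕ∞) f) (y : E3) :
    ContDiff ℝ (⊤ : ℕ∞) (fun x => fderiv ℝ f x y) :=
  (hf.fderiv_right (by simp)).clm_apply contDiff_const

theorem ContDiff.pd_top {f : E3 → ℝ} (hf : ContDiff ℝ (⊤ : ℕ∞) f) (i : Fin 3) :
    ContDiff ℝ (⊤ : ℕ∞) (pd i f) :=
  contDiff_fderiv_apply_const hf _

theorem pd_add {f g : E3 → ℝ} (hf : Differentiable ℝ f) (hg : Differentiable ℝ g) (i : Fin 3)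
    (x : E3) : pd i (fun y => f y + g y) x = pd i f x + pd i g x := by
  simp [pd, fderiv_fun_add (hf x) (hg x)]

theorem pd_sub {f g : E3 → ℝ} (hf : Differentiable ℝ f) (hg : Differentiable ℝ g) (i : Fin 3)
    (x : E3) : pd i (fun y => f y - g y) x = pd i f x - pd i g x := by
  simp [pd, fderiv_fun_sub (hf x) (hg x)]

theorem pd_mul {f g : E3 → ℝ} (hf : Differentiable ℝ f) (hg : Differentiable ℝ g) (i : Fin 3)
    (x : E3) : pd i (fun y => f y * g y) x = pd i f x * g x + f x * pd i g x := by
  simp [pd, fderiv_fun_mul (hf x) (hg x)]; ring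

theorem pd_const_mul {f : E3 → ℝ} (hf : Differentiable ℝ f) (c : ℝ) (i : Fin 3)
    (x : E3) : pd i (fun y => c * f y) x = c * pd i f x := by
  simp [pd, fderiv_const_mul (hf x)]

theorem pd_pow {f : E3 → ℝ} (hf : Differentiable ℝ f) (n : ℕ) (i : Fin 3)
    (x : E3) : pd i (fun y => f y ^ n) x = n * f x ^ (n - 1) * pd i f x := by
  simp [pd, fderiv_fun_pow n (hf x)]

theorem pd_sum {ι : Type*} (s : Finset ι) {f : ι → E3 → ℝ} (hf : ∀ k, Differentiable ℝ (f k))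
    (i : Fin 3) (x : E3) : pd i (fun y => ∑ k ∈ s, f k y) x = ∑ k ∈ s, pd i (f k) x := by
  simp [pd, fderiv_fun_sum (fun k _ => hf k x)]

theorem pd_comm {f : E3 → ℝ} (hf : ContDiff ℝ (⊤ : ℕ∞) f) (i j : Fin 3) (x : E3) :
    pd i (pd j f) x = pd j (pd i f) x := by
  have key : ∀ a b : E3, fderiv ℝ (fun y => fderiv ℝ f y a) x b = fderiv ℝ (fderiv ℝ f) x b a := by
    intro a b
    have hd : DifferentiableAt ℝ (fderiv ℝ f) x :=
      ((hf.fderiv_right (m := (⊤ : ℕ∞)) (by simp)).differentiable (by simp)) x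
    rw [fderiv_clm_apply hd (differentiableAt_const a)]
    simp
  have hs : IsSymmSndFDerivAt ℝ f x := by
    apply ContDiffAt.isSymmSndFDerivAt hf.contDiffAt
    simp [minSmoothness_of_isRCLikeNormedField]
    exact WithTop.coe_le_coe.2 le_top
  unfold pd
  rw [key, key]
  exact hs _ _

namespace IsTest

variable {f g : E3 → ℝ}

theorem continuous (hf : IsTest f) : Continuous f := hf.smooth.continuous

theorem differentiable (hf : IsTest f) : Differentiable ℝ f := hf.smooth.differentiable_top

theorem fderiv_apply (hf : IsTest f) (y : E3) : IsTest (fun x => fderiv ℝ f x y) :=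
  ⟨contDiff_fderiv_apply_const hf.smooth y, hf.compact.fderiv_apply ℝ y⟩

theorem deriv (hf : IsTest f) (i : Fin 3) : IsTest (pd i f) := hf.fderiv_apply _

theorem mul_right (hf : IsTest f) (hg : ContDiff ℝ (⊤ : ℕ∞) g) : IsTest (fun x => f x * g x) :=
  ⟨hf.smooth.mul hg, hf.compact.mul_right⟩

theorem mul_left (hf : IsTest f) (hg : ContDiff ℝ (⊤ : ℕ∞) g) : IsTest (fun x => g x * f x) :=
  ⟨hg.mul hf.smooth, hf.compact.mul_left⟩

theorem add (hf : IsTest f) (hg : IsTest g) : IsTest (fun x => f x + g x) :=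
  ⟨hf.smooth.add hg.smooth, hf.compact.add hg.compact⟩

theorem const_mul (hf : IsTest f) (c : ℝ) : IsTest (fun x => c * f x) :=
  hf.mul_left contDiff_const

theorem sub (hf : IsTest f) (hg : IsTest g) : IsTest (fun x => f x - g x) := by
  simpa [sub_eq_add_neg] using hf.add (hg.const_mul (-1))

theorem pow (hf : IsTest f) {n : ℕ} (hn : n ≠ 0) : IsTest (fun x => f x ^ n) := by
  refine ⟨hf.smooth.pow n, ?_⟩
  exact hf.compact.comp_left (g := fun t : ℝ => t ^ n) (by simp [hn])

theorem zero : IsTest (fun _ => 0) := ⟨contDiff_const, HasCompactSupport.zero⟩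

theorem sum {ι : Type*} (s : Finset ι) {f : ι → E3 → ℝ} (hf : ∀ k, IsTest (f k)) :
    IsTest (fun x => ∑ k ∈ s, f k x) := by
  classical
  induction s using Finset.induction_on with
  | empty => simpa using zero
  | insert a s ha ih => simpa [Finset.sum_insert ha] using (hf a).add ih

theorem laplacian (hf : IsTest f) : IsTest (lap f) :=
  IsTest.sum _ fun i => (hf.deriv i).deriv i

theorem integrable (hf : IsTest f) : Integrable f :=
  hf.continuous.integrable_of_hasCompactSupport hf.compact

theorem exists_bound (hf : IsTest f) : ∃ M, 0 ≤ M ∧ ∀ x, |f x| ≤ M := by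
  obtain ⟨M, hM⟩ := hf.compact.exists_bound_of_continuous hf.continuous
  exact ⟨M, (norm_nonneg _).trans (hM 0), hM⟩

theorem exists_bound_fderiv (hf : IsTest f) : ∃ M, 0 ≤ M ∧ ∀ x, ‖fderiv ℝ f x‖ ≤ M := by
  obtain ⟨M, hM⟩ := (hf.compact.fderiv ℝ).exists_bound_of_continuous
    (hf.smooth.continuous_fderiv (by simp))
  exact ⟨M, (norm_nonneg _).trans (hM 0), hM⟩

end IsTest

theorem integral_pd_eq_zero {f : E3 → ℝ} (hd : Differentiable ℝ f) (i : Fin 3)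
    (hf : Integrable f) (hf' : Integrable (pd i f)) : ∫ x, pd i f x = 0 := by
  have hf'' : Integrable (fun x => fderiv ℝ f x (EuclideanSpace.single i (1 : ℝ))) volume := hf'
  have h := integral_mul_fderiv_eq_neg_fderiv_mul_of_integrable (μ := (volume : Measure E3))
    (f := fun _ : E3 => (1 : ℝ)) (g := f) (v := EuclideanSpace.single i (1 : ℝ))
    (by simp) (by simpa using hf'') (by simpa using hf) (by simp) (fun x _ => hd x)
  simpa [pd] using h

theorem IsTest.integral_pd {f : E3 → ℝ} (hf : IsTest f) (i : Fin 3) : ∫ x, pd i f x = 0 :=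
  integral_pd_eq_zero hf.differentiable i hf.integrable (hf.deriv i).integrable

theorem IsTest.integral_mul_pd {f g : E3 → ℝ} (hf : IsTest f) (hg : ContDiff ℝ (⊤ : ℕ∞) g)
    (i : Fin 3) : ∫ x, f x * pd i g x = - ∫ x, pd i f x * g x := by
  have h := (hf.mul_right hg).integral_pd i
  simp_rw [pd_mul hf.differentiable hg.differentiable_top] at h
  rw [integral_add ((hf.deriv i).mul_right hg).integrable
    (hf.mul_right (hg.pd_top i)).integrable] at h
  linarith

theorem fderiv_eq_sum_pd (f : E3 → ℝ) (x y : E3) :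
    fderiv ℝ f x y = ∑ i, y i * pd i f x := by
  have hy : y = ∑ i, y i • EuclideanSpace.single i (1 : ℝ) := by
    ext j; simp [Finset.sum_apply, Pi.single_apply]
  conv_lhs => rw [hy]
  simp [pd]

/-- The weighted average of the translates `f (· + τ ω)`, with weight `m`. -/
def avg {Ω : Type*} [MeasurableSpace Ω] (μ : Measure Ω) (m : Ω → ℝ) (τ : Ω → E3) (f : E3 → ℝ)
    (x : E3) : ℝ := ∫ ω, m ω * f (x + τ ω) ∂μ

section Averages

variable {Ω : Type*} [MeasurableSpace Ω] {μ : Measure Ω} {m : Ω → ℝ} {τ : Ω → E3} {f g v : E3 → ℝ}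

theorem avg_integrand_integrable (hm : Integrable m μ) (hτ : Measurable τ) (hf : IsTest f)
    (x : E3) : Integrable (fun ω => m ω * f (x + τ ω)) μ := by
  obtain ⟨M, hM0, hM⟩ := hf.exists_bound
  refine (hm.mul_const M).mono
    (hm.1.mul (hf.continuous.measurable.comp (hτ.const_add x)).aestronglyMeasurable) ?_
  filter_upwards with ω
  simp only [norm_mul, Real.norm_eq_abs, abs_of_nonneg hM0]
  gcongr
  exact hM _

theorem avg_abs_le (hm : Integrable m μ) {M : ℝ} (hM : ∀ x, |f x| ≤ M)
    (x : E3) : |avg μ m τ f x| ≤ M * ∫ ω, |m ω| ∂μ := by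
  unfold avg
  rw [← integral_const_mul, ← Real.norm_eq_abs]
  refine norm_integral_le_of_norm_le (hm.abs.const_mul M) ?_
  filter_upwards with ω
  rw [norm_mul, mul_comm, Real.norm_eq_abs, Real.norm_eq_abs]
  gcongr
  exact hM _

theorem avg_hasFDerivAt (hm : Integrable m μ) (hτ : Measurable τ) (hf : IsTest f) (x : E3) :
    HasFDerivAt (avg μ m τ f) (∫ ω, m ω • fderiv ℝ f (x + τ ω) ∂μ) x := by
  obtain ⟨M, hM0, hM⟩ := hf.exists_bound_fderiv
  have hc : Continuous (fderiv ℝ f) := hf.smooth.continuous_fderiv (by simp)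
  refine hasFDerivAt_integral_of_dominated_of_fderiv_le (s := Set.univ)
    (F' := fun x ω => m ω • fderiv ℝ f (x + τ ω)) (bound := fun ω => |m ω| * M) univ_mem
    (Eventually.of_forall fun y => (avg_integrand_integrable hm hτ hf y).1)
    (avg_integrand_integrable hm hτ hf x)
    (hm.1.smul (hc.measurable.comp (hτ.const_add x)).aestronglyMeasurable) ?_
    (hm.abs.mul_const M) ?_
  · filter_upwards with ω y _
    rw [norm_smul, Real.norm_eq_abs]
    gcongr
    exact hM _
  · filter_upwards with ω y _
    have h1 : HasFDerivAt f (fderiv ℝ f (y + τ ω)) (y + τ ω) := (hf.differentiable _).hasFDerivAt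
    have h2 := (h1.comp y ((hasFDerivAt_id y).add_const (τ ω))).const_mul (m ω)
    simpa using h2

theorem avg_fderiv_apply (hm : Integrable m μ) (hτ : Measurable τ) (hf : IsTest f) (x y : E3) :
    fderiv ℝ (avg μ m τ f) x y = avg μ m τ (fun z => fderiv ℝ f z y) x := by
  obtain ⟨M, hM0, hM⟩ := hf.exists_bound_fderiv
  have hc : Continuous (fderiv ℝ f) := hf.smooth.continuous_fderiv (by simp)
  have h_int : Integrable (fun ω => m ω • fderiv ℝ f (x + τ ω)) μ := by
    refine (hm.mul_const M).mono
      (hm.1.smul (hc.measurable.comp (hτ.const_add x)).aestronglyMeasurable) ?_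
    filter_upwards with ω
    simp only [norm_smul, norm_mul, Real.norm_eq_abs, abs_of_nonneg hM0]
    gcongr
    exact hM _
  rw [(avg_hasFDerivAt hm hτ hf x).fderiv, ContinuousLinearMap.integral_apply h_int]
  simp [avg]

theorem avg_pd (hm : Integrable m μ) (hτ : Measurable τ) (hf : IsTest f) (i : Fin 3) (x : E3) :
    pd i (avg μ m τ f) x = avg μ m τ (pd i f) x :=
  avg_fderiv_apply hm hτ hf x _

theorem avg_differentiable (hm : Integrable m μ) (hτ : Measurable τ) (hf : IsTest f) :
    Differentiable ℝ (avg μ m τ f) :=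
  fun x => (avg_hasFDerivAt hm hτ hf x).differentiableAt

theorem avg_contDiff (hm : Integrable m μ) (hτ : Measurable τ) (hf : IsTest f) :
    ContDiff ℝ (⊤ : ℕ∞) (avg μ m τ f) := by
  rw [contDiff_infty]
  intro n
  induction n generalizing f with
  | zero => exact contDiff_zero.2 (avg_differentiable hm hτ hf).continuous
  | succ n ih =>
    push_cast
    rw [contDiff_succ_iff_fderiv_apply]
    refine ⟨avg_differentiable hm hτ hf, by simp, fun y => ?_⟩
    simp_rw [avg_fderiv_apply hm hτ hf]
    exact ih (hf.fderiv_apply y)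

theorem avg_joint_integrable [SFinite μ] (hm : Integrable m μ) (hτ : Measurable τ)
    (hf : IsTest f) :
    Integrable (fun p : E3 × Ω => m p.2 * f (p.1 + τ p.2)) (volume.prod μ) := by
  have hmeas : AEStronglyMeasurable (fun p : E3 × Ω => m p.2 * f (p.1 + τ p.2))
      (volume.prod μ) :=
    hm.1.comp_snd.mul (hf.continuous.measurable.comp
      (measurable_fst.add (hτ.comp measurable_snd))).aestronglyMeasurable
  rw [integrable_prod_iff' hmeas]
  constructor
  · filter_upwards with ω
    exact (hf.integrable.comp_add_right (τ ω)).const_mul _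
  · have : ∀ ω, ∫ x : E3, ‖m ω * f (x + τ ω)‖ = |m ω| * ∫ x : E3, |f x| := by
      intro ω
      simp_rw [norm_mul, Real.norm_eq_abs]
      rw [integral_const_mul, integral_add_right_eq_self (fun x => |f x|)]
    simp_rw [this]
    exact hm.abs.mul_const _

theorem avg_integrable [SFinite μ] (hm : Integrable m μ) (hτ : Measurable τ) (hf : IsTest f) :
    Integrable (avg μ m τ f) :=
  (avg_joint_integrable hm hτ hf).integral_prod_left

theorem integral_mul_avg [SFinite μ] (hm : Integrable m μ) (hτ : Measurable τ) (hf : IsTest f)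
    (hg : IsTest g) :
    ∫ x, g x * avg μ m τ f x = ∫ ω, m ω * (∫ x, g x * f (x + τ ω)) ∂μ := by
  obtain ⟨M, hM0, hM⟩ := hg.exists_bound
  have h1 : ∀ x, g x * avg μ m τ f x = ∫ ω, g x * (m ω * f (x + τ ω)) ∂μ := by
    intro x; rw [integral_const_mul]; rfl
  have h2 : ∀ ω, m ω * ∫ x, g x * f (x + τ ω) = ∫ x, g x * (m ω * f (x + τ ω)) := by
    intro ω; rw [← integral_const_mul]; congr 1; ext x; ring
  simp_rw [h1, h2]
  rw [integral_integral_swap]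
  refine ((avg_joint_integrable hm hτ hf).const_mul M).mono
    ((hg.continuous.measurable.comp measurable_fst).aestronglyMeasurable.mul
      (avg_joint_integrable hm hτ hf).1) ?_
  filter_upwards with p
  simp only [Function.uncurry, norm_mul, Real.norm_eq_abs, abs_of_nonneg hM0]
  gcongr
  exact hM _

theorem avg_form_le [SFinite μ] (hm : Integrable m μ) (hτ : Measurable τ) (hf : IsTest f)
    (hg : IsTest g) {A : ℝ} (hA : ∀ y, |∫ x, g x * f (x + y)| ≤ A) :
    |∫ x, g x * avg μ m τ f x| ≤ A * ∫ ω, |m ω| ∂μ := by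
  rw [integral_mul_avg hm hτ hf hg, ← integral_const_mul, ← Real.norm_eq_abs]
  refine norm_integral_le_of_norm_le (hm.abs.const_mul A) ?_
  filter_upwards with ω
  rw [norm_mul, mul_comm, Real.norm_eq_abs, Real.norm_eq_abs]
  gcongr
  exact hA _

theorem abs_integral_mul_translate_le_sq (hf : IsTest f) (hg : IsTest g) (y : E3) :
    |∫ x, g x * f (x + y)| ≤ (∫ x, f x ^ 2) + ∫ x, g x ^ 2 := by
  rw [← integral_add_right_eq_self (fun x => f x ^ 2) y, ← Real.norm_eq_abs,
    ← integral_add ((hf.pow two_ne_zero).integrable.comp_add_right y)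
      (hg.pow two_ne_zero).integrable]
  refine norm_integral_le_of_norm_le (((hf.pow two_ne_zero).integrable.comp_add_right y).add
      (hg.pow two_ne_zero).integrable) ?_
  filter_upwards with x
  rw [norm_mul, Real.norm_eq_abs, Real.norm_eq_abs]
  nlinarith [sq_abs (g x), sq_abs (f (x + y)), sq_nonneg (|g x| - |f (x + y)|),
    abs_nonneg (g x), abs_nonneg (f (x + y))]

theorem IsTest.integrable_mul_sqrt (hv : IsTest v) : Integrable (fun x => v x * √(v x)) :=
  (hv.continuous.mul hv.continuous.sqrt).integrable_of_hasCompactSupport hv.compact.mul_right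

theorem mul_sqrt_le_add {a b : ℝ} (ha : 0 ≤ a) (hb : 0 ≤ b) : a * √b ≤ a * √a + b * √b := by
  rcases le_total a b with h | h
  · have := mul_le_mul_of_nonneg_right h (sqrt_nonneg b)
    have := mul_nonneg ha (sqrt_nonneg a)
    linarith
  · have := mul_le_mul_of_nonneg_left (sqrt_le_sqrt h) ha
    have := mul_nonneg hb (sqrt_nonneg b)
    linarith

theorem abs_integral_mul_translate_le_sqrt (hv : IsTest v) (hv0 : ∀ x, 0 ≤ v x)
    (hfv : ∀ x, f x ^ 2 ≤ v x) (hgv : ∀ x, |g x| ≤ v x) (y : E3) :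
    |∫ x, g x * f (x + y)| ≤ 2 * ∫ x, v x * √(v x) := by
  have h1 : 2 * ∫ x, v x * √(v x) = ∫ x, (v x * √(v x) + v (x + y) * √(v (x + y))) := by
    rw [integral_add hv.integrable_mul_sqrt (hv.integrable_mul_sqrt.comp_add_right y),
      integral_add_right_eq_self (fun x => v x * √(v x)) y]
    ring
  rw [h1, ← Real.norm_eq_abs]
  refine norm_integral_le_of_norm_le
    (hv.integrable_mul_sqrt.add (hv.integrable_mul_sqrt.comp_add_right y)) ?_
  filter_upwards with x
  rw [norm_mul, Real.norm_eq_abs, Real.norm_eq_abs]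
  refine le_trans ?_ (mul_sqrt_le_add (hv0 x) (hv0 (x + y)))
  exact mul_le_mul (hgv x) (abs_le_sqrt (hfv _)) (abs_nonneg _) (hv0 x)

end Averages

/-- The unnormalised standard Gaussian density. -/
def gaussDensity (z : E3) : ℝ := rexp (-(1 / 2) * ‖z‖ ^ 2)

theorem gaussDensity_pos (z : E3) : 0 < gaussDensity z := exp_pos _

theorem gaussDensity_contDiff : ContDiff ℝ (⊤ : ℕ∞) gaussDensity :=
  ((contDiff_const.mul (contDiff_norm_sq ℝ))).exp

theorem integrable_exp_neg_mul_norm_sq {a : ℝ} (ha : 0 < a) :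
    Integrable (fun z : E3 => rexp (-a * ‖z‖ ^ 2)) := by
  have h := GaussianFourier.integrable_cexp_neg_mul_sq_norm_add (V := E3) (b := (a : ℂ))
    (by simpa using ha) 0 0
  have h2 := h.norm
  refine h2.congr (Eventually.of_forall fun z => ?_)
  simp only [Complex.norm_exp]
  congr 1
  simp
  left
  norm_cast

theorem gaussDensity_integrable : Integrable gaussDensity :=
  integrable_exp_neg_mul_norm_sq (by norm_num)

theorem norm_mul_gaussDensity_integrable : Integrable (fun z : E3 => ‖z‖ * gaussDensity z) := by
  refine ((integrable_exp_neg_mul_norm_sq (a := 1 / 4) (by norm_num)).const_mul 4).mono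
    (continuous_norm.mul gaussDensity_contDiff.continuous).aestronglyMeasurable ?_
  filter_upwards with z
  rw [norm_mul, norm_norm, Real.norm_of_nonneg (gaussDensity_pos z).le,
    Real.norm_of_nonneg (by positivity)]
  have h1 : gaussDensity z = rexp (-(1 / 4) * ‖z‖ ^ 2) * rexp (-(1 / 4) * ‖z‖ ^ 2) := by
    rw [gaussDensity, ← exp_add]; congr 1; ring
  have h2 : ‖z‖ * rexp (-(1 / 4) * ‖z‖ ^ 2) ≤ 4 := by
    rw [show -(1 / 4) * ‖z‖ ^ 2 = -(1 / 4 * ‖z‖ ^ 2) by ring, exp_neg]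
    rw [mul_inv_le_iff₀ (exp_pos _)]
    nlinarith [add_one_le_exp (1 / 4 * ‖z‖ ^ 2), sq_nonneg (‖z‖ - 1)]
  rw [h1, ← mul_assoc]
  gcongr

theorem gaussDensity_integral_pos : 0 < ∫ z, gaussDensity z := by
  refine (integral_pos_iff_support_of_nonneg (fun z => (gaussDensity_pos z).le)
    gaussDensity_integrable).2 ?_
  have : Function.support gaussDensity = Set.univ := by
    ext z; simp [(gaussDensity_pos z).ne']
  rw [this]
  simp

/-- The inverse of the total mass of `gaussDensity`. -/
def gaussNorm : ℝ := (∫ z, gaussDensity z)⁻¹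

theorem gaussNorm_pos : 0 < gaussNorm := inv_pos.2 gaussDensity_integral_pos

theorem gaussNorm_mul_nonneg (z : E3) : 0 ≤ gaussNorm * gaussDensity z :=
  (mul_pos gaussNorm_pos (gaussDensity_pos z)).le

theorem measurable_gaussWeight :
    Measurable fun z => ENNReal.ofReal (gaussNorm * gaussDensity z) :=
  (gaussDensity_contDiff.continuous.measurable.const_mul _).ennreal_ofReal

/-- The standard Gaussian measure. -/
def gaussMeasure : Measure E3 :=
  volume.withDensity fun z => ENNReal.ofReal (gaussNorm * gaussDensity z)

theorem integral_gaussMeasure (f : E3 → ℝ) :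
    ∫ z, f z ∂gaussMeasure = gaussNorm * ∫ z, f z * gaussDensity z := by
  rw [gaussMeasure, integral_withDensity_eq_integral_toReal_smul measurable_gaussWeight
    (Eventually.of_forall fun z => ENNReal.ofReal_lt_top), ← integral_const_mul]
  congr 1
  ext z
  rw [ENNReal.toReal_ofReal (gaussNorm_mul_nonneg z), smul_eq_mul]
  ring

theorem integrable_gaussMeasure {f : E3 → ℝ} (hf : Integrable (fun z => f z * gaussDensity z)) :
    Integrable f gaussMeasure := by
  rw [gaussMeasure, integrable_withDensity_iff_integrable_smul' measurable_gaussWeight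
    (Eventually.of_forall fun z => ENNReal.ofReal_lt_top)]
  refine (hf.const_mul gaussNorm).congr (Eventually.of_forall fun z => ?_)
  simp only
  rw [ENNReal.toReal_ofReal (gaussNorm_mul_nonneg z), smul_eq_mul]
  ring

instance : IsProbabilityMeasure gaussMeasure := by
  constructor
  rw [gaussMeasure, withDensity_apply _ MeasurableSet.univ, Measure.restrict_univ,
    ← ofReal_integral_eq_lintegral_ofReal (gaussDensity_integrable.const_mul _)
      (Eventually.of_forall gaussNorm_mul_nonneg),
    integral_const_mul, gaussNorm, inv_mul_cancel₀ gaussDensity_integral_pos.ne',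
    ENNReal.ofReal_one]

theorem norm_integrable_gaussMeasure : Integrable (fun z : E3 => ‖z‖) gaussMeasure :=
  integrable_gaussMeasure norm_mul_gaussDensity_integrable

theorem pd_gaussDensity (i : Fin 3) (z : E3) : pd i gaussDensity z = -(z i * gaussDensity z) := by
  have h : HasFDerivAt gaussDensity
      (rexp (-(1 / 2) * ‖z‖ ^ 2) • ((-(1 / 2) : ℝ) • ((2 : ℕ) • innerSL ℝ z))) z :=
    (((hasStrictFDerivAt_norm_sq z).hasFDerivAt).const_mul (-(1 / 2) : ℝ)).exp
  rw [pd, h.fderiv]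
  simp [gaussDensity, EuclideanSpace.inner_single_right]
  ring

/-- A random vector `τ` satisfying the Gaussian integration by parts formula with variance `c`. -/
structure IsStein {Ω : Type*} [MeasurableSpace Ω] (μ : Measure Ω) (τ : Ω → E3) (c : ℝ) :
    Prop where
  measurable : Measurable τ
  norm_integrable : Integrable (fun ω => ‖τ ω‖) μ
  stein : ∀ {f : E3 → ℝ}, IsTest f → ∀ (i : Fin 3) (y : E3) (r : ℝ),
    ∫ ω, τ ω i * f (y + r • τ ω) ∂μ = c * r * ∫ ω, pd i f (y + r • τ ω) ∂μ

theorem pd_comp_affine {f : E3 → ℝ} (hf : Differentiable ℝ f) (i : Fin 3) (y : E3) (r : ℝ)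
    (z : E3) : pd i (fun z => f (y + r • z)) z = r * pd i f (y + r • z) := by
  have h1 : HasFDerivAt (fun z : E3 => y + r • z) (r • ContinuousLinearMap.id ℝ E3) z :=
    ((hasFDerivAt_id z).const_smul r).const_add y
  have h2 := ((hf (y + r • z)).hasFDerivAt.comp z h1).fderiv
  rw [pd]
  rw [show (fun z => f (y + r • z)) = f ∘ fun z : E3 => y + r • z from rfl, h2]
  simp [pd]

theorem abs_coord_le_norm (z : E3) (i : Fin 3) : |z i| ≤ ‖z‖ := by
  simpa using PiLp.norm_apply_le z i

theorem isStein_gaussMeasure : IsStein gaussMeasure (fun z : E3 => z) 1 where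
  measurable := measurable_id
  norm_integrable := norm_integrable_gaussMeasure
  stein := by
    intro f hf i y r
    obtain ⟨M, hM0, hM⟩ := hf.exists_bound
    obtain ⟨M', hM0', hM'⟩ := (hf.deriv i).exists_bound
    rw [integral_gaussMeasure, integral_gaussMeasure, mul_left_comm]
    congr 1
    have haff : Continuous fun z : E3 => y + r • z := by fun_prop
    have hd : ∀ z, fderiv ℝ (fun z => f (y + r • z)) z (EuclideanSpace.single i 1)
        = r * pd i f (y + r • z) := pd_comp_affine hf.differentiable i y r
    have hgd : ∀ z, fderiv ℝ gaussDensity z (EuclideanSpace.single i 1)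
        = -(z i * gaussDensity z) := pd_gaussDensity i
    have h := integral_mul_fderiv_eq_neg_fderiv_mul_of_integrable (μ := (volume : Measure E3))
      (f := fun z => f (y + r • z)) (g := gaussDensity) (v := EuclideanSpace.single i (1 : ℝ))
      ?_ ?_ ?_ (fun z _ => (hf.differentiable _).comp z (by fun_prop))
      (fun z _ => gaussDensity_contDiff.differentiable_top z)
    · simp_rw [hd, hgd] at h
      have e1 : ∀ z : E3, f (y + r • z) * -(z i * gaussDensity z)
          = -(z i * f (y + r • z) * gaussDensity z) := fun z => by ring
      simp_rw [e1, integral_neg, mul_assoc r, integral_const_mul] at h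
      linarith
    · simp_rw [hd]
      refine (gaussDensity_integrable.const_mul (|r| * M')).mono
        (((continuous_const.mul ((hf.deriv i).continuous.comp haff)).mul
          gaussDensity_contDiff.continuous).aestronglyMeasurable) ?_
      filter_upwards with z
      simp only [norm_mul, Real.norm_eq_abs, abs_abs, abs_of_nonneg hM0']
      gcongr
      exact hM' _
    · simp_rw [hgd]
      refine (norm_mul_gaussDensity_integrable.const_mul M).mono
        (((hf.continuous.comp haff).mul (((PiLp.continuous_apply 2 _ i).mul
          gaussDensity_contDiff.continuous).neg)).aestronglyMeasurable) ?_
      filter_upwards with z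
      simp only [norm_mul, norm_neg, Real.norm_eq_abs, abs_of_nonneg hM0, abs_norm]
      gcongr
      · exact hM _
      · exact abs_coord_le_norm z i
    · refine (gaussDensity_integrable.const_mul M).mono
        (((hf.continuous.comp haff).mul
          gaussDensity_contDiff.continuous).aestronglyMeasurable) ?_
      filter_upwards with z
      simp only [norm_mul, Real.norm_eq_abs, abs_of_nonneg hM0]
      gcongr
      exact hM _

theorem IsTest.comp_integrable {f : E3 → ℝ} (hf : IsTest f) {Ω : Type*} [MeasurableSpace Ω]
    {μ : Measure Ω} [IsFiniteMeasure μ] {τ : Ω → E3} (hτ : Measurable τ) :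
    Integrable (fun ω => f (τ ω)) μ := by
  obtain ⟨M, hM0, hM⟩ := hf.exists_bound
  exact Integrable.of_bound (hf.continuous.measurable.comp hτ).aestronglyMeasurable M
    (Eventually.of_forall fun ω => hM _)

theorem IsTest.coord_mul_integrable {f : E3 → ℝ} (hf : IsTest f) {Ω : Type*} [MeasurableSpace Ω]
    {μ : Measure Ω} {σ τ : Ω → E3} (hσ : Measurable σ) (hn : Integrable (fun ω => ‖σ ω‖) μ)
    (hτ : Measurable τ) (i : Fin 3) : Integrable (fun ω => σ ω i * f (τ ω)) μ := by
  obtain ⟨M, hM0, hM⟩ := hf.exists_bound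
  refine (hn.mul_const M).mono
    ((((PiLp.continuous_apply 2 _ i).measurable.comp hσ).mul
      (hf.continuous.measurable.comp hτ)).aestronglyMeasurable) ?_
  filter_upwards with ω
  simp only [norm_mul, Real.norm_eq_abs, abs_of_nonneg hM0, abs_norm]
  gcongr
  · exact abs_coord_le_norm _ i
  · exact hM _

theorem isStein_prod : IsStein (gaussMeasure.prod gaussMeasure)
    (fun z : E3 × E3 => z.1 - z.2) 2 where
  measurable := by fun_prop
  norm_integrable := by
    refine ((norm_integrable_gaussMeasure.comp_fst gaussMeasure).add
      (norm_integrable_gaussMeasure.comp_snd gaussMeasure)).mono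
      (by fun_prop) ?_
    filter_upwards with z
    simp only [norm_norm, Pi.add_apply]
    exact (norm_sub_le _ _).trans (le_abs_self _)
  stein := by
    intro f hf i y r
    have hm : Measurable fun z : E3 × E3 => y + r • (z.1 - z.2) := by fun_prop
    have i1 : Integrable (fun z : E3 × E3 => z.1 i * f (y + r • (z.1 - z.2)))
        (gaussMeasure.prod gaussMeasure) :=
      hf.coord_mul_integrable measurable_fst (norm_integrable_gaussMeasure.comp_fst _) hm i
    have i2 : Integrable (fun z : E3 × E3 => z.2 i * f (y + r • (z.1 - z.2)))
        (gaussMeasure.prod gaussMeasure) :=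
      hf.coord_mul_integrable measurable_snd (norm_integrable_gaussMeasure.comp_snd _) hm i
    have i3 : Integrable (fun z : E3 × E3 => pd i f (y + r • (z.1 - z.2)))
        (gaussMeasure.prod gaussMeasure) := (hf.deriv i).comp_integrable hm
    have e : ∀ z : E3 × E3, (z.1 - z.2) i * f (y + r • (z.1 - z.2))
        = z.1 i * f (y + r • (z.1 - z.2)) - z.2 i * f (y + r • (z.1 - z.2)) := by
      intro z; simp; ring
    have a1 : ∀ z w : E3, y + r • (z - w) = (y - r • w) + r • z := by
      intro z w; rw [smul_sub]; abel
    have a2 : ∀ z w : E3, y + r • (z - w) = (y + r • z) + (-r) • w := by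
      intro z w; rw [smul_sub, neg_smul]; abel
    simp_rw [e]
    rw [integral_sub i1 i2]
    have s1 : ∫ z : E3 × E3, z.1 i * f (y + r • (z.1 - z.2)) ∂(gaussMeasure.prod gaussMeasure)
        = r * ∫ z : E3 × E3, pd i f (y + r • (z.1 - z.2)) ∂(gaussMeasure.prod gaussMeasure) := by
      rw [integral_prod_symm _ i1, integral_prod_symm _ i3, ← integral_const_mul]
      congr 1; ext w
      simp_rw [a1]
      rw [isStein_gaussMeasure.stein hf]; ring
    have s2 : ∫ z : E3 × E3, z.2 i * f (y + r • (z.1 - z.2)) ∂(gaussMeasure.prod gaussMeasure)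
        = -(r * ∫ z : E3 × E3, pd i f (y + r • (z.1 - z.2))
            ∂(gaussMeasure.prod gaussMeasure)) := by
      rw [integral_prod _ i2, integral_prod _ i3, ← neg_mul, ← integral_const_mul]
      congr 1; ext w
      simp_rw [a2]
      rw [isStein_gaussMeasure.stein hf]; ring
    rw [s1, s2]; ring

/-- The average of `f` over the random displacement `r • τ`. -/
def flow {Ω : Type*} [MeasurableSpace Ω] (μ : Measure Ω) (τ : Ω → E3) (r : ℝ) (f : E3 → ℝ) :
    E3 → ℝ := avg μ (fun _ => 1) (fun ω => r • τ ω) f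

section Flow

variable {Ω : Type*} [MeasurableSpace Ω] {μ : Measure Ω} {τ : Ω → E3} {c r : ℝ} {f g v : E3 → ℝ}

theorem flow_apply (r : ℝ) (f : E3 → ℝ) (x : E3) :
    flow μ τ r f x = ∫ ω, f (x + r • τ ω) ∂μ := by simp [flow, avg]

variable [IsProbabilityMeasure μ]

theorem flow_zero (f : E3 → ℝ) : flow μ τ 0 f = f := by
  ext x; simp [flow_apply]

theorem flow_abs_le {M : ℝ} (hM : ∀ x, |f x| ≤ M) (r : ℝ) (x : E3) : |flow μ τ r f x| ≤ M := by
  simpa [flow] using avg_abs_le (μ := μ) (τ := fun ω => r • τ ω) (integrable_const (1 : ℝ)) hM x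

theorem flow_pd (hτ : Measurable τ) (hf : IsTest f) (r : ℝ) (i : Fin 3) (x : E3) :
    pd i (flow μ τ r f) x = flow μ τ r (pd i f) x :=
  avg_pd (integrable_const _) (hτ.const_smul r) hf i x

theorem flow_differentiable (hτ : Measurable τ) (hf : IsTest f) (r : ℝ) :
    Differentiable ℝ (flow μ τ r f) :=
  avg_differentiable (integrable_const _) (hτ.const_smul r) hf

theorem flow_integrable (hτ : Measurable τ) (hf : IsTest f) (r : ℝ) :
    Integrable (flow μ τ r f) :=
  avg_integrable (integrable_const _) (hτ.const_smul r) hf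

theorem flow_continuous (hτ : Measurable τ) (hf : IsTest f) :
    Continuous fun p : ℝ × E3 => flow μ τ p.1 f p.2 := by
  obtain ⟨M, hM0, hM⟩ := hf.exists_bound
  simp_rw [flow_apply]
  refine continuous_of_dominated (bound := fun _ => M) (fun p =>
    (hf.continuous.measurable.comp ((hτ.const_smul p.1).const_add p.2)).aestronglyMeasurable)
    (fun p => Eventually.of_forall fun ω => hM _) (integrable_const _)
    (Eventually.of_forall fun ω => hf.continuous.comp ?_)
  fun_prop

theorem flow_comp_integrable (hτ : Measurable τ) (hf : IsTest f) (r : ℝ) (x : E3) :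
    Integrable (fun ω => f (x + r • τ ω)) μ :=
  hf.comp_integrable ((hτ.const_smul r).const_add x)

theorem flow_sum {ι : Type*} (hτ : Measurable τ) (s : Finset ι) {f : ι → E3 → ℝ}
    (hf : ∀ k, IsTest (f k)) (r : ℝ) (x : E3) :
    flow μ τ r (fun y => ∑ k ∈ s, f k y) x = ∑ k ∈ s, flow μ τ r (f k) x := by
  simp_rw [flow_apply]
  exact integral_finsetSum _ fun k _ => flow_comp_integrable hτ (hf k) r x

theorem flow_hasDerivAt (hτ : IsStein μ τ c) (hf : IsTest f) (x : E3) (r : ℝ) :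
    HasDerivAt (fun r => flow μ τ r f x) (c * r * flow μ τ r (lap f) x) r := by
  obtain ⟨M, hM0, hM⟩ := hf.exists_bound_fderiv
  have hc : Continuous (fderiv ℝ f) := hf.smooth.continuous_fderiv (by simp)
  have hm := hτ.measurable
  have hsum : ∀ ω, fderiv ℝ f (x + r • τ ω) (τ ω) = ∑ i, τ ω i * pd i f (x + r • τ ω) :=
    fun ω => fderiv_eq_sum_pd _ _ _
  have h_int : ∀ i, Integrable (fun ω => τ ω i * pd i f (x + r • τ ω)) μ := fun i =>
    (hf.deriv i).coord_mul_integrable hm hτ.norm_integrable ((hm.const_smul r).const_add x) i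
  have key := hasDerivAt_integral_of_dominated_loc_of_deriv_le (μ := μ) (s := Set.univ)
    (F := fun r ω => f (x + r • τ ω)) (F' := fun r ω => fderiv ℝ f (x + r • τ ω) (τ ω))
    (x₀ := r) (bound := fun ω => M * ‖τ ω‖) univ_mem
    (Eventually.of_forall fun s => (flow_comp_integrable hm hf s x).1)
    (flow_comp_integrable hm hf r x) ?_ ?_ (hτ.norm_integrable.const_mul M) ?_
  · have hval : ∫ ω, fderiv ℝ f (x + r • τ ω) (τ ω) ∂μ = c * r * flow μ τ r (lap f) x := by
      rw [integral_congr_ae (Eventually.of_forall hsum), integral_finsetSum _ fun i _ => h_int i]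
      simp_rw [hτ.stein (hf.deriv _)]
      rw [← Finset.mul_sum]
      congr 1
      simp_rw [← flow_apply]
      exact (flow_sum (μ := μ) hm Finset.univ (fun i => (hf.deriv i).deriv i) r x).symm
    rw [← hval, show (fun r => flow μ τ r f x) = fun r => ∫ ω, f (x + r • τ ω) ∂μ from
      funext fun r => flow_apply r f x]
    exact key.2
  · have : (fun ω => fderiv ℝ f (x + r • τ ω) (τ ω))
        = fun ω => ∑ i, τ ω i * pd i f (x + r • τ ω) := funext hsum
    rw [this]
    exact (integrable_finsetSum _ fun i _ => h_int i).1
  · filter_upwards with ω s _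
    exact (ContinuousLinearMap.le_opNorm _ _).trans (by gcongr; exact hM _)
  · filter_upwards with ω s _
    have h1 : HasFDerivAt f (fderiv ℝ f (x + s • τ ω)) (x + s • τ ω) :=
      (hf.differentiable _).hasFDerivAt
    have h2 : HasDerivAt (fun s : ℝ => x + s • τ ω) (τ ω) s := by
      simpa using ((hasDerivAt_id s).smul_const (τ ω)).const_add x
    exact h1.comp_hasDerivAt s h2

theorem flow_mono_abs (hτ : Measurable τ) (hv : IsTest v)
    (hgv : ∀ x, |g x| ≤ v x) (r : ℝ) (x : E3) : |flow μ τ r g x| ≤ flow μ τ r v x := by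
  rw [flow_apply, flow_apply, ← Real.norm_eq_abs]
  exact norm_integral_le_of_norm_le (flow_comp_integrable hτ hv r x)
    (Eventually.of_forall fun ω => hgv (x + r • τ ω))

theorem flow_sq_le (hτ : Measurable τ) (hf : IsTest f) (hv : IsTest v)
    (hfv : ∀ x, f x ^ 2 ≤ v x) (r : ℝ) (x : E3) : flow μ τ r f x ^ 2 ≤ flow μ τ r v x := by
  set A := flow μ τ r f x with hA
  have i1 := flow_comp_integrable (μ := μ) hτ hf r x
  have i2 := flow_comp_integrable (μ := μ) hτ hv r x
  have h : ∫ ω, (2 * A * f (x + r • τ ω) - A ^ 2) ∂μ ≤ ∫ ω, v (x + r • τ ω) ∂μ := by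
    refine integral_mono ((i1.const_mul _).sub (integrable_const _)) i2 fun ω => ?_
    have := hfv (x + r • τ ω)
    simp only
    nlinarith [sq_nonneg (f (x + r • τ ω) - A)]
  rw [integral_sub (i1.const_mul _) (integrable_const _), integral_const_mul, ← flow_apply,
    ← flow_apply, ← hA] at h
  simp at h
  nlinarith

end Flow

/-- The Gaussian average of `f` at scale `r`. -/
abbrev gaussFlow (r : ℝ) (f : E3 → ℝ) : E3 → ℝ := flow gaussMeasure (fun z => z) r f

/-- The square of the Gaussian averaging operator at scale `r`. -/
abbrev heatFlow (r : ℝ) (f : E3 → ℝ) : E3 → ℝ :=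
  flow (gaussMeasure.prod gaussMeasure) (fun z => z.1 - z.2) r f

theorem gaussFlow_apply (r : ℝ) (f : E3 → ℝ) (x : E3) :
    gaussFlow r f x = ∫ z, f (x + r • z) ∂gaussMeasure := flow_apply r f x

theorem heatFlow_apply (r : ℝ) (f : E3 → ℝ) (x : E3) :
    heatFlow r f x = ∫ z : E3 × E3, f (x + r • (z.1 - z.2)) ∂(gaussMeasure.prod gaussMeasure) :=
  flow_apply r f x

theorem integral_gaussFlow_mul {f g : E3 → ℝ} (hf : IsTest f) (hg : IsTest g) (r : ℝ) :
    ∫ x, gaussFlow r g x * gaussFlow r f x = ∫ x, g x * heatFlow r f x := by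
  obtain ⟨M, hM0, hM⟩ := hg.exists_bound
  have hm : Measurable fun z : E3 × E3 => r • (z.1 - z.2) := by fun_prop
  have h1 : ∀ x, gaussFlow r g x * gaussFlow r f x
      = ∫ z : E3 × E3, f (x + r • z.1) * g (x + r • z.2) ∂(gaussMeasure.prod gaussMeasure) := by
    intro x
    rw [integral_prod_mul (fun z => f (x + r • z)) (fun z => g (x + r • z)), gaussFlow_apply,
      gaussFlow_apply, mul_comm]
  rw [heatFlow, show flow (gaussMeasure.prod gaussMeasure) (fun z : E3 × E3 => z.1 - z.2) r f
    = avg (gaussMeasure.prod gaussMeasure) (fun _ => 1) (fun z => r • (z.1 - z.2)) f from rfl,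
    integral_mul_avg (integrable_const _) hm hf hg]
  rw [integral_congr_ae (Eventually.of_forall h1), integral_integral_swap]
  · congr 1
    ext z
    rw [← integral_add_right_eq_self (fun x => g x * f (x + r • (z.1 - z.2))) (r • z.2), one_mul]
    congr 1
    ext x
    rw [mul_comm, smul_sub, add_assoc, add_sub_cancel]
  · have hj := avg_joint_integrable (μ := gaussMeasure.prod gaussMeasure)
      (m := fun _ => 1) (τ := fun z : E3 × E3 => r • z.1) (integrable_const _) (by fun_prop) hf
    refine (hj.const_mul M).mono ?_ ?_
    · have a1 : Continuous fun p : E3 × E3 × E3 => f (p.1 + r • p.2.1) :=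
        hf.continuous.comp (by fun_prop)
      have a2 : Continuous fun p : E3 × E3 × E3 => g (p.1 + r • p.2.2) :=
        hg.continuous.comp (by fun_prop)
      exact (a1.mul a2).aestronglyMeasurable
    · filter_upwards with p
      simp only [Function.uncurry, norm_mul, Real.norm_eq_abs, abs_of_nonneg hM0, one_mul]
      rw [mul_comm]
      gcongr
      exact hM _

/-- The measure on scales and displacements defining the truncated Newtonian potential. -/
abbrev newtMeasure (ρ : ℝ) : Measure (ℝ × E3 × E3) :=
  (volume.restrict (Set.Ioc 0 ρ)).prod (gaussMeasure.prod gaussMeasure)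

/-- The truncated Newtonian potential `∫₀^ρ 2 r P_r f dr`, where `P_r` is `heatFlow r`. -/
def newt (ρ : ℝ) (f : E3 → ℝ) : E3 → ℝ :=
  avg (newtMeasure ρ) (fun ω => 2 * ω.1) (fun ω => ω.1 • (ω.2.1 - ω.2.2)) f

section Newt

variable {ρ : ℝ} {f : E3 → ℝ}

theorem newt_weight_integrable (ρ : ℝ) :
    Integrable (fun ω : ℝ × E3 × E3 => 2 * ω.1) (newtMeasure ρ) := by
  have h : Integrable (fun r : ℝ => 2 * r) (volume.restrict (Set.Ioc 0 ρ)) :=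
    (continuous_const.mul continuous_id).integrableOn_Ioc
  exact h.comp_fst _

theorem newt_displacement_measurable :
    Measurable fun ω : ℝ × E3 × E3 => ω.1 • (ω.2.1 - ω.2.2) := by fun_prop

theorem newt_contDiff (hf : IsTest f) : ContDiff ℝ (⊤ : ℕ∞) (newt ρ f) :=
  avg_contDiff (newt_weight_integrable ρ) newt_displacement_measurable hf

theorem newt_pd (hf : IsTest f) (i : Fin 3) : pd i (newt ρ f) = newt ρ (pd i f) :=
  funext fun x => avg_pd (newt_weight_integrable ρ) newt_displacement_measurable hf i x

theorem newt_sum {ι : Type*} (s : Finset ι) {f : ι → E3 → ℝ} (hf : ∀ k, IsTest (f k)) (x : E3) :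
    newt ρ (fun y => ∑ k ∈ s, f k y) x = ∑ k ∈ s, newt ρ (f k) x := by
  unfold newt avg
  simp_rw [Finset.mul_sum]
  exact integral_finsetSum _ fun k _ => avg_integrand_integrable (newt_weight_integrable ρ)
    newt_displacement_measurable (hf k) x

theorem newt_const_mul (a : ℝ) (x : E3) :
    newt ρ (fun y => a * f y) x = a * newt ρ f x := by
  unfold newt avg
  rw [← integral_const_mul]
  congr 1; ext ω; ring

theorem newt_apply (hρ : 0 ≤ ρ) (hf : IsTest f) (x : E3) :
    newt ρ f x = ∫ r in (0)..ρ, 2 * r * heatFlow r f x := by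
  rw [newt, avg, integral_prod _ (avg_integrand_integrable (newt_weight_integrable ρ)
    newt_displacement_measurable hf x), intervalIntegral.integral_of_le hρ]
  congr 1; ext r
  rw [heatFlow_apply, ← integral_const_mul]

theorem newt_lap (hρ : 0 ≤ ρ) (hf : IsTest f) (x : E3) :
    lap (newt ρ f) x = heatFlow ρ f x - f x := by
  have h1 : lap (newt ρ f) x = newt ρ (lap f) x := by
    have : (lap f) = fun y => ∑ i, pd i (pd i f) y := rfl
    rw [this, newt_sum _ fun i => (hf.deriv i).deriv i]
    refine Finset.sum_congr rfl fun i _ => ?_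
    rw [newt_pd hf, newt_pd (hf.deriv i)]
  rw [h1, newt_apply hρ hf.laplacian]
  have hm := isStein_prod.measurable
  have h2 : heatFlow ρ f x - f x = heatFlow ρ f x - heatFlow 0 f x := by
    rw [show heatFlow 0 f = f from flow_zero f]
  rw [h2]
  refine intervalIntegral.integral_eq_sub_of_hasDerivAt
    (fun r _ => flow_hasDerivAt isStein_prod hf x r) (Continuous.intervalIntegrable ?_ _ _)
  exact (continuous_const.mul continuous_id).mul
    ((flow_continuous hm hf.laplacian).comp (continuous_id.prodMk continuous_const))

/-- The mean displacement of the heat flow at unit scale. -/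
def meanDisp : ℝ := ∫ z : E3 × E3, ‖z.1 - z.2‖ ∂(gaussMeasure.prod gaussMeasure)

theorem meanDisp_nonneg : 0 ≤ meanDisp := integral_nonneg fun _ => norm_nonneg _

theorem coord_weight_integrable (i : Fin 3) :
    Integrable (fun z : E3 × E3 => (z.1 - z.2) i) (gaussMeasure.prod gaussMeasure) := by
  refine isStein_prod.norm_integrable.mono
    ((PiLp.continuous_apply 2 _ i).measurable.comp
      isStein_prod.measurable).aestronglyMeasurable ?_
  filter_upwards with z
  rw [norm_norm]
  exact abs_coord_le_norm _ i

theorem integral_abs_coord_le (i : Fin 3) :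
    ∫ z : E3 × E3, |(z.1 - z.2) i| ∂(gaussMeasure.prod gaussMeasure) ≤ meanDisp :=
  integral_mono (coord_weight_integrable i).abs isStein_prod.norm_integrable
    fun _ => abs_coord_le_norm _ i

theorem newt_coord_weight_integrable (ρ : ℝ) (i : Fin 3) :
    Integrable (fun ω : ℝ × E3 × E3 => (ω.2.1 - ω.2.2) i) (newtMeasure ρ) :=
  (coord_weight_integrable i).comp_snd _

theorem newt_pd_eq_avg (hf : IsTest f) (i : Fin 3) :
    pd i (newt ρ f) = avg (newtMeasure ρ) (fun ω => (ω.2.1 - ω.2.2) i)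
      (fun ω => ω.1 • (ω.2.1 - ω.2.2)) f := by
  ext x
  rw [newt_pd hf, newt, avg, avg, integral_prod _ (avg_integrand_integrable
    (newt_weight_integrable ρ) newt_displacement_measurable (hf.deriv i) x),
    integral_prod _ (avg_integrand_integrable (newt_coord_weight_integrable ρ i)
      newt_displacement_measurable hf x)]
  congr 1; ext r
  exact (integral_const_mul (2 * r) fun z : E3 × E3 => pd i f (x + r • (z.1 - z.2))).trans
    (isStein_prod.stein hf i x r).symm

theorem newt_coord_weight_le (hρ : 0 ≤ ρ) (i : Fin 3) :
    ∫ ω : ℝ × E3 × E3, |(ω.2.1 - ω.2.2) i| ∂(newtMeasure ρ) ≤ ρ * meanDisp := by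
  rw [integral_prod _ (newt_coord_weight_integrable ρ i).abs]
  simp only [integral_const, smul_eq_mul]
  simp [hρ]
  gcongr
  exact integral_abs_coord_le i

theorem heatFlow_pd_eq_avg (hf : IsTest f) (i : Fin 3) (x : E3) :
    2 * ρ * pd i (heatFlow ρ f) x = avg (gaussMeasure.prod gaussMeasure)
      (fun z => (z.1 - z.2) i) (fun z => ρ • (z.1 - z.2)) f x := by
  rw [flow_pd isStein_prod.measurable hf, avg, isStein_prod.stein hf, flow_apply]

end Newt

/-- `B` is twice continuously differentiable on the plane, with the given partial derivatives. -/
structure HasPartials (B B₁ B₂ B₁₁ B₁₂ B₂₂ : ℝ → ℝ → ℝ) : Prop where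
  first : ∀ p : ℝ × ℝ, HasFDerivAt (fun p : ℝ × ℝ => B p.1 p.2)
    (B₁ p.1 p.2 • ContinuousLinearMap.fst ℝ ℝ ℝ + B₂ p.1 p.2 • ContinuousLinearMap.snd ℝ ℝ ℝ) p
  second_left : ∀ p : ℝ × ℝ, HasFDerivAt (fun p : ℝ × ℝ => B₁ p.1 p.2)
    (B₁₁ p.1 p.2 • ContinuousLinearMap.fst ℝ ℝ ℝ + B₁₂ p.1 p.2 • ContinuousLinearMap.snd ℝ ℝ ℝ) p
  second_right : ∀ p : ℝ × ℝ, HasFDerivAt (fun p : ℝ × ℝ => B₂ p.1 p.2)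
    (B₁₂ p.1 p.2 • ContinuousLinearMap.fst ℝ ℝ ℝ + B₂₂ p.1 p.2 • ContinuousLinearMap.snd ℝ ℝ ℝ) p
  cont₁₁ : Continuous fun p : ℝ × ℝ => B₁₁ p.1 p.2
  cont₁₂ : Continuous fun p : ℝ × ℝ => B₁₂ p.1 p.2
  cont₂₂ : Continuous fun p : ℝ × ℝ => B₂₂ p.1 p.2

theorem pd_comp_pair {A A₁ A₂ : ℝ → ℝ → ℝ} {F V : E3 → ℝ}
    (hA : ∀ p : ℝ × ℝ, HasFDerivAt (fun p : ℝ × ℝ => A p.1 p.2)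
      (A₁ p.1 p.2 • ContinuousLinearMap.fst ℝ ℝ ℝ + A₂ p.1 p.2 • ContinuousLinearMap.snd ℝ ℝ ℝ) p)
    (hF : Differentiable ℝ F) (hV : Differentiable ℝ V) (i : Fin 3) (x : E3) :
    pd i (fun y => A (F y) (V y)) x
      = A₁ (F x) (V x) * pd i F x + A₂ (F x) (V x) * pd i V x := by
  have h := (hA (F x, V x)).comp x ((hF x).hasFDerivAt.prodMk (hV x).hasFDerivAt)
  have h2 := h.fderiv
  rw [pd, show (fun y => A (F y) (V y))
    = (fun p : ℝ × ℝ => A p.1 p.2) ∘ fun y => (F y, V y) from rfl, h2]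
  simp [pd]

theorem differentiable_comp_pair {A A₁ A₂ : ℝ → ℝ → ℝ} {F V : E3 → ℝ}
    (hA : ∀ p : ℝ × ℝ, HasFDerivAt (fun p : ℝ × ℝ => A p.1 p.2)
      (A₁ p.1 p.2 • ContinuousLinearMap.fst ℝ ℝ ℝ + A₂ p.1 p.2 • ContinuousLinearMap.snd ℝ ℝ ℝ) p)
    (hF : Differentiable ℝ F) (hV : Differentiable ℝ V) :
    Differentiable ℝ (fun y => A (F y) (V y)) := by
  intro x
  have h := (hA (F x, V x)).comp x ((hF x).hasFDerivAt.prodMk (hV x).hasFDerivAt)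
  exact h.differentiableAt

theorem hasDerivAt_comp_pair {A A₁ A₂ : ℝ → ℝ → ℝ} {F V : ℝ → ℝ} {F' V' r : ℝ}
    (hA : ∀ p : ℝ × ℝ, HasFDerivAt (fun p : ℝ × ℝ => A p.1 p.2)
      (A₁ p.1 p.2 • ContinuousLinearMap.fst ℝ ℝ ℝ + A₂ p.1 p.2 • ContinuousLinearMap.snd ℝ ℝ ℝ) p)
    (hF : HasDerivAt F F' r) (hV : HasDerivAt V V' r) :
    HasDerivAt (fun s => A (F s) (V s)) (A₁ (F r) (V r) * F' + A₂ (F r) (V r) * V') r := by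
  have h := (hA (F r, V r)).comp_hasDerivAt r (hF.prodMk hV)
  simpa using! h

theorem exists_bound_comp_pair {A : ℝ → ℝ → ℝ} (hA : Continuous fun p : ℝ × ℝ => A p.1 p.2)
    (M₁ M₂ : ℝ) : ∃ C, ∀ a b, |a| ≤ M₁ → |b| ≤ M₂ → |A a b| ≤ C := by
  obtain ⟨C, hC⟩ := ((isCompact_Icc (a := -M₁) (b := M₁)).prod
    (isCompact_Icc (a := -M₂) (b := M₂))).exists_bound_of_continuousOn hA.continuousOn
  exact ⟨C, fun a b ha hb => hC (a, b) ⟨abs_le.1 ha, abs_le.1 hb⟩⟩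

/-- Bounded continuous functions of scale and position. -/
def IsBddCont (Ψ : ℝ × E3 → ℝ) : Prop := Continuous Ψ ∧ ∃ C, ∀ p, |Ψ p| ≤ C

theorem IsBddCont.mul {Ψ Φ : ℝ × E3 → ℝ} (h : IsBddCont Ψ) (h' : IsBddCont Φ) :
    IsBddCont fun p => Ψ p * Φ p := by
  obtain ⟨h1, C, hC⟩ := h
  obtain ⟨h2, D, hD⟩ := h'
  refine ⟨h1.mul h2, C * D, fun p => ?_⟩
  rw [abs_mul]
  exact mul_le_mul (hC p) (hD p) (abs_nonneg _) ((abs_nonneg _).trans (hC p))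

theorem IsBddCont.add {Ψ Φ : ℝ × E3 → ℝ} (h : IsBddCont Ψ) (h' : IsBddCont Φ) :
    IsBddCont fun p => Ψ p + Φ p := by
  obtain ⟨h1, C, hC⟩ := h
  obtain ⟨h2, D, hD⟩ := h'
  exact ⟨h1.add h2, C + D, fun p => (abs_add_le _ _).trans (add_le_add (hC p) (hD p))⟩

theorem IsBddCont.mul_integrable {Ψ Φ : ℝ × E3 → ℝ} {ν : Measure (ℝ × E3)} (h : IsBddCont Ψ)
    (h' : Integrable Φ ν) : Integrable (fun p => Ψ p * Φ p) ν := by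
  obtain ⟨h1, C, hC⟩ := h
  exact h'.bdd_mul h1.aestronglyMeasurable (Eventually.of_forall hC)

theorem IsBddCont.slice_mul_integrable {Ψ : ℝ × E3 → ℝ} {φ : E3 → ℝ} (h : IsBddCont Ψ)
    (h' : Integrable φ) (r : ℝ) : Integrable (fun x => Ψ (r, x) * φ x) := by
  obtain ⟨h1, C, hC⟩ := h
  exact h'.bdd_mul (h1.comp (Continuous.prodMk_right r)).aestronglyMeasurable
    (Eventually.of_forall fun x => hC _)

/-- Lebesgue measure on the slab of scales in `(0, ρ]`. -/
abbrev slab (ρ : ℝ) : Measure (ℝ × E3) := (volume.restrict (Set.Ioc 0 ρ)).prod volume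

theorem gaussFlow_isBddCont {f : E3 → ℝ} (hf : IsTest f) :
    IsBddCont fun p => gaussFlow p.1 f p.2 := by
  obtain ⟨M, hM0, hM⟩ := hf.exists_bound
  exact ⟨flow_continuous measurable_id hf, M, fun p => flow_abs_le hM _ _⟩

theorem gaussFlow_abs_integral_le {f : E3 → ℝ} (hf : IsTest f) (r : ℝ) :
    ∫ x, |gaussFlow r f x| ≤ ∫ x, |f x| := by
  have hj := avg_joint_integrable (μ := gaussMeasure) (m := fun _ => 1) (τ := fun z : E3 => r • z)
    (integrable_const _) (by fun_prop) hf
  simp only [one_mul] at hj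
  have h1 : ∫ x, |gaussFlow r f x| ≤ ∫ x, ∫ z, |f (x + r • z)| ∂gaussMeasure := by
    refine integral_mono (flow_integrable measurable_id hf r).abs hj.abs.integral_prod_left ?_
    intro x
    simp only [gaussFlow_apply]
    exact abs_integral_le_integral_abs
  refine h1.trans_eq ((integral_integral_swap hj.abs).trans ?_)
  have h2 : ∀ z : E3, ∫ x, |f (x + r • z)| = ∫ x, |f x| := fun z =>
    integral_add_right_eq_self (fun x => |f x|) (r • z)
  simp [h2]

theorem gaussFlow_integrable_slab {f : E3 → ℝ} (hf : IsTest f) (ρ : ℝ) :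
    Integrable (fun p : ℝ × E3 => gaussFlow p.1 f p.2) (slab ρ) := by
  have hm : AEStronglyMeasurable (fun p : ℝ × E3 => gaussFlow p.1 f p.2) (slab ρ) :=
    (gaussFlow_isBddCont hf).1.aestronglyMeasurable
  rw [integrable_prod_iff hm]
  refine ⟨Eventually.of_forall fun r => flow_integrable measurable_id hf r, ?_⟩
  refine Integrable.of_bound hm.norm.integral_prod_right' (∫ x, |f x|)
    (Eventually.of_forall fun r => ?_)
  rw [Real.norm_of_nonneg (integral_nonneg fun x => norm_nonneg _)]
  exact gaussFlow_abs_integral_le hf r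

theorem slab_fst_mul_integrable {Ψ : ℝ × E3 → ℝ} {ρ : ℝ} (h : Integrable Ψ (slab ρ)) :
    Integrable (fun p => p.1 * Ψ p) (slab ρ) := by
  refine h.bdd_mul (c := ρ) measurable_fst.aestronglyMeasurable ?_
  refine Measure.quasiMeasurePreserving_fst.ae (p := fun r : ℝ => ‖r‖ ≤ ρ) ?_
  filter_upwards [ae_restrict_mem measurableSet_Ioc] with r hr
  rw [Real.norm_of_nonneg hr.1.le]
  exact hr.2

theorem slab_fst_pos (ρ : ℝ) : ∀ᵐ p ∂(slab ρ), 0 < p.1 := by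
  refine Measure.quasiMeasurePreserving_fst.ae (p := fun r : ℝ => 0 < r) ?_
  filter_upwards [ae_restrict_mem measurableSet_Ioc] with r hr
  exact hr.1

theorem comp_pair_isBddCont {A : ℝ → ℝ → ℝ} (hA : Continuous fun p : ℝ × ℝ => A p.1 p.2)
    {f v : E3 → ℝ} (hf : IsTest f) (hv : IsTest v) :
    IsBddCont fun p => A (gaussFlow p.1 f p.2) (gaussFlow p.1 v p.2) := by
  obtain ⟨h1, C, hC⟩ := gaussFlow_isBddCont hf
  obtain ⟨h2, D, hD⟩ := gaussFlow_isBddCont hv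
  obtain ⟨K, hK⟩ := exists_bound_comp_pair hA C D
  exact ⟨hA.comp (h1.prodMk h2), K, fun p => hK _ _ (hC p) (hD p)⟩

/-- The Hessian form with coefficients `B₁₁, B₁₂, B₂₂` of the pair of flows of `f` and `v`. -/
def flowHess (B₁₁ B₁₂ B₂₂ : ℝ → ℝ → ℝ) (f v : E3 → ℝ) (i : Fin 3) (p : ℝ × E3) : ℝ :=
  B₁₁ (gaussFlow p.1 f p.2) (gaussFlow p.1 v p.2) * gaussFlow p.1 (pd i f) p.2 ^ 2
    + 2 * B₁₂ (gaussFlow p.1 f p.2) (gaussFlow p.1 v p.2)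
      * gaussFlow p.1 (pd i f) p.2 * gaussFlow p.1 (pd i v) p.2
    + B₂₂ (gaussFlow p.1 f p.2) (gaussFlow p.1 v p.2) * gaussFlow p.1 (pd i v) p.2 ^ 2

section Bellman

variable {B B₁ B₂ B₁₁ B₁₂ B₂₂ : ℝ → ℝ → ℝ} {f v : E3 → ℝ}

theorem flowHess_integrable (hB : HasPartials B B₁ B₂ B₁₁ B₁₂ B₂₂) (hf : IsTest f)
    (hv : IsTest v) (i : Fin 3) (ρ : ℝ) :
    Integrable (flowHess B₁₁ B₁₂ B₂₂ f v i) (slab ρ) := by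
  have f1 := gaussFlow_isBddCont (hf.deriv i)
  have v1 := gaussFlow_isBddCont (hv.deriv i)
  have f2 := gaussFlow_integrable_slab (hf.deriv i) ρ
  have v2 := gaussFlow_integrable_slab (hv.deriv i) ρ
  have a := ((comp_pair_isBddCont hB.cont₁₁ hf hv).mul f1).mul_integrable f2
  have b := (((comp_pair_isBddCont hB.cont₁₂ hf hv).mul f1).mul_integrable v2).const_mul 2
  have c := ((comp_pair_isBddCont hB.cont₂₂ hf hv).mul v1).mul_integrable v2
  refine ((a.add b).add c).congr (Eventually.of_forall fun p => ?_)
  simp only [Pi.add_apply, flowHess]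
  ring

theorem integral_flow_laplacian (hB : HasPartials B B₁ B₂ B₁₁ B₁₂ B₂₂) (hf : IsTest f)
    (hv : IsTest v) (r : ℝ) :
    ∫ x, (B₁ (gaussFlow r f x) (gaussFlow r v x) * gaussFlow r (lap f) x
      + B₂ (gaussFlow r f x) (gaussFlow r v x) * gaussFlow r (lap v) x)
      = - ∫ x, ∑ i, flowHess B₁₁ B₁₂ B₂₂ f v i (r, x) := by
  have hid : Measurable fun z : E3 => z := measurable_id
  have c1 : Continuous fun p : ℝ × ℝ => B₁ p.1 p.2 :=
    continuous_iff_continuousAt.2 fun p => (hB.second_left p).continuousAt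
  have c2 : Continuous fun p : ℝ × ℝ => B₂ p.1 p.2 :=
    continuous_iff_continuousAt.2 fun p => (hB.second_right p).continuousAt
  have dF : ∀ {φ}, IsTest φ → Differentiable ℝ (gaussFlow r φ) := fun h =>
    flow_differentiable hid h r
  have iF : ∀ {φ}, IsTest φ → Integrable (gaussFlow r φ) := fun h => flow_integrable hid h r
  have b1 := comp_pair_isBddCont c1 hf hv
  have b2 := comp_pair_isBddCont c2 hf hv
  have b11 := comp_pair_isBddCont hB.cont₁₁ hf hv
  have b12 := comp_pair_isBddCont hB.cont₁₂ hf hv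
  have b22 := comp_pair_isBddCont hB.cont₂₂ hf hv
  have hQ : ∀ i, Integrable fun x => flowHess B₁₁ B₁₂ B₂₂ f v i (r, x) := by
    intro i
    have f1 := gaussFlow_isBddCont (hf.deriv i)
    have v1 := gaussFlow_isBddCont (hv.deriv i)
    have a := (b11.mul f1).slice_mul_integrable (iF (hf.deriv i)) r
    have b := ((b12.mul f1).slice_mul_integrable (iF (hv.deriv i)) r).const_mul 2
    have c := (b22.mul v1).slice_mul_integrable (iF (hv.deriv i)) r
    refine ((a.add b).add c).congr (Eventually.of_forall fun p => ?_)
    simp only [Pi.add_apply, flowHess]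
    ring
  have hL : ∀ i, Integrable fun x =>
      B₁ (gaussFlow r f x) (gaussFlow r v x) * gaussFlow r (pd i (pd i f)) x
      + B₂ (gaussFlow r f x) (gaussFlow r v x) * gaussFlow r (pd i (pd i v)) x := fun i =>
    (b1.slice_mul_integrable (iF ((hf.deriv i).deriv i)) r).add
      (b2.slice_mul_integrable (iF ((hv.deriv i).deriv i)) r)
  have hpd : ∀ i x, pd i (fun y => B₁ (gaussFlow r f y) (gaussFlow r v y) * gaussFlow r (pd i f) y
      + B₂ (gaussFlow r f y) (gaussFlow r v y) * gaussFlow r (pd i v) y) x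
      = (B₁ (gaussFlow r f x) (gaussFlow r v x) * gaussFlow r (pd i (pd i f)) x
      + B₂ (gaussFlow r f x) (gaussFlow r v x) * gaussFlow r (pd i (pd i v)) x)
      + flowHess B₁₁ B₁₂ B₂₂ f v i (r, x) := by
    intro i x
    have d1 := differentiable_comp_pair hB.second_left (dF hf) (dF hv)
    have d2 := differentiable_comp_pair hB.second_right (dF hf) (dF hv)
    have e1 := pd_comp_pair hB.second_left (dF hf) (dF hv) i x
    have e2 := pd_comp_pair hB.second_right (dF hf) (dF hv) i x
    rw [pd_add (d1.fun_mul (dF (hf.deriv i))) (d2.fun_mul (dF (hv.deriv i))),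
      pd_mul d1 (dF (hf.deriv i)), pd_mul d2 (dF (hv.deriv i)), e1, e2,
      flow_pd hid hf, flow_pd hid hv, flow_pd hid (hf.deriv i), flow_pd hid (hv.deriv i)]
    simp only [flowHess]
    ring
  have hz : ∀ i, ∫ x, (B₁ (gaussFlow r f x) (gaussFlow r v x) * gaussFlow r (pd i (pd i f)) x
      + B₂ (gaussFlow r f x) (gaussFlow r v x) * gaussFlow r (pd i (pd i v)) x)
      = - ∫ x, flowHess B₁₁ B₁₂ B₂₂ f v i (r, x) := by
    intro i
    have d1 := differentiable_comp_pair hB.second_left (dF hf) (dF hv)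
    have d2 := differentiable_comp_pair hB.second_right (dF hf) (dF hv)
    have h := integral_pd_eq_zero
      ((d1.fun_mul (dF (hf.deriv i))).fun_add (d2.fun_mul (dF (hv.deriv i)))) i
      ((b1.slice_mul_integrable (iF (hf.deriv i)) r).add
        (b2.slice_mul_integrable (iF (hv.deriv i)) r))
      (((hL i).add (hQ i)).congr (Eventually.of_forall fun x => (hpd i x).symm))
    have h2 := (integral_congr_ae (Eventually.of_forall (hpd i))).symm.trans h
    rw [integral_add (hL i) (hQ i)] at h2
    linarith
  rw [integral_finsetSum _ fun i _ => hQ i, ← Finset.sum_neg_distrib]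
  simp_rw [← hz]
  rw [← integral_finsetSum _ fun i _ => hL i]
  congr 1
  ext x
  have e1 : gaussFlow r (lap f) x = ∑ i, gaussFlow r (pd i (pd i f)) x :=
    flow_sum hid _ (fun i => (hf.deriv i).deriv i) r x
  have e2 : gaussFlow r (lap v) x = ∑ i, gaussFlow r (pd i (pd i v)) x :=
    flow_sum hid _ (fun i => (hv.deriv i).deriv i) r x
  rw [e1, e2, Finset.mul_sum, Finset.mul_sum, Finset.sum_add_distrib]

theorem integral_flowHess_le (hB : HasPartials B B₁ B₂ B₁₁ B₁₂ B₂₂) (h0 : B 0 0 = 0)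
    (hf : IsTest f) (hv : IsTest v) {ρ : ℝ} (hρ : 0 ≤ ρ)
    (hpos : ∀ x, 0 ≤ B (gaussFlow ρ f x) (gaussFlow ρ v x)) :
    ∫ p, p.1 * ∑ i, flowHess B₁₁ B₁₂ B₂₂ f v i p ∂(slab ρ) ≤ ∫ x, B (f x) (v x) := by
  have hid : Measurable fun z : E3 => z := measurable_id
  have c0 : Continuous fun p : ℝ × ℝ => B p.1 p.2 :=
    continuous_iff_continuousAt.2 fun p => (hB.first p).continuousAt
  have c1 : Continuous fun p : ℝ × ℝ => B₁ p.1 p.2 :=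
    continuous_iff_continuousAt.2 fun p => (hB.second_left p).continuousAt
  have c2 : Continuous fun p : ℝ × ℝ => B₂ p.1 p.2 :=
    continuous_iff_continuousAt.2 fun p => (hB.second_right p).continuousAt
  have b1 := comp_pair_isBddCont c1 hf hv
  have b2 := comp_pair_isBddCont c2 hf hv
  set D : ℝ × E3 → ℝ := fun p =>
    B₁ (gaussFlow p.1 f p.2) (gaussFlow p.1 v p.2) * gaussFlow p.1 (lap f) p.2
      + B₂ (gaussFlow p.1 f p.2) (gaussFlow p.1 v p.2) * gaussFlow p.1 (lap v) p.2 with hD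
  have hDc : Continuous D := ((b1.mul (gaussFlow_isBddCont hf.laplacian)).add
    (b2.mul (gaussFlow_isBddCont hv.laplacian))).1
  have hDi : Integrable D (slab ρ) :=
    (b1.mul_integrable (gaussFlow_integrable_slab hf.laplacian ρ)).add
      (b2.mul_integrable (gaussFlow_integrable_slab hv.laplacian ρ))
  have hDi' := slab_fst_mul_integrable hDi
  have hQi : Integrable (fun p => p.1 * ∑ i, flowHess B₁₁ B₁₂ B₂₂ f v i p) (slab ρ) :=
    slab_fst_mul_integrable (integrable_finsetSum _ fun i _ => flowHess_integrable hB hf hv i ρ)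
  have hflow : ∫ p, p.1 * D p ∂(slab ρ)
      = - ∫ p, p.1 * ∑ i, flowHess B₁₁ B₁₂ B₂₂ f v i p ∂(slab ρ) := by
    rw [integral_prod _ hDi', integral_prod _ hQi, ← integral_neg]
    congr 1; ext r
    simp only [integral_const_mul, hD]
    rw [integral_flow_laplacian hB hf hv r, mul_neg]
  have hftc : ∀ x, B (gaussFlow ρ f x) (gaussFlow ρ v x)
      = B (f x) (v x) + ∫ r in Set.Ioc 0 ρ, r * D (r, x) := by
    intro x
    have hd : ∀ r, HasDerivAt (fun r => B (gaussFlow r f x) (gaussFlow r v x))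
        (r * D (r, x)) r := by
      intro r
      have := hasDerivAt_comp_pair hB.first (flow_hasDerivAt isStein_gaussMeasure hf x r)
        (flow_hasDerivAt isStein_gaussMeasure hv x r)
      convert this using 1
      simp only [hD]; ring
    have h := intervalIntegral.integral_eq_sub_of_hasDerivAt (a := 0) (b := ρ) (fun r _ => hd r)
      (Continuous.intervalIntegrable
        (continuous_id.mul (hDc.comp (continuous_id.prodMk continuous_const))) _ _)
    rw [intervalIntegral.integral_of_le hρ] at h
    rw [h]
    have e1 : gaussFlow 0 f = f := flow_zero f
    have e2 : gaussFlow 0 v = v := flow_zero v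
    simp only [e1, e2]
    ring
  have hBi : Integrable fun x => B (f x) (v x) := by
    refine (c0.comp (hf.continuous.prodMk hv.continuous)).integrable_of_hasCompactSupport ?_
    exact hf.compact.comp₂_left hv.compact h0
  have h_int : ∫ x, B (gaussFlow ρ f x) (gaussFlow ρ v x)
      = (∫ x, B (f x) (v x)) + ∫ p, p.1 * D p ∂(slab ρ) := by
    rw [integral_prod_symm _ hDi', ← integral_add hBi hDi'.integral_prod_right]
    exact integral_congr_ae (Eventually.of_forall hftc)
  have : 0 ≤ ∫ x, B (gaussFlow ρ f x) (gaussFlow ρ v x) := integral_nonneg hpos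
  linarith

end Bellman

theorem hasFDerivAt_mul_add {φ ψ χ : ℝ → ℝ} {φ' ψ' χ' : ℝ} {p : ℝ × ℝ}
    (hφ : HasDerivAt φ φ' p.1) (hψ : HasDerivAt ψ ψ' p.2) (hχ : HasDerivAt χ χ' p.2) :
    HasFDerivAt (fun p : ℝ × ℝ => φ p.1 * ψ p.2 + χ p.2)
      ((φ' * ψ p.2) • ContinuousLinearMap.fst ℝ ℝ ℝ
        + (φ p.1 * ψ' + χ') • ContinuousLinearMap.snd ℝ ℝ ℝ) p := by
  have h1 := hφ.comp_hasFDerivAt p (hasFDerivAt_fst (𝕜 := ℝ) (E := ℝ) (F := ℝ))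
  have h2 := hψ.comp_hasFDerivAt p (hasFDerivAt_snd (𝕜 := ℝ) (E := ℝ) (F := ℝ))
  have h3 := hχ.comp_hasFDerivAt p (hasFDerivAt_snd (𝕜 := ℝ) (E := ℝ) (F := ℝ))
  have h := (h1.fun_mul h2).fun_add h3
  refine h.congr_fderiv ?_
  ext
  · simp
    ring
  · simp

theorem hasPartials_mul_add {φ φ' φ'' ψ ψ' ψ'' χ χ' χ'' : ℝ → ℝ}
    (hφ : ∀ a, HasDerivAt φ (φ' a) a) (hφ' : ∀ a, HasDerivAt φ' (φ'' a) a) (cφ : Continuous φ'')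
    (hψ : ∀ a, HasDerivAt ψ (ψ' a) a) (hψ' : ∀ a, HasDerivAt ψ' (ψ'' a) a) (cψ : Continuous ψ'')
    (hχ : ∀ a, HasDerivAt χ (χ' a) a) (hχ' : ∀ a, HasDerivAt χ' (χ'' a) a)
    (cχ : Continuous χ'') :
    HasPartials (fun a b => φ a * ψ b + χ b) (fun a b => φ' a * ψ b)
      (fun a b => φ a * ψ' b + χ' b) (fun a b => φ'' a * ψ b) (fun a b => φ' a * ψ' b)
      (fun a b => φ a * ψ'' b + χ'' b) := by
  have c1 : Continuous φ := continuous_iff_continuousAt.2 fun a => (hφ a).continuousAt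
  have c2 : Continuous φ' := continuous_iff_continuousAt.2 fun a => (hφ' a).continuousAt
  have c3 : Continuous ψ := continuous_iff_continuousAt.2 fun a => (hψ a).continuousAt
  have c4 : Continuous ψ' := continuous_iff_continuousAt.2 fun a => (hψ' a).continuousAt
  refine ⟨fun p => hasFDerivAt_mul_add (hφ _) (hψ _) (hχ _), fun p => ?_,
    fun p => hasFDerivAt_mul_add (hφ _) (hψ' _) (hχ' _), by fun_prop, by fun_prop, by fun_prop⟩
  simpa using hasFDerivAt_mul_add (hφ' _) (hψ _) (hasDerivAt_const p.2 (0 : ℝ))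

/-- A smooth regularisation of the absolute value. -/
def regAbs (d b : ℝ) : ℝ := √(d ^ 4 + b ^ 2)

/-- A smooth regularisation of the square root of the absolute value. -/
def regSqrt (d b : ℝ) : ℝ := √(regAbs d b)

section Reg

variable {d : ℝ}

theorem regAbs_sq (d b : ℝ) : regAbs d b ^ 2 = d ^ 4 + b ^ 2 := sq_sqrt (by positivity)

theorem regAbs_pos (hd : 0 < d) (b : ℝ) : 0 < regAbs d b := sqrt_pos.2 (by positivity)

theorem regSqrt_pos (hd : 0 < d) (b : ℝ) : 0 < regSqrt d b := sqrt_pos.2 (regAbs_pos hd b)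

theorem regSqrt_sq (hd : 0 < d) (b : ℝ) : regSqrt d b ^ 2 = regAbs d b :=
  sq_sqrt (regAbs_pos hd b).le

theorem abs_le_regAbs (d b : ℝ) : |b| ≤ regAbs d b := abs_le_sqrt (by nlinarith [sq_nonneg (d ^ 2)])

theorem regSqrt_mono {a b : ℝ} (h : |a| ≤ b) : regSqrt d a ≤ regSqrt d b := by
  have : a ^ 2 ≤ b ^ 2 := by rw [← sq_abs]; gcongr
  unfold regSqrt regAbs
  gcongr

theorem le_regSqrt (hd : 0 < d) (b : ℝ) : d ≤ regSqrt d b := by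
  refine le_of_sq_le_sq ?_ (regSqrt_pos hd b).le
  rw [regSqrt_sq hd]
  refine le_of_sq_le_sq ?_ (regAbs_pos hd b).le
  rw [regAbs_sq]
  nlinarith [sq_nonneg b]

theorem regSqrt_zero (hd : 0 < d) : regSqrt d 0 = d := by
  have : regAbs d 0 = d ^ 2 := by
    rw [regAbs, show d ^ 4 + 0 ^ 2 = (d ^ 2) ^ 2 by ring, sqrt_sq (by positivity)]
  rw [regSqrt, this, sqrt_sq hd.le]

theorem sqrt_le_regSqrt (d b : ℝ) : √|b| ≤ regSqrt d b := sqrt_le_sqrt (abs_le_regAbs d b)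

theorem regSqrt_cube_le (hd : 0 < d) (b : ℝ) : regSqrt d b ^ 3 - d ^ 3 ≤ |b| * √|b| := by
  set h := regSqrt d b
  have hp : 0 < h := regSqrt_pos hd b
  have h1 : d ≤ h := le_regSqrt hd b
  have h2 : √|b| ≤ h := sqrt_le_regSqrt d b
  set s := √|b| with hs
  have hs0 : 0 ≤ s := sqrt_nonneg _
  have hs2 : s ^ 2 = |b| := sq_sqrt (abs_nonneg b)
  have h4 : h ^ 4 = d ^ 4 + s ^ 4 := by
    calc h ^ 4 = (h ^ 2) ^ 2 := by ring
      _ = d ^ 4 + b ^ 2 := by rw [regSqrt_sq hd, regAbs_sq]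
      _ = d ^ 4 + (s ^ 2) ^ 2 := by rw [hs2, sq_abs]
      _ = _ := by ring
  rw [← hs2]
  have h5 : h * h ^ 3 ≤ h * (d ^ 3 + s ^ 3) := by
    have e1 : d * d ^ 3 ≤ h * d ^ 3 := by gcongr
    have e2 : s * s ^ 3 ≤ h * s ^ 3 := by gcongr
    nlinarith
  have := le_of_mul_le_mul_left h5 hp
  nlinarith

theorem regSqrt_le (hd : 0 < d) {b : ℝ} (hb : 0 ≤ b) : regSqrt d b ≤ d + √b := by
  have hs : √b ^ 2 = b := sq_sqrt hb
  have hs0 := sqrt_nonneg b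
  refine le_of_sq_le_sq ?_ (by positivity)
  rw [regSqrt_sq hd]
  refine le_of_sq_le_sq ?_ (by positivity)
  rw [regAbs_sq]
  have e : b ^ 2 = √b ^ 4 := by rw [← hs]; simp [hs]; rw [show √b ^ 4 = (√b ^ 2) ^ 2 by ring, hs]
  rw [e]
  have : 0 ≤ d * √b := by positivity
  nlinarith [sq_nonneg d, sq_nonneg (√b), mul_nonneg this (sq_nonneg d),
    mul_nonneg this (sq_nonneg (√b)), mul_nonneg this this]

theorem regAbs_hasDerivAt (hd : 0 < d) (b : ℝ) :
    HasDerivAt (regAbs d) (b / regAbs d b) b := by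
  have h := (((hasDerivAt_pow 2 b).const_add (d ^ 4)).sqrt (by positivity))
  refine h.congr_deriv ?_
  simp [regAbs]
  field_simp

theorem regSqrt_hasDerivAt (hd : 0 < d) (b : ℝ) :
    HasDerivAt (regSqrt d) (b / (2 * regSqrt d b ^ 3)) b := by
  have h := (regAbs_hasDerivAt hd b).sqrt (regAbs_pos hd b).ne'
  have hp := regSqrt_pos hd b
  refine h.congr_deriv ?_
  rw [← regSqrt_sq hd, sqrt_sq hp.le]
  field_simp

theorem regSqrt_deriv_hasDerivAt (hd : 0 < d) (b : ℝ) :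
    HasDerivAt (fun b => b / (2 * regSqrt d b ^ 3))
      (1 / (2 * regSqrt d b ^ 3) - 3 * b ^ 2 / (4 * regSqrt d b ^ 7)) b := by
  have hp := regSqrt_pos hd b
  have h := (hasDerivAt_id b).fun_div (((regSqrt_hasDerivAt hd b).fun_pow 3).const_mul 2)
    (by positivity)
  refine h.congr_deriv ?_
  simp
  field_simp
  ring

theorem regSqrt_cube_hasDerivAt (hd : 0 < d) (b : ℝ) :
    HasDerivAt (fun b => regSqrt d b ^ 3 - d ^ 3) (3 * b / (2 * regSqrt d b)) b := by
  have hp := regSqrt_pos hd b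
  refine (((regSqrt_hasDerivAt hd b).fun_pow 3).sub_const (d ^ 3)).congr_deriv ?_
  simp
  field_simp

theorem regSqrt_cube_deriv_hasDerivAt (hd : 0 < d) (b : ℝ) :
    HasDerivAt (fun b => 3 * b / (2 * regSqrt d b))
      (3 / (2 * regSqrt d b) - 3 * b ^ 2 / (4 * regSqrt d b ^ 5)) b := by
  have hp := regSqrt_pos hd b
  have h := ((hasDerivAt_id b).const_mul 3).fun_div ((regSqrt_hasDerivAt hd b).const_mul 2)
    (by positivity)
  refine h.congr_deriv ?_
  simp
  field_simp
  ring

theorem regSqrt_continuous (d : ℝ) : Continuous (regSqrt d) := by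
  unfold regSqrt regAbs
  fun_prop

theorem sq_le_regSqrt_four (hd : 0 < d) (b : ℝ) : b ^ 2 ≤ regSqrt d b ^ 4 := by
  rw [show regSqrt d b ^ 4 = (regSqrt d b ^ 2) ^ 2 by ring, regSqrt_sq hd, regAbs_sq]
  nlinarith [sq_nonneg (d ^ 2)]

theorem regSqrt_cube_deriv_deriv_ge (hd : 0 < d) (b : ℝ) :
    3 / 4 * (regSqrt d b)⁻¹ ≤ 3 / (2 * regSqrt d b) - 3 * b ^ 2 / (4 * regSqrt d b ^ 5) := by
  have hp := regSqrt_pos hd b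
  have h := sq_le_regSqrt_four hd b
  set h0 := regSqrt d b
  have : 3 * b ^ 2 / (4 * h0 ^ 5) ≤ 3 / 4 * h0⁻¹ := by
    rw [div_le_iff₀ (by positivity)]
    have e : 3 / 4 * h0⁻¹ * (4 * h0 ^ 5) = 3 * h0 ^ 4 := by field_simp
    rw [e]; linarith
  have e2 : 3 / (2 * h0) = 3 / 4 * h0⁻¹ + 3 / 4 * h0⁻¹ := by field_simp; norm_num
  linarith

theorem weighted_hess_ge (hd : 0 < d) {a b : ℝ} (hab : a ^ 2 ≤ b) (x y : ℝ) :
    regSqrt d b * x ^ 2 ≤ 2 * regSqrt d b * x ^ 2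
      + 2 * (2 * a * (b / (2 * regSqrt d b ^ 3))) * x * y
      + (a ^ 2 * (1 / (2 * regSqrt d b ^ 3) - 3 * b ^ 2 / (4 * regSqrt d b ^ 7))
        + 2 * (3 / (2 * regSqrt d b) - 3 * b ^ 2 / (4 * regSqrt d b ^ 5))) * y ^ 2 := by
  have hp := regSqrt_pos hd b
  have h4 := sq_le_regSqrt_four hd b
  have h2 : a ^ 2 ≤ regSqrt d b ^ 2 := by
    rw [regSqrt_sq hd]
    exact hab.trans ((le_abs_self b).trans (abs_le_regAbs d b))
  set h := regSqrt d b
  clear_value h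
  obtain ⟨s, rfl⟩ : ∃ s, a = s * h := ⟨a / h, by field_simp⟩
  obtain ⟨e, rfl⟩ : ∃ e, b = e * h ^ 2 := ⟨b / h ^ 2, by field_simp⟩
  obtain ⟨z, rfl⟩ : ∃ z, y = z * h := ⟨y / h, by field_simp⟩
  have hs : s ^ 2 ≤ 1 := by
    have : s ^ 2 * h ^ 2 ≤ 1 * h ^ 2 := by nlinarith
    exact le_of_mul_le_mul_right this (by positivity)
  have he : e ^ 2 ≤ 1 := by
    have : e ^ 2 * h ^ 4 ≤ 1 * h ^ 4 := by nlinarith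
    exact le_of_mul_le_mul_right this (by positivity)
  have key : 0 ≤ x ^ 2 + 2 * s * e * x * z
      + (s ^ 2 * (1 / 2 - 3 / 4 * e ^ 2) + 3 - 3 / 2 * e ^ 2) * z ^ 2 := by
    have c : 0 ≤ s ^ 2 * (1 / 2 - 7 / 4 * e ^ 2) + 3 - 3 / 2 * e ^ 2 := by
      nlinarith [mul_nonneg (sub_nonneg.2 hs) (sub_nonneg.2 he), sq_nonneg s, sq_nonneg e]
    nlinarith [sq_nonneg (x + s * e * z), mul_nonneg c (sq_nonneg z)]
  have hk := mul_nonneg hp.le key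
  have e1 : 2 * h * x ^ 2
      + 2 * (2 * (s * h) * (e * h ^ 2 / (2 * h ^ 3))) * x * (z * h)
      + ((s * h) ^ 2 * (1 / (2 * h ^ 3) - 3 * (e * h ^ 2) ^ 2 / (4 * h ^ 7))
        + 2 * (3 / (2 * h) - 3 * (e * h ^ 2) ^ 2 / (4 * h ^ 5))) * (z * h) ^ 2
      = h * x ^ 2 + h * (x ^ 2 + 2 * s * e * x * z
      + (s ^ 2 * (1 / 2 - 3 / 4 * e ^ 2) + 3 - 3 / 2 * e ^ 2) * z ^ 2) := by
    field_simp
    ring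
  rw [e1]
  linarith

end Reg

theorem avg_pairing_integrable {Ω : Type*} [MeasurableSpace Ω] {μ : Measure Ω} [SFinite μ]
    {m : Ω → ℝ} {τ : Ω → E3} {f g : E3 → ℝ} (hm : Integrable m μ) (hτ : Measurable τ)
    (hf : IsTest f) (hg : IsTest g) :
    Integrable (fun ω => m ω * (∫ x, g x * f (x + τ ω))) μ := by
  obtain ⟨M, hM0, hM⟩ := hg.exists_bound
  have h : Integrable (fun p : E3 × Ω => g p.1 * (m p.2 * f (p.1 + τ p.2))) (volume.prod μ) :=
    (avg_joint_integrable hm hτ hf).bdd_mul (c := M)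
      (hg.continuous.measurable.comp measurable_fst).aestronglyMeasurable
      (Eventually.of_forall fun p => hM _)
  refine h.integral_prod_right.congr (Eventually.of_forall fun ω => ?_)
  simp only
  rw [← integral_const_mul]
  congr 1; ext x; ring

theorem integral_mul_newt {f g : E3 → ℝ} (hf : IsTest f) (hg : IsTest g) (ρ : ℝ) :
    ∫ x, g x * newt ρ f x
      = ∫ p, p.1 * (2 * gaussFlow p.1 g p.2 * gaussFlow p.1 f p.2) ∂(slab ρ) := by
  have hi : Integrable (fun p : ℝ × E3 => p.1 * (2 * gaussFlow p.1 g p.2 * gaussFlow p.1 f p.2))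
      (slab ρ) := by
    have h := ((gaussFlow_isBddCont hg).mul_integrable (gaussFlow_integrable_slab hf ρ)).const_mul 2
    refine slab_fst_mul_integrable (h.congr (Eventually.of_forall fun p => ?_))
    simp only; ring
  rw [newt, integral_mul_avg (newt_weight_integrable ρ) newt_displacement_measurable hf hg,
    integral_prod _ (avg_pairing_integrable (newt_weight_integrable ρ)
      newt_displacement_measurable hf hg), integral_prod _ hi]
  congr 1; ext r
  simp_rw [mul_assoc]
  rw [integral_const_mul, integral_const_mul, integral_const_mul, integral_const_mul,
    integral_gaussFlow_mul hf hg]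
  have := integral_mul_avg (μ := gaussMeasure.prod gaussMeasure) (m := fun _ => 1)
    (τ := fun z => r • (z.1 - z.2)) (integrable_const _) (by fun_prop) hf hg
  simp only [one_mul] at this
  rw [← this]
  rw [mul_left_comm]
  rfl

theorem integral_mul_pd_pd_newt {f g : E3 → ℝ} (hf : IsTest f) (hg : IsTest g) (ρ : ℝ)
    (i j : Fin 3) :
    ∫ x, g x * pd i (pd j (newt ρ f)) x
      = - ∫ p, p.1 * (2 * gaussFlow p.1 (pd i g) p.2 * gaussFlow p.1 (pd j f) p.2) ∂(slab ρ) := by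
  rw [hg.integral_mul_pd ((newt_contDiff hf).pd_top j), newt_pd hf,
    integral_mul_newt (hf.deriv j) (hg.deriv i)]

theorem integral_weight_le {B B₁ B₂ B₁₁ B₁₂ B₂₂ : ℝ → ℝ → ℝ} {f v : E3 → ℝ}
    (hB : HasPartials B B₁ B₂ B₁₁ B₁₂ B₂₂) (h0 : B 0 0 = 0) (hf : IsTest f) (hv : IsTest v)
    {ρ : ℝ} (hρ : 0 ≤ ρ) (hpos : ∀ x, 0 ≤ B (gaussFlow ρ f x) (gaussFlow ρ v x))
    {Ψ : Fin 3 → ℝ × E3 → ℝ} (hΨ : ∀ i p, 0 ≤ Ψ i p)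
    (hΨQ : ∀ i p, Ψ i p ≤ flowHess B₁₁ B₁₂ B₂₂ f v i p) (i : Fin 3)
    (hi : Integrable (Ψ i) (slab ρ)) :
    ∫ p, p.1 * Ψ i p ∂(slab ρ) ≤ ∫ x, B (f x) (v x) := by
  refine le_trans ?_ (integral_flowHess_le hB h0 hf hv hρ hpos)
  refine integral_mono_ae (slab_fst_mul_integrable hi) (slab_fst_mul_integrable
    (integrable_finsetSum _ fun i _ => flowHess_integrable hB hf hv i ρ)) ?_
  filter_upwards [slab_fst_pos ρ] with p hp
  have h1 : flowHess B₁₁ B₁₂ B₂₂ f v i p ≤ ∑ k, flowHess B₁₁ B₁₂ B₂₂ f v k p :=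
    Finset.single_le_sum (f := fun k => flowHess B₁₁ B₁₂ B₂₂ f v k p)
      (fun k _ => (hΨ k p).trans (hΨQ k p)) (Finset.mem_univ i)
  have := (hΨQ i p).trans h1
  gcongr

theorem integral_flow_grad_sq_le {f : E3 → ℝ} (hf : IsTest f) {ρ : ℝ} (hρ : 0 ≤ ρ) (i : Fin 3) :
    ∫ p, p.1 * gaussFlow p.1 (pd i f) p.2 ^ 2 ∂(slab ρ) ≤ ∫ x, f x ^ 2 := by
  have hB := hasPartials_mul_add (φ := fun a => a ^ 2) (φ' := fun a => 2 * a) (φ'' := fun _ => 2)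
    (ψ := fun _ => 1) (ψ' := fun _ => 0) (ψ'' := fun _ => 0)
    (χ := fun _ => 0) (χ' := fun _ => 0) (χ'' := fun _ => 0)
    (fun a => by simpa using hasDerivAt_pow 2 a)
    (fun a => by simpa using (hasDerivAt_id a).const_mul 2) continuous_const
    (fun a => hasDerivAt_const _ _) (fun a => hasDerivAt_const _ _) continuous_const
    (fun a => hasDerivAt_const _ _) (fun a => hasDerivAt_const _ _) continuous_const
  have h := integral_weight_le hB (by simp) hf hf hρ (fun x => by positivity)
    (Ψ := fun i p => gaussFlow p.1 (pd i f) p.2 ^ 2) (fun i p => by positivity)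
    (fun i p => by simp only [flowHess]; nlinarith [sq_nonneg (gaussFlow p.1 (pd i f) p.2)]) i
    (by
      simp_rw [sq]
      exact (gaussFlow_isBddCont (hf.deriv i)).mul_integrable
        (gaussFlow_integrable_slab (hf.deriv i) ρ))
  simpa using h

theorem abs_integral_mul_pd_pd_newt_le_sq {f g : E3 → ℝ} (hf : IsTest f) (hg : IsTest g) {ρ : ℝ}
    (hρ : 0 ≤ ρ) (i j : Fin 3) :
    |∫ x, g x * pd i (pd j (newt ρ f)) x| ≤ (∫ x, f x ^ 2) + ∫ x, g x ^ 2 := by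
  have hi : ∀ {φ}, IsTest φ → ∀ k,
      Integrable (fun p : ℝ × E3 => p.1 * gaussFlow p.1 (pd k φ) p.2 ^ 2) (slab ρ) := by
    intro φ h k
    simp_rw [sq]
    exact slab_fst_mul_integrable ((gaussFlow_isBddCont (h.deriv k)).mul_integrable
        (gaussFlow_integrable_slab (h.deriv k) ρ))
  rw [integral_mul_pd_pd_newt hf hg, abs_neg]
  refine le_trans ?_ (add_le_add (integral_flow_grad_sq_le hf hρ j)
    (integral_flow_grad_sq_le hg hρ i))
  rw [← integral_add (hi hf j) (hi hg i), ← Real.norm_eq_abs]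
  refine norm_integral_le_of_norm_le ((hi hf j).add (hi hg i)) ?_
  filter_upwards [slab_fst_pos ρ] with p hp
  set a := gaussFlow p.1 (pd i g) p.2
  set b := gaussFlow p.1 (pd j f) p.2
  rw [Real.norm_eq_abs, abs_mul, abs_of_pos hp, ← mul_add]
  have : |2 * a * b| ≤ b ^ 2 + a ^ 2 :=
    abs_le.2 ⟨by nlinarith [sq_nonneg (a + b)], by nlinarith [sq_nonneg (a - b)]⟩
  gcongr

section Weighted

variable {f g v : E3 → ℝ} {ρ d : ℝ}

theorem integral_weighted_flow_grad_le (hf : IsTest f) (hv : IsTest v)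
    (hfv : ∀ x, f x ^ 2 ≤ v x) (hρ : 0 ≤ ρ) (hd : 0 < d) (i : Fin 3)
    (hi : Integrable (fun p : ℝ × E3 =>
      regSqrt d (gaussFlow p.1 v p.2) * gaussFlow p.1 (pd i f) p.2 ^ 2) (slab ρ)) :
    ∫ p, p.1 * (regSqrt d (gaussFlow p.1 v p.2) * gaussFlow p.1 (pd i f) p.2 ^ 2) ∂(slab ρ)
      ≤ d * (∫ x, f x ^ 2) + 3 * ∫ x, v x * √(v x) := by
  have hv0 : ∀ x, 0 ≤ v x := fun x => (sq_nonneg _).trans (hfv x)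
  have cr := regSqrt_continuous d
  have hB := hasPartials_mul_add (φ := fun a => a ^ 2) (φ' := fun a => 2 * a) (φ'' := fun _ => 2)
    (fun a => by simpa using hasDerivAt_pow 2 a)
    (fun a => by simpa using (hasDerivAt_id a).const_mul 2) continuous_const
    (regSqrt_hasDerivAt hd) (regSqrt_deriv_hasDerivAt hd)
    (by
      have : ∀ b, regSqrt d b ≠ 0 := fun b => (regSqrt_pos hd b).ne'
      refine Continuous.sub (Continuous.div (by fun_prop) (by fun_prop) fun b => ?_)
        (Continuous.div (by fun_prop) (by fun_prop) fun b => ?_) <;> simp [this b])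
    (fun b => (regSqrt_cube_hasDerivAt hd b).const_mul 2)
    (fun b => (regSqrt_cube_deriv_hasDerivAt hd b).const_mul 2)
    (by
      have : ∀ b, regSqrt d b ≠ 0 := fun b => (regSqrt_pos hd b).ne'
      refine continuous_const.mul (Continuous.sub
        (Continuous.div (by fun_prop) (by fun_prop) fun b => ?_)
        (Continuous.div (by fun_prop) (by fun_prop) fun b => ?_)) <;> simp [this b])
  have h := integral_weight_le hB (by simp [regSqrt_zero hd]) hf hv hρ
    (fun x => by
      have h1 := regSqrt_pos hd (gaussFlow ρ v x)
      have h2 : d ^ 3 ≤ regSqrt d (gaussFlow ρ v x) ^ 3 := by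
        have := le_regSqrt hd (gaussFlow ρ v x)
        gcongr
      have := mul_nonneg (sq_nonneg (gaussFlow ρ f x)) h1.le
      linarith)
    (Ψ := fun i p => regSqrt d (gaussFlow p.1 v p.2) * gaussFlow p.1 (pd i f) p.2 ^ 2)
    (fun i p => mul_nonneg (regSqrt_pos hd _).le (sq_nonneg _))
    (fun i p => by
      simp only [flowHess]
      exact weighted_hess_ge hd (flow_sq_le measurable_id hf hv hfv p.1 p.2) _ _) i hi
  refine h.trans ?_
  have i2 := (hf.pow two_ne_zero).integrable
  rw [← integral_const_mul, ← integral_const_mul, ← integral_add (i2.const_mul _)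
    (hv.integrable_mul_sqrt.const_mul _)]
  refine integral_mono_of_nonneg (Eventually.of_forall fun x => ?_)
    ((i2.const_mul _).add (hv.integrable_mul_sqrt.const_mul _)) (Eventually.of_forall fun x => ?_)
  · have h1 := regSqrt_pos hd (v x)
    have h2 : d ^ 3 ≤ regSqrt d (v x) ^ 3 := by
      have := le_regSqrt hd (v x)
      gcongr
    have := mul_nonneg (sq_nonneg (f x)) h1.le
    simp only [Pi.zero_apply]
    linarith
  · have h1 := regSqrt_le hd (hv0 x)
    have h2 := regSqrt_cube_le hd (v x)
    rw [abs_of_nonneg (hv0 x)] at h2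
    have h3 : f x ^ 2 * regSqrt d (v x) ≤ f x ^ 2 * (d + √(v x)) := by gcongr
    have h4 : f x ^ 2 * √(v x) ≤ v x * √(v x) := by
      have := hfv x
      gcongr
    simp only
    linarith

theorem integral_inv_weighted_flow_grad_le (hg : IsTest g) (hv : IsTest v)
    (hgv : ∀ x, |g x| ≤ v x) (hρ : 0 ≤ ρ) (hd : 0 < d) (i : Fin 3)
    (hi : Integrable (fun p : ℝ × E3 =>
      (regSqrt d (gaussFlow p.1 v p.2))⁻¹ * gaussFlow p.1 (pd i g) p.2 ^ 2) (slab ρ)) :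
    ∫ p, p.1 * ((regSqrt d (gaussFlow p.1 v p.2))⁻¹ * gaussFlow p.1 (pd i g) p.2 ^ 2) ∂(slab ρ)
      ≤ 4 / 3 * ∫ x, v x * √(v x) := by
  have cr := regSqrt_continuous d
  have hB := hasPartials_mul_add (regSqrt_cube_hasDerivAt hd) (regSqrt_cube_deriv_hasDerivAt hd)
    (by
      have : ∀ b, regSqrt d b ≠ 0 := fun b => (regSqrt_pos hd b).ne'
      refine Continuous.sub
        (Continuous.div (by fun_prop) (by fun_prop) fun b => ?_)
        (Continuous.div (by fun_prop) (by fun_prop) fun b => ?_) <;> simp [this b])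
    (ψ := fun _ => 1) (ψ' := fun _ => 0) (ψ'' := fun _ => 0)
    (χ := fun _ => 0) (χ' := fun _ => 0) (χ'' := fun _ => 0)
    (fun a => hasDerivAt_const _ _) (fun a => hasDerivAt_const _ _) continuous_const
    (fun a => hasDerivAt_const _ _) (fun a => hasDerivAt_const _ _) continuous_const
  have hcube : ∀ b, 0 ≤ regSqrt d b ^ 3 - d ^ 3 := fun b => by
    have := le_regSqrt hd b
    rw [sub_nonneg]
    gcongr
  have h := integral_weight_le hB (by simp [regSqrt_zero hd]) hg hv hρ
    (fun x => by simpa using hcube _)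
    (Ψ := fun i p =>
      3 / 4 * ((regSqrt d (gaussFlow p.1 v p.2))⁻¹ * gaussFlow p.1 (pd i g) p.2 ^ 2))
    (fun i p => by have := regSqrt_pos hd (gaussFlow p.1 v p.2); positivity)
    (fun i p => by
      have h1 := regSqrt_cube_deriv_deriv_ge hd (gaussFlow p.1 g p.2)
      have h2 : regSqrt d (gaussFlow p.1 g p.2) ≤ regSqrt d (gaussFlow p.1 v p.2) :=
        regSqrt_mono (flow_mono_abs measurable_id hv hgv p.1 p.2)
      have h3 : (regSqrt d (gaussFlow p.1 v p.2))⁻¹ ≤ (regSqrt d (gaussFlow p.1 g p.2))⁻¹ :=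
        inv_anti₀ (regSqrt_pos hd _) h2
      have h4 := mul_le_mul_of_nonneg_right ((mul_le_mul_of_nonneg_left h3
        (by norm_num : (0 : ℝ) ≤ 3 / 4)).trans h1) (sq_nonneg (gaussFlow p.1 (pd i g) p.2))
      simp only [flowHess]
      linarith) i (hi.const_mul _)
  have h2 : ∫ x, (regSqrt d (g x) ^ 3 - d ^ 3) * 1 + 0 ≤ ∫ x, v x * √(v x) := by
    refine integral_mono_of_nonneg (Eventually.of_forall fun x => by simpa using hcube _)
      hv.integrable_mul_sqrt (Eventually.of_forall fun x => ?_)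
    have h1 := regSqrt_cube_le hd (g x)
    have h3 : |g x| * √|g x| ≤ v x * √(v x) := by
      have := hgv x
      have h0 := (abs_nonneg _).trans this
      gcongr
    simp only
    linarith
  have h3 := h.trans h2
  have e : ∀ p : ℝ × E3, p.1 * (3 / 4 *
      ((regSqrt d (gaussFlow p.1 v p.2))⁻¹ * gaussFlow p.1 (pd i g) p.2 ^ 2))
      = 3 / 4 * (p.1 * ((regSqrt d (gaussFlow p.1 v p.2))⁻¹ * gaussFlow p.1 (pd i g) p.2 ^ 2)) :=
    fun p => by ring
  simp_rw [e] at h3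
  rw [integral_const_mul] at h3
  linarith

theorem abs_integral_mul_pd_pd_newt_le_sqrt (hf : IsTest f) (hg : IsTest g) (hv : IsTest v)
    (hfv : ∀ x, f x ^ 2 ≤ v x) (hgv : ∀ x, |g x| ≤ v x) (hρ : 0 ≤ ρ) (i j : Fin 3) :
    |∫ x, g x * pd i (pd j (newt ρ f)) x| ≤ 5 * ∫ x, v x * √(v x) := by
  have hv0 : ∀ x, 0 ≤ v x := fun x => (sq_nonneg _).trans (hfv x)
  have hpos : 0 ≤ ∫ x, v x * √(v x) :=
    integral_nonneg fun x => mul_nonneg (hv0 x) (sqrt_nonneg _)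
  have main : ∀ d : ℝ, 0 < d → |∫ x, g x * pd i (pd j (newt ρ f)) x|
      ≤ d * (∫ x, f x ^ 2) + 5 * ∫ x, v x * √(v x) := by
    intro d hd
    have cr := regSqrt_continuous d
    have b1 : IsBddCont fun p => regSqrt d (gaussFlow p.1 v p.2) :=
      comp_pair_isBddCont (A := fun _ b => regSqrt d b) (by fun_prop) hv hv
    have b2 : IsBddCont fun p => (regSqrt d (gaussFlow p.1 v p.2))⁻¹ :=
      comp_pair_isBddCont (A := fun _ b => (regSqrt d b)⁻¹)
        (Continuous.inv₀ (by fun_prop) fun p => (regSqrt_pos hd _).ne') hv hv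
    have sqi : ∀ {φ}, IsTest φ → ∀ k,
        Integrable (fun p : ℝ × E3 => gaussFlow p.1 (pd k φ) p.2 ^ 2) (slab ρ) := by
      intro φ h k
      simp_rw [sq]
      exact (gaussFlow_isBddCont (h.deriv k)).mul_integrable
        (gaussFlow_integrable_slab (h.deriv k) ρ)
    have i1 := b1.mul_integrable (sqi hf j)
    have i2 := b2.mul_integrable (sqi hg i)
    have e1 := integral_weighted_flow_grad_le hf hv hfv hρ hd j i1
    have e2 := integral_inv_weighted_flow_grad_le hg hv hgv hρ hd i i2
    have i1' := slab_fst_mul_integrable i1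
    have i2' := slab_fst_mul_integrable i2
    rw [integral_mul_pd_pd_newt hf hg, abs_neg]
    have e3 : |∫ p, p.1 * (2 * gaussFlow p.1 (pd i g) p.2 * gaussFlow p.1 (pd j f) p.2) ∂(slab ρ)|
        ≤ ∫ p, (p.1 * (regSqrt d (gaussFlow p.1 v p.2) * gaussFlow p.1 (pd j f) p.2 ^ 2)
          + p.1 * ((regSqrt d (gaussFlow p.1 v p.2))⁻¹ * gaussFlow p.1 (pd i g) p.2 ^ 2))
            ∂(slab ρ) := by
      rw [← Real.norm_eq_abs]
      refine norm_integral_le_of_norm_le (i1'.add i2') ?_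
      filter_upwards [slab_fst_pos ρ] with p hp
      set a := gaussFlow p.1 (pd i g) p.2
      set b := gaussFlow p.1 (pd j f) p.2
      have hh := regSqrt_pos hd (gaussFlow p.1 v p.2)
      set h := regSqrt d (gaussFlow p.1 v p.2)
      rw [Real.norm_eq_abs, abs_mul, abs_of_pos hp, ← mul_add]
      have k1 : h * b ^ 2 + h⁻¹ * a ^ 2 - 2 * a * b = h⁻¹ * (h * b - a) ^ 2 := by
        field_simp; ring
      have k2 : h * b ^ 2 + h⁻¹ * a ^ 2 + 2 * a * b = h⁻¹ * (h * b + a) ^ 2 := by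
        field_simp; ring
      have k3 : 0 ≤ h⁻¹ * (h * b - a) ^ 2 := by positivity
      have k4 : 0 ≤ h⁻¹ * (h * b + a) ^ 2 := by positivity
      have : |2 * a * b| ≤ h * b ^ 2 + h⁻¹ * a ^ 2 := abs_le.2 ⟨by linarith, by linarith⟩
      gcongr
    rw [integral_add i1' i2'] at e3
    linarith
  have hI : 0 ≤ ∫ x, f x ^ 2 := integral_nonneg fun x => sq_nonneg _
  refine le_of_forall_pos_le_add fun ε hε => ?_
  have h := main (ε / ((∫ x, f x ^ 2) + 1)) (by positivity)
  have : ε / ((∫ x, f x ^ 2) + 1) * (∫ x, f x ^ 2) ≤ ε := by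
    rw [div_mul_eq_mul_div, div_le_iff₀ (by positivity)]
    nlinarith
  linarith

end Weighted

/-- Operators whose bilinear form is bounded by `C` both in `L²` and in the sense that a pair
`f² ≤ v`, `|g| ≤ v` is controlled by `∫ v ^ (3 / 2)`. -/
structure IsAdmissible (C : ℝ) (O : (E3 → ℝ) → E3 → ℝ) : Prop where
  smooth : ∀ {f}, IsTest f → ContDiff ℝ (⊤ : ℕ∞) (O f)
  sq_le : ∀ {f g}, IsTest f → IsTest g → |∫ x, g x * O f x| ≤ C * ((∫ x, f x ^ 2) + ∫ x, g x ^ 2)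
  sqrt_le : ∀ {f g v}, IsTest f → IsTest g → IsTest v → (∀ x, f x ^ 2 ≤ v x) →
    (∀ x, |g x| ≤ v x) → |∫ x, g x * O f x| ≤ C * ∫ x, v x * √(v x)

/-- A bound for all the operators entering the construction of the test field. -/
def opConst : ℝ := 5 + 2 * meanDisp

theorem opConst_nonneg : 0 ≤ opConst := by have := meanDisp_nonneg; unfold opConst; linarith

theorem integral_mul_sqrt_nonneg {v : E3 → ℝ} (hv : ∀ x, 0 ≤ v x) : 0 ≤ ∫ x, v x * √(v x) :=
  integral_nonneg fun x => mul_nonneg (hv x) (sqrt_nonneg _)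

theorem integral_sq_nonneg (f : E3 → ℝ) : 0 ≤ ∫ x, f x ^ 2 := integral_nonneg fun _ => sq_nonneg _

theorem isAdmissible_of_avg {Ω : Type*} [MeasurableSpace Ω] {μ : Measure Ω} [SFinite μ]
    {m : Ω → ℝ} {τ : Ω → E3} {O : (E3 → ℝ) → E3 → ℝ} {c : ℝ} (hm : Integrable m μ)
    (hτ : Measurable τ) (hO : ∀ {f}, IsTest f → O f = fun x => c * avg μ m τ f x) (hc : 0 ≤ c)
    (hle : c * (2 * ∫ ω, |m ω| ∂μ) ≤ opConst) : IsAdmissible opConst O := by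
  have hmpos : 0 ≤ c * ∫ ω, |m ω| ∂μ := mul_nonneg hc (integral_nonneg fun _ => abs_nonneg _)
  have key : ∀ {f g A}, IsTest f → IsTest g → (∀ y, |∫ x, g x * f (x + y)| ≤ A) →
      |∫ x, g x * O f x| ≤ c * (A * ∫ ω, |m ω| ∂μ) := by
    intro f g A hf hg hA
    have h := avg_form_le hm hτ hf hg hA
    have e : ∫ x, g x * O f x = c * ∫ x, g x * avg μ m τ f x := by
      rw [hO hf, ← integral_const_mul]; congr 1; ext x; ring
    rw [e, abs_mul, abs_of_nonneg hc]
    gcongr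
  refine ⟨fun hf => ?_, fun {f g} hf hg => ?_, fun {f g v} hf hg hv hfv hgv => ?_⟩
  · rw [hO hf]; exact contDiff_const.mul (avg_contDiff hm hτ hf)
  · refine (key hf hg (abs_integral_mul_translate_le_sq hf hg)).trans ?_
    have := add_nonneg (integral_sq_nonneg f) (integral_sq_nonneg g)
    nlinarith
  · have hv0 : ∀ x, 0 ≤ v x := fun x => (sq_nonneg _).trans (hfv x)
    refine (key hf hg (abs_integral_mul_translate_le_sqrt hv hv0 hfv hgv)).trans ?_
    have := integral_mul_sqrt_nonneg hv0
    nlinarith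

theorem isAdmissible_heatFlow (ρ : ℝ) : IsAdmissible opConst (heatFlow ρ) := by
  refine isAdmissible_of_avg (μ := gaussMeasure.prod gaussMeasure) (m := fun _ => 1)
    (τ := fun z => ρ • (z.1 - z.2)) (c := 1) (integrable_const _) (by fun_prop)
    (fun _ => by simp only [one_mul]; rfl) zero_le_one ?_
  have := meanDisp_nonneg
  simp [opConst]; linarith

theorem isAdmissible_pd_heatFlow (ρ : ℝ) (i : Fin 3) :
    IsAdmissible opConst (fun f x => ρ * pd i (heatFlow ρ f) x) := by
  refine isAdmissible_of_avg (c := 1 / 2) (coord_weight_integrable i)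
    (τ := fun z => ρ • (z.1 - z.2)) (by fun_prop)
    (fun hf => ?_) (by norm_num) ?_
  · ext x; rw [← heatFlow_pd_eq_avg hf]; ring
  · have := meanDisp_nonneg
    have := integral_abs_coord_le i
    unfold opConst; linarith

theorem isAdmissible_pd_newt {ρ : ℝ} (hρ : 0 < ρ) (i : Fin 3) :
    IsAdmissible opConst (fun f x => ρ⁻¹ * pd i (newt ρ f) x) := by
  refine isAdmissible_of_avg (c := ρ⁻¹) (newt_coord_weight_integrable ρ i)
    newt_displacement_measurable (fun hf => ?_) (by positivity) ?_
  · rw [newt_pd_eq_avg hf]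
  · have := meanDisp_nonneg
    have h := newt_coord_weight_le hρ.le i
    calc _ ≤ ρ⁻¹ * (2 * (ρ * meanDisp)) := by gcongr
      _ = 2 * meanDisp := by field_simp
      _ ≤ _ := by unfold opConst; linarith

theorem isAdmissible_pd_pd_newt {ρ : ℝ} (hρ : 0 ≤ ρ) (i j : Fin 3) :
    IsAdmissible opConst (fun f => pd i (pd j (newt ρ f))) := by
  have := meanDisp_nonneg
  refine ⟨fun hf => ((newt_contDiff hf).pd_top j).pd_top i, fun {f g} hf hg => ?_,
    fun {f g v} hf hg hv hfv hgv => ?_⟩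
  · refine (abs_integral_mul_pd_pd_newt_le_sq hf hg hρ i j).trans ?_
    have := add_nonneg (integral_sq_nonneg f) (integral_sq_nonneg g)
    unfold opConst; nlinarith
  · refine (abs_integral_mul_pd_pd_newt_le_sqrt hf hg hv hfv hgv hρ i j).trans ?_
    have := integral_mul_sqrt_nonneg fun x => (sq_nonneg _).trans (hfv x)
    unfold opConst; nlinarith

theorem IsAdmissible.weighted_sq_le {C : ℝ} {O : (E3 → ℝ) → E3 → ℝ} (h : IsAdmissible C O)
    {f g : E3 → ℝ} (hf : IsTest f) (hg : IsTest g) {s : ℝ} (hs : 0 < s) :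
    |∫ x, g x * O f x| ≤ C * (s * (∫ x, g x ^ 2) + s⁻¹ * ∫ x, f x ^ 2) := by
  have h1 := h.sq_le hf (hg.const_mul s)
  simp_rw [mul_assoc, mul_pow] at h1
  rw [integral_const_mul, integral_const_mul, abs_mul, abs_of_pos hs] at h1
  calc _ = s⁻¹ * (s * |∫ x, g x * O f x|) := by field_simp
    _ ≤ s⁻¹ * (C * ((∫ x, f x ^ 2) + s ^ 2 * ∫ x, g x ^ 2)) := by gcongr
    _ = _ := by field_simp; ring

/-- Test functions which pair well with products of the unknowns localised by `η`. -/
structure IsGood (η v : E3 → ℝ) (C : ℝ) (h : E3 → ℝ) : Prop where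
  test : IsTest h
  sq_le : ∀ {g}, ContDiff ℝ (⊤ : ℕ∞) g → ∀ {s : ℝ}, 0 < s →
    |∫ x, g x * h x| ≤ C * (s * (∫ x, (η x ^ 4 * g x) ^ 2) + s⁻¹ * ∫ x, v x)
  sqrt_le : ∀ {g}, ContDiff ℝ (⊤ : ℕ∞) g → (∀ x, η x ^ 2 * |g x| ≤ v x) →
    |∫ x, g x * h x| ≤ C * ∫ x, v x * √(v x)

namespace IsGood

variable {η v h h' : E3 → ℝ} {C C' : ℝ}

theorem add (hh : IsGood η v C h) (hh' : IsGood η v C' h') :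
    IsGood η v (C + C') (fun x => h x + h' x) := by
  have key : ∀ {g}, ContDiff ℝ (⊤ : ℕ∞) g →
      |∫ x, g x * (h x + h' x)| ≤ |∫ x, g x * h x| + |∫ x, g x * h' x| := by
    intro g hg
    simp_rw [mul_add]
    rw [integral_add (hh.test.mul_left hg).integrable (hh'.test.mul_left hg).integrable]
    exact abs_add_le _ _
  refine ⟨hh.test.add hh'.test, fun hg s hs => (key hg).trans ?_, fun hg hgv => (key hg).trans ?_⟩
  · have := hh.sq_le hg hs
    have := hh'.sq_le hg hs
    linarith
  · have := hh.sqrt_le hg hgv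
    have := hh'.sqrt_le hg hgv
    linarith

theorem neg (hh : IsGood η v C h) : IsGood η v C (fun x => -h x) := by
  refine ⟨by simpa using hh.test.const_mul (-1), fun {g} hg s hs => ?_, fun {g} hg hgv => ?_⟩
  · simp_rw [mul_neg, integral_neg, abs_neg]; exact hh.sq_le hg hs
  · simp_rw [mul_neg, integral_neg, abs_neg]; exact hh.sqrt_le hg hgv

theorem sub (hh : IsGood η v C h) (hh' : IsGood η v C' h') :
    IsGood η v (C + C') (fun x => h x - h' x) := by
  simpa [sub_eq_add_neg] using hh.add hh'.neg

theorem of_admissible {K : ℝ} {O : (E3 → ℝ) → E3 → ℝ} {c f : E3 → ℝ} (hC : 0 ≤ C)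
    (hO : IsAdmissible C O)
    (hη : IsTest η) (hη0 : ∀ x, 0 ≤ η x) (hη1 : ∀ x, η x ≤ 1) (hv : IsTest v) (hK : 1 ≤ K)
    (hc : IsTest c) (hcK : ∀ x, |c x| ≤ K * η x ^ 4) (hf : IsTest f)
    (hfv : ∀ x, f x ^ 2 ≤ K * v x) : IsGood η v (C * K ^ 2) (fun x => c x * O f x) := by
  have hv0 : ∀ x, 0 ≤ v x := fun x => by
    have := (sq_nonneg (f x)).trans (hfv x)
    nlinarith
  refine ⟨hc.mul_right (hO.smooth hf), fun {g} hg s hs => ?_, fun {g} hg hgv => ?_⟩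
  · have e : ∫ x, g x * (c x * O f x) = ∫ x, (c x * g x) * O f x := by
      congr 1; ext x; ring
    rw [e]
    refine (hO.weighted_sq_le hf (hc.mul_right hg) hs).trans ?_
    have h1 : ∫ x, (c x * g x) ^ 2 ≤ K ^ 2 * ∫ x, (η x ^ 4 * g x) ^ 2 := by
      rw [← integral_const_mul]
      refine integral_mono ((hc.mul_right hg).pow two_ne_zero).integrable
        ((((hη.pow four_ne_zero).mul_right hg).pow two_ne_zero).integrable.const_mul _) fun x => ?_
      have h2 : c x ^ 2 ≤ (K * η x ^ 4) ^ 2 := by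
        rw [← sq_abs (c x)]; have := hcK x; gcongr
      simp only [mul_pow]
      calc c x ^ 2 * g x ^ 2 ≤ (K * η x ^ 4) ^ 2 * g x ^ 2 := by gcongr
        _ = _ := by ring
    have h2 : ∫ x, f x ^ 2 ≤ K ^ 2 * ∫ x, v x := by
      rw [← integral_const_mul]
      refine integral_mono (hf.pow two_ne_zero).integrable (hv.integrable.const_mul _) fun x =>
        (hfv x).trans ?_
      have := hv0 x
      have : K ≤ K ^ 2 := by nlinarith
      gcongr
    calc _ ≤ C * (s * (K ^ 2 * ∫ x, (η x ^ 4 * g x) ^ 2) + s⁻¹ * (K ^ 2 * ∫ x, v x)) := by gcongr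
      _ = _ := by ring
  · have e : ∫ x, g x * (c x * O f x) = ∫ x, (c x * g x) * O f x := by
      congr 1; ext x; ring
    rw [e]
    have hcg : ∀ x, |c x * g x| ≤ K * v x := fun x => by
      have h4 : η x ^ 4 ≤ η x ^ 2 := pow_le_pow_of_le_one (hη0 x) (hη1 x) (by norm_num)
      calc |c x * g x| = |c x| * |g x| := abs_mul _ _
        _ ≤ K * η x ^ 4 * |g x| := by have := hcK x; gcongr
        _ ≤ K * η x ^ 2 * |g x| := by gcongr
        _ = K * (η x ^ 2 * |g x|) := by ring
        _ ≤ _ := by have := hgv x; gcongr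
    refine (hO.sqrt_le hf (hc.mul_right hg) (hv.const_mul K) hfv hcg).trans ?_
    have hsK : √K ≤ K := by
      rw [Real.sqrt_le_left (by linarith)]; nlinarith
    have h3 : ∫ x, K * v x * √(K * v x) = (K * √K) * ∫ x, v x * √(v x) := by
      rw [← integral_const_mul]; congr 1; ext x
      rw [Real.sqrt_mul (by linarith)]; ring
    have := integral_mul_sqrt_nonneg hv0
    rw [h3]
    calc _ ≤ C * (K * K * ∫ x, v x * √(v x)) := by gcongr
      _ = _ := by ring

theorem sum {ι : Type*} (s : Finset ι) {h : ι → E3 → ℝ} (hh : ∀ k, IsGood η v C (h k)) :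
    IsGood η v (s.card * C) (fun x => ∑ k ∈ s, h k x) := by
  classical
  induction s using Finset.induction_on with
  | empty => exact ⟨by simpa using IsTest.zero, by simp, by simp⟩
  | insert a s ha ih =>
    simp_rw [Finset.sum_insert ha]
    rw [Finset.card_insert_of_notMem ha]
    have := (hh a).add ih
    rwa [show C + s.card * C = ((s.card + 1 : ℕ) : ℝ) * C by push_cast; ring] at this

end IsGood

/-- Cutoff functions of the ball of radius `ρ` inside the ball of radius `2 * ρ`. -/
structure IsCutoff (K ρ : ℝ) (η : E3 → ℝ) : Prop where
  test : IsTest η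
  nonneg : ∀ x, 0 ≤ η x
  le_one : ∀ x, η x ≤ 1
  eq_one : ∀ x ∈ ball3 ρ, η x = 1
  eq_zero : ∀ x ∉ ball3 (2 * ρ), η x = 0
  pd_le : ∀ i x, ρ * |pd i η x| ≤ K
  pd_pd_le : ∀ i j x, ρ ^ 2 * |pd i (pd j η) x| ≤ K

section Cutoff

variable {K ρ : ℝ} {η : E3 → ℝ}

theorem pd_pow_fun {f : E3 → ℝ} (hf : Differentiable ℝ f) (n : ℕ) (i : Fin 3) :
    pd i (fun y => f y ^ n) = fun x => n * f x ^ (n - 1) * pd i f x :=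
  funext fun x => pd_pow hf n i x

theorem IsCutoff.abs_pd_six_le (hη : IsCutoff K ρ η) (hρ : 0 < ρ) (i : Fin 3) (x : E3) :
    |ρ * pd i (fun y => η y ^ 6) x| ≤ 6 * K * η x ^ 4 := by
  rw [pd_pow hη.test.differentiable, abs_mul, abs_mul, abs_mul, abs_of_pos hρ,
    abs_of_nonneg (pow_nonneg (hη.nonneg x) _)]
  have h1 := hη.pd_le i x
  have h0 := hη.nonneg x
  have h5 : η x ^ 5 ≤ η x ^ 4 := pow_le_pow_of_le_one h0 (hη.le_one x) (by norm_num)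
  have hK : 0 ≤ K := le_trans (by positivity) h1
  norm_num
  calc ρ * (6 * η x ^ 5 * |pd i η x|) = 6 * (η x ^ 5 * (ρ * |pd i η x|)) := by ring
    _ ≤ 6 * (η x ^ 4 * K) := by gcongr
    _ = _ := by ring

theorem IsCutoff.abs_pd_pd_six_le (hη : IsCutoff K ρ η) (hρ : 0 < ρ) (i j : Fin 3) (x : E3) :
    |ρ ^ 2 * pd i (pd j (fun y => η y ^ 6)) x| ≤ (30 * K ^ 2 + 6 * K) * η x ^ 4 := by
  have hd := hη.test.differentiable
  have h0 := hη.nonneg x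
  have hi := hη.pd_le i x
  have hj := hη.pd_le j x
  have hij := hη.pd_pd_le i j x
  have hK : 0 ≤ K := le_trans (by positivity) hi
  have e : ρ ^ 2 * pd i (pd j (fun y => η y ^ 6)) x
      = 30 * η x ^ 4 * ((ρ * pd i η x) * (ρ * pd j η x))
        + 6 * η x ^ 5 * (ρ ^ 2 * pd i (pd j η) x) := by
    rw [pd_pow_fun hd, pd_mul ((hη.test.pow (by norm_num : (6 - 1) ≠ 0)).const_mul _).differentiable
      (hη.test.deriv j).differentiable, pd_const_mul (hη.test.pow (by norm_num)).differentiable,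
      pd_pow hd]
    norm_num; ring
  have h5 : η x ^ 5 ≤ η x ^ 4 := pow_le_pow_of_le_one h0 (hη.le_one x) (by norm_num)
  rw [e]
  refine (abs_add_le _ _).trans ?_
  simp only [abs_mul, abs_of_pos hρ, abs_pow, abs_of_nonneg h0]
  norm_num
  calc _ ≤ 30 * η x ^ 4 * (K * K) + 6 * η x ^ 4 * K := by gcongr
    _ = _ := by ring

end Cutoff

section TestField

variable (ρ : ℝ) (η : E3 → ℝ) (U : Fin 3 → E3 → ℝ)

/-- The localised components of a vector field. -/
def locField (j : Fin 3) (y : E3) : ℝ := η y ^ 2 * U j y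

/-- The rescaled divergence of the localisation of a solenoidal field. -/
def locDiv (y : E3) : ℝ := ρ * ∑ k, pd k (fun z => η z ^ 2) y * U k y

/-- The antisymmetric matrix potential of the localised field. -/
def skewPot (i j : Fin 3) (x : E3) : ℝ :=
  pd j (newt ρ (locField η U i)) x - pd i (newt ρ (locField η U j)) x

/-- The compactly supported solenoidal test field. -/
def solField (j : Fin 3) (x : E3) : ℝ := ∑ i, pd i (fun y => η y ^ 6 * skewPot ρ η U i j y) x

/-- The error of `solField` with respect to `η ^ 8 * U`. -/
def corrField (j : Fin 3) (x : E3) : ℝ :=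
  η x ^ 6 * (ρ⁻¹ * pd j (newt ρ (locDiv ρ η U)) x - heatFlow ρ (locField η U j) x)
    + ∑ k, pd k (fun y => η y ^ 6) x * skewPot ρ η U k j x

variable {ρ η U}

theorem locField_isTest (hη : IsTest η) (hU : ∀ j, ContDiff ℝ (⊤ : ℕ∞) (U j)) (j : Fin 3) :
    IsTest (locField η U j) := (hη.pow two_ne_zero).mul_right (hU j)

theorem locDiv_isTest (hη : IsTest η) (hU : ∀ j, ContDiff ℝ (⊤ : ℕ∞) (U j)) :
    IsTest (locDiv ρ η U) :=
  (IsTest.sum _ fun k => ((hη.pow two_ne_zero).deriv k).mul_right (hU k)).const_mul ρ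

theorem skewPot_contDiff (hη : IsTest η) (hU : ∀ j, ContDiff ℝ (⊤ : ℕ∞) (U j)) (i j : Fin 3) :
    ContDiff ℝ (⊤ : ℕ∞) (skewPot ρ η U i j) :=
  ((newt_contDiff (locField_isTest hη hU i)).pd_top j).sub
    ((newt_contDiff (locField_isTest hη hU j)).pd_top i)

theorem solField_isTest (hη : IsTest η) (hU : ∀ j, ContDiff ℝ (⊤ : ℕ∞) (U j)) (j : Fin 3) :
    IsTest (solField ρ η U j) :=
  IsTest.sum _ fun i => ((hη.pow (by norm_num)).mul_right (skewPot_contDiff hη hU i j)).deriv i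

theorem solField_div (hη : IsTest η) (hU : ∀ j, ContDiff ℝ (⊤ : ℕ∞) (U j)) (x : E3) :
    ∑ j, pd j (solField ρ η U j) x = 0 := by
  have ht : ∀ i j, IsTest (fun y => η y ^ 6 * skewPot ρ η U i j y) := fun i j =>
    (hη.pow (by norm_num)).mul_right (skewPot_contDiff hη hU i j)
  have h1 : ∀ j, pd j (solField ρ η U j) x
      = ∑ i, pd j (pd i (fun y => η y ^ 6 * skewPot ρ η U i j y)) x := fun j =>
    pd_sum _ (fun i => ((ht i j).deriv i).differentiable) j x
  have h2 : ∀ i j, pd j (pd i (fun y => η y ^ 6 * skewPot ρ η U i j y)) x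
      = - pd i (pd j (fun y => η y ^ 6 * skewPot ρ η U j i y)) x := by
    intro i j
    have : (fun y => η y ^ 6 * skewPot ρ η U i j y)
        = fun y => (-1) * (η y ^ 6 * skewPot ρ η U j i y) := by
      ext y; simp only [skewPot]; ring
    rw [this, pd_comm ((ht j i).const_mul (-1)).smooth]
    have h3 : pd j (fun y => (-1) * (η y ^ 6 * skewPot ρ η U j i y))
        = fun y => (-1) * pd j (fun y => η y ^ 6 * skewPot ρ η U j i y) y :=
      funext fun y => pd_const_mul (ht j i).differentiable _ _ _
    rw [h3, pd_const_mul ((ht j i).deriv j).differentiable]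
    ring
  simp_rw [h1]
  have h4 : ∑ j, ∑ i, pd j (pd i (fun y => η y ^ 6 * skewPot ρ η U i j y)) x
      = - ∑ j, ∑ i, pd j (pd i (fun y => η y ^ 6 * skewPot ρ η U i j y)) x := by
    conv_lhs => rw [Finset.sum_comm]
    simp_rw [← Finset.sum_neg_distrib]
    exact Finset.sum_congr rfl fun i _ => Finset.sum_congr rfl fun j _ => h2 i j
  linarith

theorem solField_eq (hρ : 0 < ρ) (hη : IsTest η) (hU : ∀ j, ContDiff ℝ (⊤ : ℕ∞) (U j))
    (hdiv : ∀ x, ∑ i, pd i (U i) x = 0) (j : Fin 3) (x : E3) :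
    solField ρ η U j x = η x ^ 8 * U j x + corrField ρ η U j x := by
  have hl := fun k => locField_isTest hη hU k
  have hN := fun k => newt_contDiff (ρ := ρ) (hl k)
  have h6 : Differentiable ℝ (fun y => η y ^ 6) := (hη.pow (by norm_num)).differentiable
  have e1 : ∀ i, pd i (fun y => η y ^ 6 * skewPot ρ η U i j y) x
      = pd i (fun y => η y ^ 6) x * skewPot ρ η U i j x + η x ^ 6 *
        (pd j (pd i (newt ρ (locField η U i))) x - pd i (pd i (newt ρ (locField η U j))) x) := by
    intro i
    rw [pd_mul h6 (skewPot_contDiff hη hU i j).differentiable_top]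
    congr 2
    rw [pd_comm (hN i) j i]
    exact pd_sub ((hN i).pd_top j).differentiable_top ((hN j).pd_top i).differentiable_top i x
  have e2 : (fun y => ∑ i, pd i (newt ρ (locField η U i)) y)
      = fun y => ρ⁻¹ * newt ρ (locDiv ρ η U) y := by
    ext y
    rw [← newt_const_mul]
    simp_rw [newt_pd (hl _)]
    rw [← newt_sum _ fun i => (hl i).deriv i]
    congr 1; ext z
    have : ∀ i, pd i (locField η U i) z
        = pd i (fun z => η z ^ 2) z * U i z + η z ^ 2 * pd i (U i) z := fun i =>
      pd_mul (hη.pow two_ne_zero).differentiable (hU i).differentiable_top i z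
    simp_rw [this, Finset.sum_add_distrib, ← Finset.mul_sum, hdiv, locDiv]
    field_simp; simp
  have e3 : ∑ i, pd j (pd i (newt ρ (locField η U i))) x
      = ρ⁻¹ * pd j (newt ρ (locDiv ρ η U)) x := by
    rw [← pd_sum _ (fun i => ((hN i).pd_top i).differentiable_top), e2,
      pd_const_mul (newt_contDiff (locDiv_isTest hη hU)).differentiable_top]
  have e4 : ∑ i, pd i (pd i (newt ρ (locField η U j))) x
      = heatFlow ρ (locField η U j) x - η x ^ 2 * U j x := newt_lap hρ.le (hl j) x
  simp only [solField, corrField]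
  simp_rw [e1, Finset.sum_add_distrib, ← Finset.mul_sum, Finset.sum_sub_distrib]
  rw [e3, e4]
  ring

theorem corrField_isTest (hη : IsTest η) (hU : ∀ j, ContDiff ℝ (⊤ : ℕ∞) (U j)) (j : Fin 3) :
    IsTest (corrField ρ η U j) := by
  have hl := fun k => locField_isTest hη hU k
  refine IsTest.add ((hη.pow (by norm_num)).mul_right (ContDiff.sub (contDiff_const.mul
    ((newt_contDiff (locDiv_isTest hη hU)).pd_top j)) ((isAdmissible_heatFlow ρ).smooth (hl j))))
    (IsTest.sum _ fun k => ((hη.pow (by norm_num)).deriv k).mul_right (skewPot_contDiff hη hU k j))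

theorem pd_corrField (hρ : 0 < ρ) (hη : IsTest η) (hU : ∀ j, ContDiff ℝ (⊤ : ℕ∞) (U j))
    (i j : Fin 3) (x : E3) :
    ρ * pd i (corrField ρ η U j) x =
      (ρ * pd i (fun y => η y ^ 6) x) * (ρ⁻¹ * pd j (newt ρ (locDiv ρ η U)) x)
      + η x ^ 6 * pd i (pd j (newt ρ (locDiv ρ η U))) x
      - (ρ * pd i (fun y => η y ^ 6) x) * heatFlow ρ (locField η U j) x
      - η x ^ 6 * (ρ * pd i (heatFlow ρ (locField η U j)) x)
      + ∑ k, ((ρ ^ 2 * pd i (pd k (fun y => η y ^ 6)) x)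
          * (ρ⁻¹ * pd j (newt ρ (locField η U k)) x)
        - (ρ ^ 2 * pd i (pd k (fun y => η y ^ 6)) x) * (ρ⁻¹ * pd k (newt ρ (locField η U j)) x)
        + (ρ * pd k (fun y => η y ^ 6) x) * pd i (pd j (newt ρ (locField η U k))) x
        - (ρ * pd k (fun y => η y ^ 6) x) * pd i (pd k (newt ρ (locField η U j))) x) := by
  have hl := fun k => locField_isTest hη hU k
  have hN := fun k => newt_contDiff (ρ := ρ) (hl k)
  have h6 : IsTest (fun y => η y ^ 6) := hη.pow (by norm_num)
  have hG := (newt_contDiff (ρ := ρ) (locDiv_isTest (ρ := ρ) hη hU)).pd_top j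
  have hP := (isAdmissible_heatFlow ρ).smooth (hl j)
  have hA : ContDiff ℝ (⊤ : ℕ∞) fun y => ρ⁻¹ * pd j (newt ρ (locDiv ρ η U)) y
      - heatFlow ρ (locField η U j) y := (contDiff_const.mul hG).sub hP
  have hT := fun k => (h6.deriv k).mul_right (skewPot_contDiff (ρ := ρ) hη hU k j)
  have e1 : pd i (corrField ρ η U j) x = pd i (fun y => η y ^ 6 *
      (ρ⁻¹ * pd j (newt ρ (locDiv ρ η U)) y - heatFlow ρ (locField η U j) y)) x
      + pd i (fun x => ∑ k, pd k (fun y => η y ^ 6) x * skewPot ρ η U k j x) x :=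
    pd_add (h6.mul_right hA).differentiable (IsTest.sum _ hT).differentiable i x
  have e2 : ∀ k, pd i (skewPot ρ η U k j) x
      = pd i (pd j (newt ρ (locField η U k))) x - pd i (pd k (newt ρ (locField η U j))) x :=
    fun k => pd_sub ((hN k).pd_top j).differentiable_top ((hN j).pd_top k).differentiable_top i x
  rw [e1, pd_mul h6.differentiable hA.differentiable_top, pd_sub
    (contDiff_const.mul hG).differentiable_top hP.differentiable_top,
    pd_const_mul hG.differentiable_top, pd_sum _ fun k => (hT k).differentiable, mul_add,
    Finset.mul_sum]
  congr 1
  · field_simp; ring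
  · refine Finset.sum_congr rfl fun k _ => ?_
    rw [pd_mul (h6.deriv k).differentiable (skewPot_contDiff hη hU k j).differentiable_top, e2]
    simp only [skewPot]
    field_simp
    ring

theorem pd_corrField_isGood {K : ℝ} {v : E3 → ℝ} (hρ : 0 < ρ) (hK : 1 ≤ K)
    (hη : IsCutoff K ρ η) (hU : ∀ j, ContDiff ℝ (⊤ : ℕ∞) (U j)) (hv : IsTest v)
    (hUv : ∀ x, η x ^ 2 * ∑ k, U k x ^ 2 ≤ v x) (i j : Fin 3) :
    IsGood η v (16 * (opConst * (36 * K ^ 2) ^ 2)) (fun x => ρ * pd i (corrField ρ η U j) x) := by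
  have hl := fun k => locField_isTest hη.test hU k
  have hD : IsTest (locDiv ρ η U) := locDiv_isTest hη.test hU
  have h6 : IsTest (fun y => η y ^ 6) := hη.test.pow (by norm_num)
  have hKK : K ≤ K ^ 2 := by nlinarith
  have h40 : ∀ x, 0 ≤ η x ^ 4 := fun x => pow_nonneg (hη.nonneg x) 4
  have hv0 : ∀ x, 0 ≤ v x := fun x => le_trans
    (mul_nonneg (sq_nonneg _) (Finset.sum_nonneg fun _ _ => sq_nonneg _)) (hUv x)
  have c0 : ∀ x, |η x ^ 6| ≤ 36 * K ^ 2 * η x ^ 4 := fun x => by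
    rw [abs_of_nonneg (pow_nonneg (hη.nonneg x) 6)]
    have : η x ^ 6 ≤ η x ^ 4 := pow_le_pow_of_le_one (hη.nonneg x) (hη.le_one x) (by norm_num)
    nlinarith [h40 x]
  have c1 : ∀ k x, |ρ * pd k (fun y => η y ^ 6) x| ≤ 36 * K ^ 2 * η x ^ 4 := fun k x =>
    (hη.abs_pd_six_le hρ k x).trans (by have := h40 x; gcongr; nlinarith)
  have c2 : ∀ k l x, |ρ ^ 2 * pd k (pd l (fun y => η y ^ 6)) x| ≤ 36 * K ^ 2 * η x ^ 4 :=
    fun k l x => (hη.abs_pd_pd_six_le hρ k l x).trans (by have := h40 x; gcongr; nlinarith)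
  have t1 : ∀ k, IsTest (fun x => ρ * pd k (fun y => η y ^ 6) x) := fun k =>
    (h6.deriv k).const_mul _
  have t2 : ∀ k l, IsTest (fun x => ρ ^ 2 * pd k (pd l (fun y => η y ^ 6)) x) := fun k l =>
    ((h6.deriv l).deriv k).const_mul _
  have fl : ∀ k x, locField η U k x ^ 2 ≤ 36 * K ^ 2 * v x := fun k x => by
    have h1 : U k x ^ 2 ≤ ∑ l, U l x ^ 2 :=
      Finset.single_le_sum (f := fun l => U l x ^ 2) (fun _ _ => sq_nonneg _) (Finset.mem_univ k)
    have h2 : η x ^ 4 ≤ η x ^ 2 := pow_le_pow_of_le_one (hη.nonneg x) (hη.le_one x) (by norm_num)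
    calc locField η U k x ^ 2 = η x ^ 4 * U k x ^ 2 := by simp only [locField]; ring
      _ ≤ η x ^ 2 * ∑ l, U l x ^ 2 := by gcongr
      _ ≤ v x := hUv x
      _ ≤ _ := by nlinarith [hv0 x]
  have fd : ∀ x, locDiv ρ η U x ^ 2 ≤ 36 * K ^ 2 * v x := fun x => by
    have e : locDiv ρ η U x = 2 * η x * ∑ k, (ρ * pd k η x) * U k x := by
      simp_rw [locDiv, pd_pow hη.test.differentiable, Finset.mul_sum]
      refine Finset.sum_congr rfl fun k _ => ?_
      norm_num; ring
    have h1 : (∑ k, (ρ * pd k η x) * U k x) ^ 2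
        ≤ (∑ k, (ρ * pd k η x) ^ 2) * ∑ k, U k x ^ 2 := Finset.sum_mul_sq_le_sq_mul_sq _ _ _
    have h2 : ∑ k, (ρ * pd k η x) ^ 2 ≤ 3 * K ^ 2 := by
      have : ∀ k ∈ Finset.univ, (ρ * pd k η x) ^ 2 ≤ K ^ 2 := fun k _ => by
        rw [← sq_abs, abs_mul, abs_of_pos hρ]
        have := hη.pd_le k x
        gcongr
      simpa using Finset.sum_le_card_nsmul _ _ _ this
    have h3 : 0 ≤ ∑ k, U k x ^ 2 := Finset.sum_nonneg fun _ _ => sq_nonneg _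
    calc locDiv ρ η U x ^ 2 = 4 * η x ^ 2 * (∑ k, (ρ * pd k η x) * U k x) ^ 2 := by rw [e]; ring
      _ ≤ 4 * η x ^ 2 * (3 * K ^ 2 * ∑ k, U k x ^ 2) := by gcongr; exact h1.trans (by gcongr)
      _ = 12 * K ^ 2 * (η x ^ 2 * ∑ k, U k x ^ 2) := by ring
      _ ≤ 12 * K ^ 2 * v x := by have := hUv x; gcongr
      _ ≤ _ := by nlinarith [hv0 x, mul_nonneg (sq_nonneg K) (hv0 x)]
  have mk : ∀ {O : (E3 → ℝ) → E3 → ℝ} {c f : E3 → ℝ}, IsAdmissible opConst O → IsTest c →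
      (∀ x, |c x| ≤ 36 * K ^ 2 * η x ^ 4) → IsTest f → (∀ x, f x ^ 2 ≤ 36 * K ^ 2 * v x) →
      IsGood η v (opConst * (36 * K ^ 2) ^ 2) (fun x => c x * O f x) := fun hO hc hcK hf hfv =>
    IsGood.of_admissible opConst_nonneg hO hη.test hη.nonneg hη.le_one hv (by nlinarith) hc hcK
      hf hfv
  have hN := isAdmissible_pd_newt hρ
  have hNN := isAdmissible_pd_pd_newt hρ.le
  have g := ((((mk (hN j) (t1 i) (c1 i) hD fd).add (mk (hNN i j) h6 c0 hD fd)).sub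
    (mk (isAdmissible_heatFlow ρ) (t1 i) (c1 i) (hl j) (fl j))).sub
    (mk (isAdmissible_pd_heatFlow ρ i) h6 c0 (hl j) (fl j))).add
    (IsGood.sum Finset.univ fun k => (((mk (hN j) (t2 i k) (c2 i k) (hl k) (fl k)).sub
      (mk (hN k) (t2 i k) (c2 i k) (hl j) (fl j))).add
      (mk (hNN i j) (t1 k) (c1 k) (hl k) (fl k))).sub
      (mk (hNN i k) (t1 k) (c1 k) (hl j) (fl j)))
  rw [funext (pd_corrField hρ hη.test hU i j)]
  convert g using 1
  simp; ring

end TestField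

/-- Curl of a vector field given by its components. -/
def compCurl (V : Fin 3 → E3 → ℝ) (x : E3) : Fin 3 → ℝ :=
  ![pd 1 (V 2) x - pd 2 (V 1) x, pd 2 (V 0) x - pd 0 (V 2) x, pd 0 (V 1) x - pd 1 (V 0) x]

/-- The antisymmetric matrix field whose row divergence is the curl. -/
def curlMat (V : Fin 3 → E3 → ℝ) (i j : Fin 3) : E3 → ℝ :=
  !![fun _ => 0, fun x => -V 2 x, V 1; V 2, fun _ => 0, fun x => -V 0 x;
    fun x => -V 1 x, V 0, fun _ => 0] i j

/-- The equations for the components of a smooth solution. -/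
structure IsCompSolution (U W B : Fin 3 → E3 → ℝ) (P : E3 → ℝ) : Prop where
  smooth_U : ∀ j, ContDiff ℝ (⊤ : ℕ∞) (U j)
  smooth_W : ∀ j, ContDiff ℝ (⊤ : ℕ∞) (W j)
  smooth_B : ∀ j, ContDiff ℝ (⊤ : ℕ∞) (B j)
  smooth_P : ContDiff ℝ (⊤ : ℕ∞) P
  eq_U : ∀ x j, -lap (U j) x + (∑ i, U i x * pd i (U j) x) + pd j P x
    = compCurl W x j + ∑ i, B i x * pd i (B j) x
  eq_W : ∀ x j, -lap (W j) x + (∑ i, U i x * pd i (W j) x)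
    = pd j (fun y => ∑ i, pd i (W i) y) x + compCurl U x j - 2 * W j x
  eq_B : ∀ x j, -lap (B j) x + (∑ i, U i x * pd i (B j) x) = ∑ i, B i x * pd i (U j) x
  div_U : ∀ x, ∑ i, pd i (U i) x = 0
  div_B : ∀ x, ∑ i, pd i (B i) x = 0

theorem contDiff_coord {u : E3 → E3} (hu : ContDiff ℝ (⊤ : ℕ∞) u) (j : Fin 3) :
    ContDiff ℝ (⊤ : ℕ∞) (fun y => u y j) := contDiff_euclidean.1 hu j

theorem IsMMPSolution.components {u w b : E3 → E3} {P : E3 → ℝ} (h : IsMMPSolution u w b P) :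
    IsCompSolution (fun j y => u y j) (fun j y => w y j) (fun j y => b y j) P where
  smooth_U := contDiff_coord h.smooth_u
  smooth_W := contDiff_coord h.smooth_w
  smooth_B := contDiff_coord h.smooth_b
  smooth_P := h.smooth_P
  eq_U := h.eq_u
  eq_W := h.eq_w
  eq_B := h.eq_b
  div_U := h.div_u
  div_B := h.div_b

section Stress

variable {U W B : Fin 3 → E3 → ℝ} {P : E3 → ℝ}

theorem curlMat_contDiff (hW : ∀ j, ContDiff ℝ (⊤ : ℕ∞) (W j)) (i j : Fin 3) :
    ContDiff ℝ (⊤ : ℕ∞) (curlMat W i j) := by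
  fin_cases i <;> fin_cases j <;> simp [curlMat] <;>
    first | exact contDiff_const | exact hW _ | exact (hW _).neg

theorem pd_neg_fun (i : Fin 3) (f : E3 → ℝ) (x : E3) : pd i (fun y => -f y) x = -pd i f x := by
  simp [pd, fderiv_fun_neg]

theorem pd_const (i : Fin 3) (c : ℝ) (x : E3) : pd i (fun _ => c) x = 0 := by simp [pd]

theorem sum_pd_curlMat (j : Fin 3) (x : E3) :
    ∑ i, pd i (curlMat W i j) x = compCurl W x j := by
  fin_cases j <;> simp [curlMat, compCurl, Fin.sum_univ_three, pd_neg_fun, pd_const] <;> ring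

theorem sum_curlMat_sq (x : E3) : ∑ j, ∑ i, curlMat W i j x ^ 2 = 2 * ∑ k, W k x ^ 2 := by
  simp [curlMat, Fin.sum_univ_three]; ring

/-- The part of the momentum equation balanced by the pressure gradient. -/
def resid (U W B : Fin 3 → E3 → ℝ) (j : Fin 3) (x : E3) : ℝ :=
  -lap (U j) x + (∑ i, U i x * pd i (U j) x) - compCurl W x j - ∑ i, B i x * pd i (B j) x

/-- The stress tensor whose divergence is `resid`. -/
def stress (U W B : Fin 3 → E3 → ℝ) (i j : Fin 3) (x : E3) : ℝ :=
  -pd i (U j) x + U i x * U j x - B i x * B j x - curlMat W i j x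

theorem stress_contDiff (h : IsCompSolution U W B P) (i j : Fin 3) :
    ContDiff ℝ (⊤ : ℕ∞) (stress U W B i j) :=
  ((((h.smooth_U j).pd_top i).neg.add ((h.smooth_U i).mul (h.smooth_U j))).sub
    ((h.smooth_B i).mul (h.smooth_B j))).sub (curlMat_contDiff h.smooth_W i j)

theorem resid_eq_neg_pd (h : IsCompSolution U W B P) (j : Fin 3) (x : E3) :
    resid U W B j x = -pd j P x := by
  have := h.eq_U x j
  unfold resid; linarith

theorem resid_eq_sum_pd (h : IsCompSolution U W B P) (j : Fin 3) (x : E3) :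
    resid U W B j x = ∑ i, pd i (stress U W B i j) x := by
  have hU := fun j => (h.smooth_U j).differentiable_top
  have hB := fun j => (h.smooth_B j).differentiable_top
  have hE := fun i => (curlMat_contDiff h.smooth_W i j).differentiable_top
  have hp := fun i => ((h.smooth_U j).pd_top i).differentiable_top
  have e : ∀ i, pd i (stress U W B i j) x = -pd i (pd i (U j)) x
      + (pd i (U i) x * U j x + U i x * pd i (U j) x)
      - (pd i (B i) x * B j x + B i x * pd i (B j) x) - pd i (curlMat W i j) x := by
    intro i
    unfold stress
    rw [pd_sub ((((hp i).fun_neg.fun_add ((hU i).fun_mul (hU j))).fun_sub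
      ((hB i).fun_mul (hB j)))) (hE i), pd_sub ((hp i).fun_neg.fun_add ((hU i).fun_mul (hU j)))
      ((hB i).fun_mul (hB j)), pd_add (hp i).fun_neg ((hU i).fun_mul (hU j)), pd_neg_fun,
      pd_mul (hU i) (hU j), pd_mul (hB i) (hB j)]
  simp_rw [e, Finset.sum_sub_distrib, Finset.sum_add_distrib, Finset.sum_neg_distrib,
    ← Finset.sum_mul, h.div_U, h.div_B, sum_pd_curlMat]
  simp only [resid, lap]
  ring

theorem integral_sum_mul_resid (h : IsCompSolution U W B P) {ψ : Fin 3 → E3 → ℝ}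
    (hψ : ∀ j, IsTest (ψ j)) :
    ∫ x, ∑ j, ψ j x * resid U W B j x = -∑ j, ∑ i, ∫ x, stress U W B i j x * pd i (ψ j) x := by
  have hT := stress_contDiff h
  simp_rw [resid_eq_sum_pd h, Finset.mul_sum]
  rw [integral_finsetSum _ fun j _ => (IsTest.sum _ fun i =>
    (hψ j).mul_right ((hT i j).pd_top i)).integrable, ← Finset.sum_neg_distrib]
  refine Finset.sum_congr rfl fun j _ => ?_
  rw [integral_finsetSum _ fun i _ => ((hψ j).mul_right ((hT i j).pd_top i)).integrable,
    ← Finset.sum_neg_distrib]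
  refine Finset.sum_congr rfl fun i _ => ?_
  rw [(hψ j).integral_mul_pd (hT i j)]
  congr 2; ext x; ring

theorem integral_sol_mul_resid (h : IsCompSolution U W B P) {Φ : Fin 3 → E3 → ℝ}
    (hΦ : ∀ j, IsTest (Φ j)) (hdiv : ∀ x, ∑ j, pd j (Φ j) x = 0) :
    ∫ x, ∑ j, Φ j x * resid U W B j x = 0 := by
  simp_rw [resid_eq_neg_pd h, mul_neg]
  have e : ∀ j, ∫ x, -(Φ j x * pd j P x) = ∫ x, pd j (Φ j) x * P x := fun j => by
    rw [integral_neg, (hΦ j).integral_mul_pd h.smooth_P, neg_neg]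
  have hn : ∀ j, Integrable fun x => -(Φ j x * pd j P x) := fun j =>
    ((hΦ j).mul_right (h.smooth_P.pd_top j)).integrable.neg
  rw [integral_finsetSum _ fun j _ => hn j]
  simp_rw [e]
  rw [← integral_finsetSum _ fun j _ => (((hΦ j).deriv j).mul_right h.smooth_P).integrable]
  simp_rw [← Finset.sum_mul, hdiv]
  simp

/-- The density of the solution. -/
def density (U W B : Fin 3 → E3 → ℝ) (x : E3) : ℝ :=
  ∑ k, U k x ^ 2 + ∑ k, B k x ^ 2 + ∑ k, W k x ^ 2

theorem abs_mul_le_sum_sq (V : Fin 3 → E3 → ℝ) (i j : Fin 3) (x : E3) :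
    |V i x * V j x| ≤ ∑ k, V k x ^ 2 := by
  have hi := Finset.single_le_sum (f := fun l => V l x ^ 2) (fun _ _ => sq_nonneg _)
    (Finset.mem_univ i)
  have hj := Finset.single_le_sum (f := fun l => V l x ^ 2) (fun _ _ => sq_nonneg _)
    (Finset.mem_univ j)
  exact abs_le.2 ⟨by nlinarith [sq_nonneg (V i x + V j x)], by nlinarith [sq_nonneg (V i x - V j x)]⟩

theorem density_contDiff (h : IsCompSolution U W B P) : ContDiff ℝ (⊤ : ℕ∞) (density U W B) :=
  ((ContDiff.sum fun k _ => (h.smooth_U k).pow 2).add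
    (ContDiff.sum fun k _ => (h.smooth_B k).pow 2)).add
    (ContDiff.sum fun k _ => (h.smooth_W k).pow 2)

theorem density_nonneg (x : E3) : 0 ≤ density U W B x := by unfold density; positivity

theorem abs_integral_stress_le {ρ s : ℝ} {η ψ : E3 → ℝ} {C : ℝ} (hρ : 0 < ρ)
    (h : IsCompSolution U W B P) (hψ : IsTest ψ) (i j : Fin 3)
    (hg : IsGood η (fun x => η x ^ 2 * density U W B x) C (fun x => ρ * pd i ψ x)) (hs : 0 < s) :
    |∫ x, stress U W B i j x * pd i ψ x| ≤
      C * (s * ((∫ x, (η x ^ 4 * pd i (U j) x) ^ 2) + ∫ x, (η x ^ 4 * curlMat W i j x) ^ 2)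
        + 2 * (s⁻¹ * (ρ⁻¹ ^ 2 * ∫ x, η x ^ 2 * density U W B x))
        + 2 * (ρ⁻¹ * ∫ x, η x ^ 2 * density U W B x * √(η x ^ 2 * density U W B x))) := by
  have hi := fun {g : E3 → ℝ} (hg : ContDiff ℝ (⊤ : ℕ∞) g) =>
    ((hψ.deriv i).mul_left hg).integrable
  have c1 := (h.smooth_U j).pd_top i
  have c2 := (h.smooth_U i).mul (h.smooth_U j)
  have c3 := (h.smooth_B i).mul (h.smooth_B j)
  have c4 := curlMat_contDiff h.smooth_W i j
  have pull : ∀ g : E3 → ℝ, |∫ x, g x * (ρ * pd i ψ x)| = ρ * |∫ x, g x * pd i ψ x| := by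
    intro g
    rw [← abs_of_pos hρ, ← abs_mul, ← integral_const_mul, abs_of_pos hρ]
    congr 2; ext x; ring
  have sqb : ∀ {g : E3 → ℝ}, ContDiff ℝ (⊤ : ℕ∞) g → |∫ x, g x * pd i ψ x| ≤
      C * (s * (∫ x, (η x ^ 4 * g x) ^ 2)
        + s⁻¹ * (ρ⁻¹ ^ 2 * ∫ x, η x ^ 2 * density U W B x)) := by
    intro g hgs
    have := hg.sq_le hgs (mul_pos hρ hs)
    rw [pull] at this
    calc |∫ x, g x * pd i ψ x| = ρ⁻¹ * (ρ * |∫ x, g x * pd i ψ x|) := by field_simp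
      _ ≤ ρ⁻¹ * (C * (ρ * s * (∫ x, (η x ^ 4 * g x) ^ 2)
          + (ρ * s)⁻¹ * ∫ x, η x ^ 2 * density U W B x)) := by gcongr
      _ = _ := by rw [mul_inv]; field_simp
  have srb : ∀ {g : E3 → ℝ}, ContDiff ℝ (⊤ : ℕ∞) g → (∀ x, |g x| ≤ density U W B x) →
      |∫ x, g x * pd i ψ x| ≤
      C * (ρ⁻¹ * ∫ x, η x ^ 2 * density U W B x * √(η x ^ 2 * density U W B x)) := by
    intro g hgs hgd
    have := hg.sqrt_le hgs fun x => by have := hgd x; gcongr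
    rw [pull] at this
    calc |∫ x, g x * pd i ψ x| = ρ⁻¹ * (ρ * |∫ x, g x * pd i ψ x|) := by field_simp
      _ ≤ ρ⁻¹ * (C * ∫ x, η x ^ 2 * density U W B x * √(η x ^ 2 * density U W B x)) := by
        gcongr
      _ = _ := by ring
  have b1 := sqb c1
  have b4 := sqb c4
  have b2 := srb c2 fun x => (abs_mul_le_sum_sq U i j x).trans (by
    unfold density
    have : 0 ≤ ∑ k, B k x ^ 2 := by positivity
    have : 0 ≤ ∑ k, W k x ^ 2 := by positivity
    linarith)
  have b3 := srb c3 fun x => (abs_mul_le_sum_sq B i j x).trans (by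
    unfold density
    have : 0 ≤ ∑ k, U k x ^ 2 := by positivity
    have : 0 ≤ ∑ k, W k x ^ 2 := by positivity
    linarith)
  have e : ∫ x, stress U W B i j x * pd i ψ x = -(∫ x, pd i (U j) x * pd i ψ x)
      + (∫ x, U i x * U j x * pd i ψ x) - (∫ x, B i x * B j x * pd i ψ x)
      - ∫ x, curlMat W i j x * pd i ψ x := by
    have n1 : Integrable fun x => -(pd i (U j) x * pd i ψ x) := (hi c1).neg
    have n2 : Integrable fun x => -(pd i (U j) x * pd i ψ x) + U i x * U j x * pd i ψ x :=
      n1.add (hi c2)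
    have n3 : Integrable fun x => -(pd i (U j) x * pd i ψ x) + U i x * U j x * pd i ψ x
      - B i x * B j x * pd i ψ x := n2.sub (hi c3)
    rw [← integral_neg, ← integral_add n1 (hi c2), ← integral_sub n2 (hi c3),
      ← integral_sub n3 (hi c4)]
    congr 1; ext x; simp only [stress]; ring
  rw [e]
  set I1 := ∫ x, pd i (U j) x * pd i ψ x
  set I2 := ∫ x, U i x * U j x * pd i ψ x
  set I3 := ∫ x, B i x * B j x * pd i ψ x
  set I4 := ∫ x, curlMat W i j x * pd i ψ x
  have t : |-I1 + I2 - I3 - I4| ≤ |I1| + |I2| + |I3| + |I4| := by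
    rw [abs_le]
    constructor <;> linarith [neg_abs_le I1, le_abs_self I1, neg_abs_le I2, le_abs_self I2,
      neg_abs_le I3, le_abs_self I3, neg_abs_le I4, le_abs_self I4]
  linarith

theorem integral_cutoff_mul_resid_le {K ρ s : ℝ} {η : E3 → ℝ} (hρ : 0 < ρ) (hK : 1 ≤ K)
    (h : IsCompSolution U W B P) (hη : IsCutoff K ρ η) (hs : 0 < s) :
    ∫ x, η x ^ 8 * ∑ j, U j x * resid U W B j x ≤
      16 * (opConst * (36 * K ^ 2) ^ 2) *
        (s * (∫ x, η x ^ 8 * (∑ j, ∑ i, pd i (U j) x ^ 2 + 2 * ∑ k, W k x ^ 2))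
        + 18 * (s⁻¹ * (ρ⁻¹ ^ 2 * ∫ x, η x ^ 2 * density U W B x))
        + 18 * (ρ⁻¹ * ∫ x, η x ^ 2 * density U W B x * √(η x ^ 2 * density U W B x))) := by
  have hU := h.smooth_U
  have h8 : IsTest (fun x => η x ^ 8) := hη.test.pow (by norm_num)
  have hv : IsTest (fun x => η x ^ 2 * density U W B x) :=
    (hη.test.pow two_ne_zero).mul_right (density_contDiff h)
  have hψ := corrField_isTest (ρ := ρ) hη.test hU
  have hg := pd_corrField_isGood hρ hK hη hU hv (fun x => by
    have : ∑ k, U k x ^ 2 ≤ density U W B x := by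
      unfold density
      have : 0 ≤ ∑ k, B k x ^ 2 := by positivity
      have : 0 ≤ ∑ k, W k x ^ 2 := by positivity
      linarith
    gcongr)
  have hR : ∀ j, ContDiff ℝ (⊤ : ℕ∞) (resid U W B j) := fun j => by
    rw [funext (resid_eq_neg_pd h j)]; exact (h.smooth_P.pd_top j).neg
  have e0 := integral_sol_mul_resid h (solField_isTest (ρ := ρ) hη.test hU)
    (solField_div hη.test hU)
  have e1 : ∫ x, η x ^ 8 * ∑ j, U j x * resid U W B j x
      = ∑ j, ∑ i, ∫ x, stress U W B i j x * pd i (corrField ρ η U j) x := by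
    have e2 := integral_sum_mul_resid h hψ
    have e3 : (fun x => ∑ j, solField ρ η U j x * resid U W B j x)
        = fun x => η x ^ 8 * (∑ j, U j x * resid U W B j x)
          + ∑ j, corrField ρ η U j x * resid U W B j x := by
      ext x
      simp_rw [solField_eq hρ hη.test hU h.div_U, Finset.mul_sum, ← Finset.sum_add_distrib]
      exact Finset.sum_congr rfl fun j _ => by ring
    rw [e3, integral_add (h8.mul_right (ContDiff.sum fun j _ => (hU j).mul (hR j))).integrable
      (IsTest.sum _ fun j => (hψ j).mul_right (hR j)).integrable] at e0
    linarith
  set C := 16 * (opConst * (36 * K ^ 2) ^ 2)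
  set I2 := ∫ x, η x ^ 2 * density U W B x
  set I3 := ∫ x, η x ^ 2 * density U W B x * √(η x ^ 2 * density U W B x)
  have t1 : ∀ i j, IsTest (fun x => (η x ^ 4 * pd i (U j) x) ^ 2) := fun i j =>
    ((hη.test.pow four_ne_zero).mul_right ((hU j).pd_top i)).pow two_ne_zero
  have t2 : ∀ i j, IsTest (fun x => (η x ^ 4 * curlMat W i j x) ^ 2) := fun i j =>
    ((hη.test.pow four_ne_zero).mul_right (curlMat_contDiff h.smooth_W i j)).pow two_ne_zero
  have e5 : ∫ x, η x ^ 8 * (∑ j, ∑ i, pd i (U j) x ^ 2 + 2 * ∑ k, W k x ^ 2)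
      = ∑ j, ∑ i, ((∫ x, (η x ^ 4 * pd i (U j) x) ^ 2)
        + ∫ x, (η x ^ 4 * curlMat W i j x) ^ 2) := by
    simp_rw [← fun i j => integral_add (t1 i j).integrable (t2 i j).integrable]
    simp_rw [← fun j => integral_finsetSum (μ := volume) Finset.univ
      (fun i (_ : i ∈ Finset.univ) => ((t1 i j).add (t2 i j)).integrable)]
    rw [← integral_finsetSum (μ := volume) Finset.univ
      (fun j _ => (IsTest.sum _ fun i => (t1 i j).add (t2 i j)).integrable)]
    congr 1; ext x
    rw [← sum_curlMat_sq, ← Finset.sum_add_distrib, Finset.mul_sum]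
    refine Finset.sum_congr rfl fun j _ => ?_
    rw [← Finset.sum_add_distrib, Finset.mul_sum]
    exact Finset.sum_congr rfl fun i _ => by ring
  rw [e1, e5]
  calc _ ≤ ∑ j, ∑ i, C * (s * ((∫ x, (η x ^ 4 * pd i (U j) x) ^ 2)
            + ∫ x, (η x ^ 4 * curlMat W i j x) ^ 2)
          + 2 * (s⁻¹ * (ρ⁻¹ ^ 2 * I2)) + 2 * (ρ⁻¹ * I3)) :=
        Finset.sum_le_sum fun j _ => Finset.sum_le_sum fun i _ => (le_abs_self _).trans
          (abs_integral_stress_le hρ h (hψ j) i j (hg i j) hs)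
    _ = _ := by
      have lin : ∀ (X : Fin 3 → Fin 3 → ℝ) (a b : ℝ), ∑ j, ∑ i, C * (s * X j i + 2 * a + 2 * b)
          = C * (s * (∑ j, ∑ i, X j i) + 18 * a + 18 * b) := fun X a b => by
        simp only [Fin.sum_univ_three]; ring
      exact lin _ _ _

end Stress

/-- Test functions with vanishing integral. -/
structure IsNull (h : E3 → ℝ) : Prop where
  test : IsTest h
  integral_eq : ∫ x, h x = 0

namespace IsNull

variable {h h' : E3 → ℝ}

theorem sub (hh : IsNull h) (hh' : IsNull h') : IsNull (fun x => h x - h' x) :=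
  ⟨hh.test.sub hh'.test, by
    rw [integral_sub hh.test.integrable hh'.test.integrable, hh.integral_eq, hh'.integral_eq,
      sub_zero]⟩

theorem const_mul (hh : IsNull h) (c : ℝ) : IsNull (fun x => c * h x) :=
  ⟨hh.test.const_mul c, by rw [integral_const_mul, hh.integral_eq, mul_zero]⟩

theorem sum {ι : Type*} (s : Finset ι) {h : ι → E3 → ℝ} (hh : ∀ k, IsNull (h k)) :
    IsNull (fun x => ∑ k ∈ s, h k x) :=
  ⟨IsTest.sum _ fun k => (hh k).test, by
    rw [integral_finsetSum _ fun k _ => (hh k).test.integrable]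
    exact Finset.sum_eq_zero fun k _ => (hh k).integral_eq⟩

theorem divergence {θ : E3 → ℝ} (hθ : IsTest θ) {G : Fin 3 → E3 → ℝ}
    (hG : ∀ i, ContDiff ℝ (⊤ : ℕ∞) (G i)) :
    IsNull (fun x => ∑ i, (pd i θ x * G i x + θ x * pd i (G i) x)) := by
  refine IsNull.sum _ fun i => ?_
  have e : (fun x => pd i θ x * G i x + θ x * pd i (G i) x) = pd i (fun y => θ y * G i y) :=
    funext fun x => (pd_mul hθ.differentiable (hG i).differentiable_top i x).symm
  rw [e]
  exact ⟨(hθ.mul_right (hG i)).deriv i, (hθ.mul_right (hG i)).integral_pd i⟩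

end IsNull

section Energy

/-- The energy density of one component transported by `U` and localised by `θ`. -/
def localEnergy (θ : E3 → ℝ) (U : Fin 3 → E3 → ℝ) (f : E3 → ℝ) (x : E3) : ℝ :=
  θ x * ∑ i, pd i f x ^ 2 + ∑ i, pd i θ x * f x * pd i f x
    - 1 / 2 * (∑ i, pd i θ x * U i x) * f x ^ 2

variable {θ : E3 → ℝ} {U W B : Fin 3 → E3 → ℝ} {P : E3 → ℝ}

theorem isNull_transport (hθ : IsTest θ) (hU : ∀ j, ContDiff ℝ (⊤ : ℕ∞) (U j))
    (hdiv : ∀ x, ∑ i, pd i (U i) x = 0) {f : E3 → ℝ} (hf : ContDiff ℝ (⊤ : ℕ∞) f) :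
    IsNull (fun x => θ x * (f x * (-lap f x + ∑ i, U i x * pd i f x)) - localEnergy θ U f x) := by
  have hp := fun i => hf.pd_top i
  have hfd := hf.differentiable_top
  have hUd := fun i => (hU i).differentiable_top
  convert IsNull.divergence hθ (G := fun i x => U i x * (1 / 2 * f x ^ 2) - f x * pd i f x)
    (fun i => ((hU i).mul (contDiff_const.mul (hf.pow 2))).sub (hf.mul (hp i))) using 1
  ext x
  have e : ∀ i, pd i (fun x => U i x * (1 / 2 * f x ^ 2) - f x * pd i f x) x
      = pd i (U i) x * (1 / 2 * f x ^ 2) + U i x * (f x * pd i f x)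
        - (pd i f x ^ 2 + f x * pd i (pd i f) x) := by
    intro i
    rw [pd_sub ((hUd i).fun_mul ((hfd.fun_pow 2).const_mul _))
      (hfd.fun_mul (hp i).differentiable_top), pd_mul (hUd i) ((hfd.fun_pow 2).const_mul _),
      pd_mul hfd (hp i).differentiable_top, pd_const_mul (hfd.fun_pow 2), pd_pow hfd]
    norm_num; ring
  have hd := hdiv x
  simp_rw [e]
  simp only [localEnergy, lap, Fin.sum_univ_three] at hd ⊢
  linear_combination (-(1 / 2 : ℝ) * θ x * f x ^ 2) * hd

theorem isNull_magnetic (hθ : IsTest θ) (h : IsCompSolution U W B P) :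
    IsNull (fun x => (∑ i, pd i θ x * B i x) * (∑ j, U j x * B j x) + θ x *
      ∑ j, (U j x * (∑ i, B i x * pd i (B j) x) + B j x * ∑ i, B i x * pd i (U j) x)) := by
  have hU := fun j => (h.smooth_U j).differentiable_top
  have hB := fun j => (h.smooth_B j).differentiable_top
  have hs : ContDiff ℝ (⊤ : ℕ∞) fun x => ∑ j, U j x * B j x :=
    ContDiff.sum fun j _ => (h.smooth_U j).mul (h.smooth_B j)
  convert IsNull.divergence hθ (G := fun i x => B i x * ∑ j, U j x * B j x)
    (fun i => (h.smooth_B i).mul hs) using 1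
  ext x
  have e : ∀ i, pd i (fun x => B i x * ∑ j, U j x * B j x) x
      = pd i (B i) x * (∑ j, U j x * B j x)
        + B i x * ∑ j, (pd i (U j) x * B j x + U j x * pd i (B j) x) := by
    intro i
    rw [pd_mul (hB i) hs.differentiable_top, pd_sum _ fun j => (hU j).fun_mul (hB j)]
    simp_rw [fun j => pd_mul (hU j) (hB j) i x]
  have hd := h.div_B x
  simp_rw [e]
  simp only [Fin.sum_univ_three] at hd ⊢
  linear_combination (-θ x * (U 0 x * B 0 x + U 1 x * B 1 x + U 2 x * B 2 x)) * hd

theorem isNull_curl (hθ : IsTest θ) (h : IsCompSolution U W B P) :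
    IsNull (fun x => (∑ i, pd i θ x * ∑ j, curlMat W i j x * U j x)
      + θ x * ∑ j, (U j x * compCurl W x j - W j x * compCurl U x j)) := by
  have hU := fun j => (h.smooth_U j).differentiable_top
  have hE := fun i j => curlMat_contDiff h.smooth_W i j
  convert IsNull.divergence hθ (G := fun i x => ∑ j, curlMat W i j x * U j x)
    (fun i => ContDiff.sum fun j _ => (hE i j).mul (h.smooth_U j)) using 1
  ext x
  have e : ∀ i, pd i (fun x => ∑ j, curlMat W i j x * U j x) x
      = ∑ j, (pd i (curlMat W i j) x * U j x + curlMat W i j x * pd i (U j) x) := by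
    intro i
    rw [pd_sum _ fun j => (hE i j).differentiable_top.fun_mul (hU j)]
    simp_rw [fun j => pd_mul (hE i j).differentiable_top (hU j) i x]
  simp_rw [e, Finset.sum_add_distrib, ← Finset.mul_sum, Finset.sum_add_distrib]
  congr 2
  rw [Finset.sum_comm]
  simp_rw [← Finset.sum_mul, sum_pd_curlMat]
  simp [Fin.sum_univ_three, compCurl, curlMat]
  ring

theorem isNull_grad_div (hθ : IsTest θ) (h : IsCompSolution U W B P) :
    IsNull (fun x => (∑ i, pd i θ x * W i x) * (∑ k, pd k (W k) x)
      + θ x * (∑ k, pd k (W k) x) ^ 2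
      + θ x * ∑ j, W j x * pd j (fun y => ∑ i, pd i (W i) y) x) := by
  have hW := fun j => (h.smooth_W j).differentiable_top
  have hs : ContDiff ℝ (⊤ : ℕ∞) fun x => ∑ k, pd k (W k) x :=
    ContDiff.sum fun j _ => (h.smooth_W j).pd_top j
  convert IsNull.divergence hθ (G := fun i x => W i x * ∑ k, pd k (W k) x)
    (fun i => (h.smooth_W i).mul hs) using 1
  ext x
  simp_rw [fun i => pd_mul (hW i) hs.differentiable_top i x]
  simp only [Fin.sum_univ_three]
  ring

theorem isNull_grad_transpose (hθ : IsTest θ) (hU : ∀ j, ContDiff ℝ (⊤ : ℕ∞) (U j))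
    (hdiv : ∀ x, ∑ i, pd i (U i) x = 0) :
    IsNull (fun x => (∑ i, ∑ j, pd i θ x * U j x * pd j (U i) x)
      + θ x * ∑ i, ∑ j, pd i (U j) x * pd j (U i) x) := by
  have hUd := fun i => (hU i).differentiable_top
  have hp := fun i j => ((hU j).pd_top i).differentiable_top
  convert IsNull.divergence hθ (G := fun i x => ∑ j, U j x * pd j (U i) x)
    (fun i => ContDiff.sum fun j _ => (hU j).mul ((hU i).pd_top j)) using 1
  ext x
  have e : ∀ i, pd i (fun x => ∑ j, U j x * pd j (U i) x) x
      = ∑ j, (pd i (U j) x * pd j (U i) x + U j x * pd j (pd i (U i)) x) := by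
    intro i
    rw [pd_sum _ fun j => (hUd j).fun_mul (hp j i)]
    simp_rw [fun j => pd_mul (hUd j) (hp j i) i x, fun j => pd_comm (hU i) i j x]
  have e0 : ∀ j, ∑ i, pd j (pd i (U i)) x = 0 := by
    intro j
    rw [← pd_sum _ fun i => hp i i, show (fun y => ∑ i, pd i (U i) y) = fun _ => (0 : ℝ) from
      funext hdiv, pd_const]
  simp_rw [e]
  have h0 := e0 0
  have h1 := e0 1
  have h2 := e0 2
  simp only [Fin.sum_univ_three] at h0 h1 h2 ⊢
  linear_combination (-θ x * U 0 x) * h0 + (-θ x * U 1 x) * h1 + (-θ x * U 2 x) * h2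

/-- The localised energy density of the full system, up to null terms. -/
def energyForm (θ : E3 → ℝ) (U W B : Fin 3 → E3 → ℝ) (x : E3) : ℝ :=
  ∑ j, (localEnergy θ U (U j) x + localEnergy θ U (B j) x + localEnergy θ U (W j) x)
    + (∑ i, pd i θ x * B i x) * (∑ j, U j x * B j x)
    + (∑ i, pd i θ x * ∑ j, curlMat W i j x * U j x) - 2 * θ x * ∑ j, W j x * compCurl U x j
    + (∑ i, pd i θ x * W i x) * (∑ k, pd k (W k) x) + θ x * (∑ k, pd k (W k) x) ^ 2
    + 2 * θ x * ∑ j, W j x ^ 2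
    - 3 / 4 * ((∑ i, ∑ j, pd i θ x * U j x * pd j (U i) x)
      + θ x * ∑ i, ∑ j, pd i (U j) x * pd j (U i) x)

theorem isNull_resid_sub_energyForm (hθ : IsTest θ) (h : IsCompSolution U W B P) :
    IsNull (fun x => θ x * (∑ j, U j x * resid U W B j x) - energyForm θ U W B x) := by
  have tr := fun {f : E3 → ℝ} (hf : ContDiff ℝ (⊤ : ℕ∞) f) =>
    isNull_transport hθ h.smooth_U h.div_U hf
  have nU := IsNull.sum Finset.univ fun j => tr (h.smooth_U j)
  have nB := IsNull.sum Finset.univ fun j => tr (h.smooth_B j)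
  have nW := IsNull.sum Finset.univ fun j => tr (h.smooth_W j)
  have n := (((((nU.sub (nB.const_mul (-1))).sub (nW.const_mul (-1))).sub
    (isNull_magnetic hθ h)).sub (isNull_curl hθ h)).sub (isNull_grad_div hθ h)).sub
    ((isNull_grad_transpose hθ h.smooth_U h.div_U).const_mul (-(3 / 4)))
  convert n using 1
  ext x
  simp_rw [h.eq_B, h.eq_W]
  simp only [energyForm, resid, Finset.sum_add_distrib, Finset.sum_sub_distrib, mul_add, mul_sub,
    Fin.sum_univ_three]
  ring

end Energy

section Coercivity

variable {θ : E3 → ℝ} {U W B : Fin 3 → E3 → ℝ} {x : E3} {e δ c : ℝ} {d : Fin 3 → ℝ}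

theorem localEnergy_ge (hθ : θ x = e ^ 2) (hdθ : ∀ i, pd i θ x = e * d i)
    (hd : ∀ i, d i ^ 2 ≤ δ) (hU : |∑ i, pd i θ x * U i x| ≤ c) (f : E3 → ℝ) :
    15 / 16 * e ^ 2 * ∑ i, pd i f x ^ 2 - 12 * δ * f x ^ 2 - 1 / 2 * c * f x ^ 2
      ≤ localEnergy θ U f x := by
  have h1 : (∑ i, pd i θ x * U i x) * f x ^ 2 ≤ c * f x ^ 2 :=
    mul_le_mul_of_nonneg_right ((le_abs_self _).trans hU) (sq_nonneg _)
  have h2 : ∀ i, -(1 / 16) * e ^ 2 * pd i f x ^ 2 - 4 * δ * f x ^ 2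
      ≤ pd i θ x * f x * pd i f x := fun i => by
    rw [hdθ]
    nlinarith [sq_nonneg (e * pd i f x / 4 + 2 * d i * f x),
      mul_le_mul_of_nonneg_right (hd i) (sq_nonneg (f x))]
  have h3 := Finset.sum_le_sum fun i (_ : i ∈ Finset.univ) => h2 i
  simp only [localEnergy, hθ, Fin.sum_univ_three] at h1 h3 ⊢
  linarith

theorem curlMat_term_ge (hdθ : ∀ i, pd i θ x = e * d i) (hd : ∀ i, d i ^ 2 ≤ δ) :
    -(1 / 12) * e ^ 2 * (∑ k, W k x ^ 2) - 12 * δ * ∑ k, U k x ^ 2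
      ≤ ∑ i, pd i θ x * ∑ j, curlMat W i j x * U j x := by
  have key : ∀ (i : Fin 3) (w v : ℝ), -(1 / 24) * e ^ 2 * w ^ 2 - 6 * δ * v ^ 2
      ≤ e * d i * (w * v) := fun i w v => by
    nlinarith [sq_nonneg (e * w + 12 * d i * v),
      mul_le_mul_of_nonneg_right (hd i) (sq_nonneg v)]
  simp only [hdθ, curlMat, Fin.sum_univ_three]
  simp
  linarith [key 0 (-W 2 x) (U 1 x), key 0 (W 1 x) (U 2 x), key 1 (W 2 x) (U 0 x),
    key 1 (-W 0 x) (U 2 x), key 2 (-W 1 x) (U 0 x), key 2 (W 0 x) (U 1 x)]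

theorem curl_term_ge :
    -(4 / 3) * e ^ 2 * (∑ k, W k x ^ 2) - 3 / 4 * e ^ 2 * (∑ j, ∑ i, pd i (U j) x ^ 2
      - ∑ i, ∑ j, pd i (U j) x * pd j (U i) x) ≤ -(2 * e ^ 2 * ∑ j, W j x * compCurl U x j) := by
  have key : ∀ j, -(4 / 3) * e ^ 2 * W j x ^ 2 - 3 / 4 * e ^ 2 * compCurl U x j ^ 2
      ≤ -(2 * e ^ 2 * (W j x * compCurl U x j)) := fun j => by
    nlinarith [sq_nonneg (e * (4 * W j x - 3 * compCurl U x j))]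
  have h := Finset.sum_le_sum fun j (_ : j ∈ Finset.univ) => key j
  simp [compCurl, Fin.sum_univ_three] at h ⊢
  linarith

theorem div_term_ge (hdθ : ∀ i, pd i θ x = e * d i) (hd : ∀ i, d i ^ 2 ≤ δ) (D : ℝ) :
    -(3 / 4) * δ * (∑ k, W k x ^ 2) ≤ (∑ i, pd i θ x * W i x) * D + e ^ 2 * D ^ 2 := by
  simp only [hdθ, Fin.sum_univ_three]
  have h := fun i => mul_le_mul_of_nonneg_right (hd i) (sq_nonneg (W i x))
  have h3 : (d 0 * W 0 x + d 1 * W 1 x + d 2 * W 2 x) ^ 2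
      ≤ 3 * (d 0 ^ 2 * W 0 x ^ 2 + d 1 ^ 2 * W 1 x ^ 2 + d 2 ^ 2 * W 2 x ^ 2) := by
    nlinarith [sq_nonneg (d 0 * W 0 x - d 1 * W 1 x), sq_nonneg (d 0 * W 0 x - d 2 * W 2 x),
      sq_nonneg (d 1 * W 1 x - d 2 * W 2 x)]
  nlinarith [h 0, h 1, h 2, sq_nonneg (2 * e * D + (d 0 * W 0 x + d 1 * W 1 x + d 2 * W 2 x))]

theorem transpose_term_ge (hdθ : ∀ i, pd i θ x = e * d i) (hd : ∀ i, d i ^ 2 ≤ δ) :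
    -(1 / 16) * e ^ 2 * (∑ j, ∑ i, pd i (U j) x ^ 2) - 27 / 4 * δ * (∑ k, U k x ^ 2)
      ≤ -(3 / 4 * ∑ i, ∑ j, pd i θ x * U j x * pd j (U i) x) := by
  have key : ∀ i j, -(1 / 16) * e ^ 2 * pd j (U i) x ^ 2 - 9 / 4 * δ * U j x ^ 2
      ≤ -(3 / 4 * (pd i θ x * U j x * pd j (U i) x)) := fun i j => by
    rw [hdθ]
    nlinarith [sq_nonneg (e * pd j (U i) x - 6 * d i * U j x),
      mul_le_mul_of_nonneg_right (hd i) (sq_nonneg (U j x))]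
  have h := Finset.sum_le_sum fun i (_ : i ∈ Finset.univ) =>
    Finset.sum_le_sum fun j (_ : j ∈ Finset.univ) => key i j
  simp only [Fin.sum_univ_three] at h ⊢
  linarith

theorem magnetic_term_ge (hB : |∑ i, pd i θ x * B i x| ≤ c) :
    -(1 / 2) * c * density U W B x ≤ (∑ i, pd i θ x * B i x) * ∑ j, U j x * B j x := by
  have h1 : |∑ j, U j x * B j x| ≤ 1 / 2 * density U W B x := by
    simp only [density, Fin.sum_univ_three]
    rw [abs_le]
    constructor <;> nlinarith [sq_nonneg (U 0 x + B 0 x), sq_nonneg (U 1 x + B 1 x),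
      sq_nonneg (U 2 x + B 2 x), sq_nonneg (U 0 x - B 0 x), sq_nonneg (U 1 x - B 1 x),
      sq_nonneg (U 2 x - B 2 x), sq_nonneg (W 0 x), sq_nonneg (W 1 x), sq_nonneg (W 2 x)]
  have h2 := mul_le_mul hB h1 (abs_nonneg _) ((abs_nonneg _).trans hB)
  rw [← abs_mul] at h2
  linarith [(abs_le.1 h2).1]

/-- The squared gradients of all components together with `|W|²`. -/
def dissipation (U W B : Fin 3 → E3 → ℝ) (x : E3) : ℝ :=
  ∑ j, ∑ i, pd i (U j) x ^ 2 + ∑ j, ∑ i, pd i (B j) x ^ 2 + ∑ j, ∑ i, pd i (W j) x ^ 2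
    + ∑ k, W k x ^ 2

theorem energyForm_ge (hθ : θ x = e ^ 2) (hdθ : ∀ i, pd i θ x = e * d i)
    (hd : ∀ i, d i ^ 2 ≤ δ) (hU : |∑ i, pd i θ x * U i x| ≤ c)
    (hB : |∑ i, pd i θ x * B i x| ≤ c) :
    1 / 8 * (e ^ 2 * dissipation U W B x) - 32 * δ * density U W B x - c * density U W B x
      ≤ energyForm θ U W B x := by
  have hδ : 0 ≤ δ := (sq_nonneg _).trans (hd 0)
  have hl := Finset.sum_le_sum fun j (_ : j ∈ Finset.univ) =>
    add_le_add (add_le_add (localEnergy_ge hθ hdθ hd hU (U j)) (localEnergy_ge hθ hdθ hd hU (B j)))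
      (localEnergy_ge hθ hdθ hd hU (W j))
  have h1 := curlMat_term_ge (U := U) (W := W) hdθ hd
  have h2 := curl_term_ge (U := U) (W := W) (x := x) (e := e)
  have h3 := div_term_ge (W := W) hdθ hd (∑ k, pd k (W k) x)
  have h4 := transpose_term_ge (U := U) hdθ hd
  have h5 := magnetic_term_ge (U := U) (W := W) hB
  have p0 : ∀ (s : ℝ), 0 ≤ s → 0 ≤ e ^ 2 * s := fun s hs => mul_nonneg (sq_nonneg _) hs
  have p1 := p0 (∑ j, ∑ i, pd i (B j) x ^ 2) (by positivity)
  have p2 := p0 (∑ j, ∑ i, pd i (W j) x ^ 2) (by positivity)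
  have p3 := p0 (∑ k, W k x ^ 2) (by positivity)
  have q : ∀ V : Fin 3 → E3 → ℝ, 0 ≤ δ * ∑ k, V k x ^ 2 := fun V => by positivity
  have q1 := q U
  have q2 := q B
  have q3 := q W
  simp only [Finset.sum_add_distrib, Finset.sum_sub_distrib, ← Finset.mul_sum] at hl
  simp only [energyForm, dissipation, density, hθ, Finset.sum_add_distrib] at hl h1 h2 h3 h4 h5 ⊢
  nlinarith

end Coercivity

section EnergyEstimate

variable {K ρ : ℝ} {η : E3 → ℝ} {U W B : Fin 3 → E3 → ℝ} {P : E3 → ℝ}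

theorem pd_sq_contDiff {f : E3 → ℝ} (hf : ContDiff ℝ (⊤ : ℕ∞) f) (i : Fin 3) :
    ContDiff ℝ (⊤ : ℕ∞) fun x => pd i f x ^ 2 := (hf.pd_top i).pow 2

theorem dissipation_contDiff (h : IsCompSolution U W B P) :
    ContDiff ℝ (⊤ : ℕ∞) (dissipation U W B) :=
  (((ContDiff.sum fun j _ => ContDiff.sum fun i _ => pd_sq_contDiff (h.smooth_U j) i).add
    (ContDiff.sum fun j _ => ContDiff.sum fun i _ => pd_sq_contDiff (h.smooth_B j) i)).add
    (ContDiff.sum fun j _ => ContDiff.sum fun i _ => pd_sq_contDiff (h.smooth_W j) i)).add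
    (ContDiff.sum fun k _ => (h.smooth_W k).pow 2)

theorem resid_contDiff (h : IsCompSolution U W B P) (j : Fin 3) :
    ContDiff ℝ (⊤ : ℕ∞) (resid U W B j) := by
  rw [show resid U W B j = fun x => -pd j P x from funext fun x => resid_eq_neg_pd h j x]
  exact (h.smooth_P.pd_top j).neg

theorem dissipation_nonneg (x : E3) : 0 ≤ dissipation U W B x := by
  unfold dissipation; positivity

theorem IsCutoff.abs_sum_pd_eight_mul_le (hη : IsCutoff K ρ η) (hρ : 0 < ρ) {S : ℝ}
    {V : Fin 3 → E3 → ℝ} {x : E3} (hV : ∀ i, V i x ^ 2 ≤ S) :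
    |∑ i, pd i (fun y => η y ^ 8) x * V i x| ≤ 24 * K * ρ⁻¹ * η x ^ 2 * √(η x ^ 2 * S) := by
  have h0 := hη.nonneg x
  have hS : 0 ≤ S := (sq_nonneg _).trans (hV 0)
  have hp : ∀ i, |pd i η x| ≤ K * ρ⁻¹ := fun i => by
    rw [← div_eq_mul_inv, le_div_iff₀ hρ, mul_comm]; exact hη.pd_le i x
  have hK : 0 ≤ K * ρ⁻¹ := (abs_nonneg _).trans (hp 0)
  have h7 : η x ^ 7 ≤ η x ^ 2 * η x := by
    have := pow_le_pow_of_le_one h0 (hη.le_one x) (by norm_num : 3 ≤ 7)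
    linarith [pow_succ (η x) 2]
  have key : ∀ i, |pd i (fun y => η y ^ 8) x * V i x|
      ≤ 8 * (η x ^ 2 * η x) * (K * ρ⁻¹) * √S := fun i => by
    rw [pd_pow hη.test.differentiable, abs_mul, abs_mul, abs_mul, abs_pow, abs_of_nonneg h0]
    norm_num
    have hi := hp i
    have hv := Real.abs_le_sqrt (hV i)
    gcongr
  rw [Real.sqrt_mul (sq_nonneg _), Real.sqrt_sq h0]
  refine (Finset.abs_sum_le_sum_abs _ _).trans ((Finset.sum_le_sum fun i _ => key i).trans ?_)
  simp only [Fin.sum_univ_three]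
  apply le_of_eq; ring

theorem sq_le_density (x : E3) (i : Fin 3) :
    U i x ^ 2 ≤ density U W B x ∧ B i x ^ 2 ≤ density U W B x := by
  have h := fun V : Fin 3 → E3 → ℝ => Finset.single_le_sum (f := fun l => V l x ^ 2)
    (fun _ _ => sq_nonneg _) (Finset.mem_univ i)
  have hU := h U
  have hB := h B
  have p := fun V : Fin 3 → E3 → ℝ => Finset.sum_nonneg fun l (_ : l ∈ Finset.univ) =>
    sq_nonneg (V l x)
  have pU := p U
  have pB := p B
  have pW := p W
  unfold density
  constructor <;> linarith

theorem energyForm_cutoff_ge (hρ : 0 < ρ) (hη : IsCutoff K ρ η) (x : E3) :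
    1 / 8 * (η x ^ 8 * dissipation U W B x)
        - 2048 * K ^ 2 * ρ⁻¹ ^ 2 * (η x ^ 2 * density U W B x)
        - 24 * K * ρ⁻¹ * (η x ^ 2 * density U W B x * √(η x ^ 2 * density U W B x))
      ≤ energyForm (fun y => η y ^ 8) U W B x := by
  have h0 := hη.nonneg x
  have hd : ∀ i, (8 * η x ^ 3 * pd i η x) ^ 2 ≤ 64 * K ^ 2 * ρ⁻¹ ^ 2 * η x ^ 2 := fun i => by
    have hp : |pd i η x| ≤ K * ρ⁻¹ := by
      rw [← div_eq_mul_inv, le_div_iff₀ hρ, mul_comm]; exact hη.pd_le i x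
    have h2 : pd i η x ^ 2 ≤ (K * ρ⁻¹) ^ 2 := by
      rw [← sq_abs]; exact pow_le_pow_left₀ (abs_nonneg _) hp 2
    have h6 := pow_le_pow_of_le_one h0 (hη.le_one x) (by norm_num : 2 ≤ 6)
    calc _ = 64 * (η x ^ 6 * pd i η x ^ 2) := by ring
      _ ≤ 64 * (η x ^ 2 * (K * ρ⁻¹) ^ 2) := by gcongr
      _ = _ := by ring
  have h := energyForm_ge (θ := fun y => η y ^ 8) (e := η x ^ 4) (W := W) (by ring)
    (d := fun i => 8 * η x ^ 3 * pd i η x)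
    (fun i => by rw [pd_pow hη.test.differentiable]; norm_num; ring) hd
    (hη.abs_sum_pd_eight_mul_le hρ fun i => (sq_le_density (U := U) (W := W) (B := B) x i).1)
    (hη.abs_sum_pd_eight_mul_le hρ fun i => (sq_le_density (U := U) (W := W) (B := B) x i).2)
  refine le_trans (le_of_eq ?_) h
  ring

/-- The Caccioppoli estimate. -/
theorem integral_cutoff_mul_dissipation_le (hK : 1 ≤ K) : ∃ C : ℝ, 0 < C ∧
    ∀ {ρ : ℝ} {η : E3 → ℝ} {U W B : Fin 3 → E3 → ℝ} {P : E3 → ℝ}, 0 < ρ →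
      IsCompSolution U W B P → IsCutoff K ρ η →
      ∫ x, η x ^ 8 * dissipation U W B x ≤ C * (ρ⁻¹ ^ 2 * (∫ x, η x ^ 2 * density U W B x)
        + ρ⁻¹ * ∫ x, η x ^ 2 * density U W B x * √(η x ^ 2 * density U W B x)) := by
  obtain ⟨c, hc⟩ : ∃ c, c = 16 * (opConst * (36 * K ^ 2) ^ 2) := ⟨_, rfl⟩
  have hop : 0 < opConst := by
    have := meanDisp_nonneg
    unfold opConst; linarith
  have hc0 : 0 < c := by rw [hc]; positivity
  refine ⟨16 * (576 * c ^ 2 + 2048 * K ^ 2 + 18 * c + 24 * K), by positivity, ?_⟩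
  intro ρ η U W B P hρ h hη
  have hs : 0 < 1 / (32 * c) := by positivity
  have hR := integral_cutoff_mul_resid_le hρ hK h hη hs
  have hθ : IsTest fun x => η x ^ 8 := hη.test.pow (by norm_num)
  have hvt : IsTest fun x => η x ^ 2 * density U W B x :=
    (hη.test.pow (by norm_num)).mul_right (density_contDiff h)
  have hv0 : ∀ x, 0 ≤ η x ^ 2 * density U W B x := fun x =>
    mul_nonneg (sq_nonneg _) (density_nonneg x)
  have hDt := hθ.mul_right (dissipation_contDiff h)
  have hRt := hθ.mul_right (ContDiff.sum fun j (_ : j ∈ Finset.univ) =>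
    (h.smooth_U j).mul (resid_contDiff h j))
  have hN := isNull_resid_sub_energyForm hθ h
  have hvv := hvt.integrable_mul_sqrt
  have hXt := hθ.mul_right ((ContDiff.sum fun j (_ : j ∈ Finset.univ) =>
    ContDiff.sum fun i (_ : i ∈ Finset.univ) => pd_sq_contDiff (h.smooth_U j) i).add
    (contDiff_const.mul (ContDiff.sum fun k (_ : k ∈ Finset.univ) => (h.smooth_W k).pow 2)
      : ContDiff ℝ (⊤ : ℕ∞) fun x => 2 * ∑ k, W k x ^ 2))
  have hX : ∫ x, η x ^ 8 * (∑ j, ∑ i, pd i (U j) x ^ 2 + 2 * ∑ k, W k x ^ 2)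
      ≤ 2 * ∫ x, η x ^ 8 * dissipation U W B x := by
    rw [← integral_const_mul]
    refine integral_mono hXt.integrable (hDt.const_mul 2).integrable fun x => ?_
    have p1 : 0 ≤ ∑ j, ∑ i, pd i (U j) x ^ 2 := by positivity
    have p2 : 0 ≤ ∑ j, ∑ i, pd i (B j) x ^ 2 := by positivity
    have p3 : 0 ≤ ∑ j, ∑ i, pd i (W j) x ^ 2 := by positivity
    have p4 : 0 ≤ ∑ k, W k x ^ 2 := by positivity
    have : ∑ j, ∑ i, pd i (U j) x ^ 2 + 2 * ∑ k, W k x ^ 2 ≤ 2 * dissipation U W B x := by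
      unfold dissipation; linarith
    have h8 : 0 ≤ η x ^ 8 := pow_nonneg (hη.nonneg x) 8
    change η x ^ 8 * _ ≤ 2 * (η x ^ 8 * _)
    nlinarith
  have hE : 1 / 8 * (∫ x, η x ^ 8 * dissipation U W B x)
      ≤ (∫ x, η x ^ 8 * ∑ j, U j x * resid U W B j x)
        + 2048 * K ^ 2 * ρ⁻¹ ^ 2 * (∫ x, η x ^ 2 * density U W B x)
        + 24 * K * ρ⁻¹ * ∫ x, η x ^ 2 * density U W B x * √(η x ^ 2 * density U W B x) := by
    simp_rw [← integral_const_mul]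
    have i1 : Integrable fun x => (η x ^ 8 * ∑ j, U j x * resid U W B j x)
        + 2048 * K ^ 2 * ρ⁻¹ ^ 2 * (η x ^ 2 * density U W B x) :=
      hRt.integrable.add (hvt.const_mul _).integrable
    have i2 : Integrable fun x => 24 * K * ρ⁻¹ *
        (η x ^ 2 * density U W B x * √(η x ^ 2 * density U W B x)) := hvv.const_mul _
    have i3 : Integrable fun x => (η x ^ 8 * ∑ j, U j x * resid U W B j x)
        + 2048 * K ^ 2 * ρ⁻¹ ^ 2 * (η x ^ 2 * density U W B x) + 24 * K * ρ⁻¹ *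
        (η x ^ 2 * density U W B x * √(η x ^ 2 * density U W B x)) := i1.add i2
    rw [← integral_add hRt.integrable (hvt.const_mul _).integrable, ← integral_add i1 i2,
      ← sub_zero (∫ x, _ + _), ← hN.integral_eq, ← integral_sub i3 hN.test.integrable]
    refine integral_mono (hDt.const_mul _).integrable (i3.sub hN.test.integrable) fun x => ?_
    have := energyForm_cutoff_ge (U := U) (W := W) (B := B) hρ hη x
    simp only
    linarith
  have hV0 : 0 ≤ ρ⁻¹ ^ 2 * ∫ x, η x ^ 2 * density U W B x :=
    mul_nonneg (by positivity) (integral_nonneg hv0)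
  have hT0 : 0 ≤ ρ⁻¹ * ∫ x, η x ^ 2 * density U W B x * √(η x ^ 2 * density U W B x) :=
    mul_nonneg (by positivity) (integral_mul_sqrt_nonneg hv0)
  rw [← hc] at hR
  generalize ∫ x, η x ^ 8 * dissipation U W B x = D at *
  generalize ∫ x, η x ^ 8 * (∑ j, ∑ i, pd i (U j) x ^ 2 + 2 * ∑ k, W k x ^ 2) = X at *
  generalize ∫ x, η x ^ 2 * density U W B x * √(η x ^ 2 * density U W B x) = T at *
  generalize ∫ x, η x ^ 2 * density U W B x = V at *
  generalize (∫ x, η x ^ 8 * ∑ j, U j x * resid U W B j x) = R at *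
  have hR2 : R ≤ 1 / 32 * X + 576 * c ^ 2 * (ρ⁻¹ ^ 2 * V) + 18 * c * (ρ⁻¹ * T) := by
    refine hR.trans (le_of_eq ?_)
    field_simp
    ring
  have hc2 : 0 ≤ c ^ 2 := sq_nonneg c
  have hK2 : 0 ≤ K ^ 2 := sq_nonneg K
  nlinarith [mul_nonneg hc2 hT0, mul_nonneg hK2 hT0, mul_nonneg hc0.le hV0,
    mul_nonneg (zero_le_one.trans hK) hV0]

end EnergyEstimate

theorem exists_isCutoff : ∃ K : ℝ, 1 ≤ K ∧ ∀ ρ : ℝ, 0 < ρ → ∃ η, IsCutoff K ρ η := by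
  let f : ContDiffBump (0 : E3) := ⟨1, 2, one_pos, one_lt_two⟩
  have hf : IsTest f := ⟨f.contDiff, f.hasCompactSupport⟩
  choose M hM0 hM using fun i => (hf.deriv i).exists_bound
  choose N hN0 hN using fun i j => ((hf.deriv j).deriv i).exists_bound
  have hS0 : 0 ≤ ∑ i, M i := Finset.sum_nonneg fun i _ => hM0 i
  have hT0 : 0 ≤ ∑ i, ∑ j, N i j :=
    Finset.sum_nonneg fun i _ => Finset.sum_nonneg fun j _ => hN0 i j
  refine ⟨1 + (∑ i, M i) + ∑ i, ∑ j, N i j, by linarith, fun ρ hρ =>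
    ⟨fun x => f (0 + ρ⁻¹ • x), ?_⟩⟩
  have hz : ∀ x ∉ ball3 (2 * ρ), f (0 + ρ⁻¹ • x) = 0 := fun x hx => by
    refine f.zero_of_le_dist ?_
    simp only [ball3, mem_ball, dist_zero_right, not_lt] at hx
    rw [zero_add, dist_zero_right, norm_smul, norm_inv, norm_of_nonneg hρ.le]
    change 2 ≤ _
    rw [inv_mul_eq_div, le_div_iff₀ hρ]
    exact hx
  have ht : IsTest fun x => f (0 + ρ⁻¹ • x) :=
    ⟨hf.smooth.comp (contDiff_const.add (contDiff_id.const_smul _)),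
      HasCompactSupport.intro (isCompact_closedBall (0 : E3) (2 * ρ)) fun x hx =>
        hz x fun h => hx (ball_subset_closedBall h)⟩
  have e1 : ∀ i, pd i (fun x => f (0 + ρ⁻¹ • x)) = fun x => ρ⁻¹ * pd i f (0 + ρ⁻¹ • x) :=
    fun i => funext fun x => pd_comp_affine hf.differentiable i 0 ρ⁻¹ x
  refine ⟨ht, fun x => f.nonneg, fun x => f.le_one, fun x hx => ?_, hz, fun i x => ?_,
    fun i j x => ?_⟩
  · refine f.one_of_mem_closedBall ?_
    simp only [ball3, mem_ball, dist_zero_right] at hx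
    rw [mem_closedBall, zero_add, dist_zero_right, norm_smul, norm_inv, norm_of_nonneg hρ.le]
    change _ ≤ 1
    rw [inv_mul_eq_div, div_le_one hρ]
    exact hx.le
  · have h := Finset.single_le_sum (f := M) (fun i _ => hM0 i) (Finset.mem_univ i)
    rw [e1, abs_mul, abs_of_pos (inv_pos.2 hρ), mul_inv_cancel_left₀ hρ.ne']
    linarith [hM i (0 + ρ⁻¹ • x)]
  · have h1 := Finset.single_le_sum (f := N i) (fun j _ => hN0 i j) (Finset.mem_univ j)
    have h2 := Finset.single_le_sum (f := fun i => ∑ j, N i j)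
      (fun i _ => Finset.sum_nonneg fun j _ => hN0 i j) (Finset.mem_univ i)
    have hd : Differentiable ℝ fun x => pd j f (0 + ρ⁻¹ • x) :=
      (hf.deriv j).differentiable.comp (by fun_prop)
    rw [e1, pd_const_mul hd, pd_comp_affine (hf.deriv j).differentiable, abs_mul, abs_mul,
      abs_of_pos (inv_pos.2 hρ), show ρ ^ 2 * (ρ⁻¹ * (ρ⁻¹ * |pd i (pd j f) (0 + ρ⁻¹ • x)|))
        = |pd i (pd j f) (0 + ρ⁻¹ • x)| by field_simp]
    linarith [hN i j (0 + ρ⁻¹ • x)]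

theorem integrableOn_ball3 {f : E3 → ℝ} (hf : Continuous f) (R : ℝ) : IntegrableOn f (ball3 R) :=
  (hf.continuousOn.integrableOn_compact (isCompact_closedBall 0 R)).mono_set ball_subset_closedBall

theorem integral_norm_pow_le {p : ℝ} {q : ℕ} (hq : 0 < q) (hqp : q ≤ p) {R : ℝ} (hR : 0 < R)
    {v : E3 → E3} (hv : Continuous v) :
    ∫ x in ball3 R, ‖v x‖ ^ q
      ≤ volume.real (ball3 R) ^ (1 - q / p) * lpnorm p v (ball3 R) ^ q := by
  have hq0 : (0 : ℝ) < q := Nat.cast_pos.2 hq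
  have hp0 : 0 < p := hq0.trans_le hqp
  have hm : 0 < volume.real (ball3 R) :=
    ENNReal.toReal_pos (measure_ball_pos _ _ hR).ne' measure_ball_lt_top.ne
  have hne : volume (ball3 R) ≠ 0 := (measure_ball_pos _ _ hR).ne'
  have hpow : ∀ x, (‖v x‖ ^ q) ^ (p / q) = ‖v x‖ ^ p := fun x => by
    rw [← Real.rpow_natCast, ← Real.rpow_mul (norm_nonneg _), mul_div_cancel₀ _ hq0.ne']
  have hj := (convexOn_rpow ((one_le_div hq0).2 hqp)).map_set_average_le
    (μ := (volume : Measure E3)) (t := ball3 R) (f := fun x => ‖v x‖ ^ q)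
    (continuousOn_id.rpow_const fun _ _ => Or.inr (by positivity)) isClosed_Ici hne
    measure_ball_lt_top.ne (ae_of_all _ fun x => Set.mem_Ici.2 (pow_nonneg (norm_nonneg (v x)) q))
    (integrableOn_ball3 (hv.norm.pow q) R)
    (integrableOn_ball3 ((hv.norm.pow q).rpow_const
      fun _ => Or.inr (div_nonneg hp0.le hq0.le)) R)
  simp only [hpow, setAverage_eq, smul_eq_mul] at hj
  have hI : 0 ≤ ∫ x in ball3 R, ‖v x‖ ^ q := integral_nonneg fun x => by positivity
  have hJ : 0 ≤ ∫ x in ball3 R, ‖v x‖ ^ p := integral_nonneg fun x => by positivity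
  rw [lpnorm, ← Real.rpow_natCast (_ ^ (1 / p)), ← Real.rpow_mul hJ]
  generalize (∫ x in ball3 R, ‖v x‖ ^ q) = I at *
  generalize (∫ x in ball3 R, ‖v x‖ ^ p) = J at *
  generalize volume.real (ball3 R) = m at *
  have h1 := Real.rpow_le_rpow (by positivity) hj (z := q / p) (by positivity)
  rw [← Real.rpow_mul (by positivity), div_mul_div_cancel₀ hq0.ne', div_self hp0.ne',
    Real.rpow_one, Real.mul_rpow (by positivity) hJ] at h1
  rw [Real.rpow_sub hm, Real.rpow_one]
  rw [Real.inv_rpow hm.le] at h1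
  calc I = m * (m⁻¹ * I) := by field_simp
    _ ≤ m * ((m ^ (q / p))⁻¹ * J ^ (q / p)) := by gcongr
    _ = _ := by rw [show 1 / p * q = q / p by ring]; ring

theorem volume_real_ball3 {R : ℝ} (hR : 0 < R) :
    volume.real (ball3 R) = R ^ 3 * volume.real (ball3 1) := by
  have h := Measure.addHaar_ball (volume : Measure E3) 0 hR.le
  simp only [finrank_euclideanSpace, Fintype.card_fin] at h
  rw [ball3, ball3, measureReal_def, h, ENNReal.toReal_mul, ENNReal.toReal_ofReal (by positivity),
    measureReal_def]

theorem sum_sq_eq_norm_sq (v : E3) : ∑ k, v k ^ 2 = ‖v‖ ^ 2 := by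
  simp [EuclideanSpace.norm_sq_eq]

theorem density_eq (u w b : E3 → E3) (x : E3) :
    density (fun j y => u y j) (fun j y => w y j) (fun j y => b y j) x
      = ‖u x‖ ^ 2 + ‖b x‖ ^ 2 + ‖w x‖ ^ 2 := by
  simp only [density, sum_sq_eq_norm_sq]

theorem sum_sq_mul_sqrt_le {a b c : ℝ} (ha : 0 ≤ a) (hb : 0 ≤ b) (hc : 0 ≤ c) :
    (a ^ 2 + b ^ 2 + c ^ 2) * √(a ^ 2 + b ^ 2 + c ^ 2) ≤ 9 * (a ^ 3 + b ^ 3 + c ^ 3) := by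
  have h1 : √(a ^ 2 + b ^ 2 + c ^ 2) ≤ a + b + c :=
    Real.sqrt_le_iff.2 ⟨by positivity, by
      nlinarith [mul_nonneg ha hb, mul_nonneg hb hc, mul_nonneg ha hc]⟩
  calc _ ≤ (a ^ 2 + b ^ 2 + c ^ 2) * (a + b + c) := by gcongr
    _ ≤ _ := by
      nlinarith [mul_nonneg (add_nonneg ha hb) (sq_nonneg (a - b)), pow_nonneg ha 3,
        pow_nonneg hb 3, pow_nonneg hc 3, mul_nonneg (add_nonneg hb hc) (sq_nonneg (b - c)),
        mul_nonneg (add_nonneg ha hc) (sq_nonneg (a - c))]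

theorem lpnorm_nonneg (p : ℝ) (v : E3 → E3) (S : Set E3) : 0 ≤ lpnorm p v S :=
  Real.rpow_nonneg (integral_nonneg fun _ => by positivity) _

theorem integral_sum_norm_pow_le {p : ℝ} {q : ℕ} (hq : 0 < q) (hqp : q ≤ p) {ρ : ℝ} (hρ : 0 < ρ)
    {u w b : E3 → E3} (hu : Continuous u) (hw : Continuous w) (hb : Continuous b) :
    ∫ x in ball3 (2 * ρ), (‖u x‖ ^ q + ‖b x‖ ^ q + ‖w x‖ ^ q)
      ≤ volume.real (ball3 2) ^ (1 - q / p) * ρ ^ (3 - 3 * q / p) *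
        (lpnorm p u (ball3 (2 * ρ)) + lpnorm p b (ball3 (2 * ρ))
          + lpnorm p w (ball3 (2 * ρ))) ^ q := by
  have hR : 0 < 2 * ρ := by positivity
  have hi : ∀ {v : E3 → E3}, Continuous v → IntegrableOn (fun x => ‖v x‖ ^ q) (ball3 (2 * ρ)) :=
    fun hv => integrableOn_ball3 (by fun_prop) _
  have hub : IntegrableOn (fun x => ‖u x‖ ^ q + ‖b x‖ ^ q) (ball3 (2 * ρ)) :=
    (hi hu).add (hi hb)
  rw [integral_add hub (hi hw), integral_add (hi hu) (hi hb)]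
  have hm : volume.real (ball3 (2 * ρ)) ^ (1 - q / p)
      = volume.real (ball3 2) ^ (1 - q / p) * ρ ^ (3 - 3 * q / p) := by
    have e : volume.real (ball3 (2 * ρ)) = volume.real (ball3 2) * ρ ^ 3 := by
      rw [volume_real_ball3 hR, volume_real_ball3 two_pos]; ring
    rw [e, Real.mul_rpow measureReal_nonneg (by positivity), ← Real.rpow_natCast,
      ← Real.rpow_mul hρ.le]
    congr 2; push_cast; ring
  have h := fun {v : E3 → E3} (hv : Continuous v) => integral_norm_pow_le hq hqp hR hv
  have hU := h hu
  have hB := h hb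
  have hW := h hw
  rw [hm] at hU hB hW
  have a0 := lpnorm_nonneg p u (ball3 (2 * ρ))
  have b0 := lpnorm_nonneg p b (ball3 (2 * ρ))
  have c0 := lpnorm_nonneg p w (ball3 (2 * ρ))
  have hM : 0 ≤ volume.real (ball3 2) ^ (1 - q / p) * ρ ^ (3 - 3 * q / p) := by positivity
  generalize volume.real (ball3 2) ^ (1 - q / p) * ρ ^ (3 - 3 * q / p) = M at *
  have h2 := add_le_add_left (pow_add_pow_le a0 b0 hq.ne')
    (lpnorm p w (ball3 (2 * ρ)) ^ q)
  have h3 := pow_add_pow_le (add_nonneg a0 b0) c0 hq.ne'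
  have h4 := mul_le_mul_of_nonneg_left (h2.trans h3) hM
  linarith

theorem integral_gradSq_le {K ρ : ℝ} {η : E3 → ℝ} {u w b : E3 → E3} {P : E3 → ℝ}
    (h : IsMMPSolution u w b P) (hη : IsCutoff K ρ η) :
    ∫ x in ball3 ρ, (gradSq u x + gradSq b x + gradSq w x)
      ≤ ∫ x, η x ^ 8 * dissipation (fun j y => u y j) (fun j y => w y j) (fun j y => b y j) x := by
  have hs := dissipation_contDiff h.components
  have hg := fun {v : E3 → E3} (hv : ContDiff ℝ (⊤ : ℕ∞) v) =>
    (ContDiff.sum fun j (_ : j ∈ Finset.univ) => ContDiff.sum fun i (_ : i ∈ Finset.univ) =>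
      pd_sq_contDiff (contDiff_coord hv j) i).continuous
  have hI := ((hη.test.pow (by norm_num : 8 ≠ 0)).mul_right hs).integrable
  refine le_trans ?_ (setIntegral_le_integral (s := ball3 ρ) hI (ae_of_all _ fun x =>
    mul_nonneg (pow_nonneg (hη.nonneg x) 8) (dissipation_nonneg x)))
  refine setIntegral_mono_on (integrableOn_ball3 (((hg h.smooth_u).add (hg h.smooth_b)).add
    (hg h.smooth_w)) ρ) hI.integrableOn measurableSet_ball fun x hx => ?_
  have hw : 0 ≤ ∑ k, w x k ^ 2 := by positivity
  rw [hη.eq_one x hx]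
  simp only [dissipation, gradSq, one_pow, one_mul]
  linarith

theorem integral_cutoff_mul_density_le {K ρ : ℝ} {η : E3 → ℝ} {u w b : E3 → E3} {P : E3 → ℝ}
    (h : IsMMPSolution u w b P) (hη : IsCutoff K ρ η) :
    ∫ x, η x ^ 2 * density (fun j y => u y j) (fun j y => w y j) (fun j y => b y j) x
      ≤ ∫ x in ball3 (2 * ρ), (‖u x‖ ^ 2 + ‖b x‖ ^ 2 + ‖w x‖ ^ 2) := by
  have hu := h.smooth_u.continuous
  have hw := h.smooth_w.continuous
  have hb := h.smooth_b.continuous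
  have hI := ((hη.test.pow (by norm_num : 2 ≠ 0)).mul_right
    (density_contDiff h.components)).integrable
  rw [← setIntegral_eq_integral_of_forall_compl_eq_zero (s := ball3 (2 * ρ))
    fun x hx => by rw [hη.eq_zero x hx]; simp]
  refine setIntegral_mono_on hI.integrableOn (integrableOn_ball3 (by fun_prop) _)
    measurableSet_ball fun x _ => ?_
  rw [density_eq]
  exact mul_le_of_le_one_left (by positivity) (pow_le_one₀ (hη.nonneg x) (hη.le_one x))

theorem integral_cutoff_mul_sqrt_density_le {K ρ : ℝ} {η : E3 → ℝ} {u w b : E3 → E3} {P : E3 → ℝ}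
    (h : IsMMPSolution u w b P) (hη : IsCutoff K ρ η) :
    ∫ x, η x ^ 2 * density (fun j y => u y j) (fun j y => w y j) (fun j y => b y j) x
        * √(η x ^ 2 * density (fun j y => u y j) (fun j y => w y j) (fun j y => b y j) x)
      ≤ 9 * ∫ x in ball3 (2 * ρ), (‖u x‖ ^ 3 + ‖b x‖ ^ 3 + ‖w x‖ ^ 3) := by
  have hu := h.smooth_u.continuous
  have hw := h.smooth_w.continuous
  have hb := h.smooth_b.continuous
  have hI := ((hη.test.pow (by norm_num : 2 ≠ 0)).mul_right
    (density_contDiff h.components)).integrable_mul_sqrt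
  rw [← setIntegral_eq_integral_of_forall_compl_eq_zero (s := ball3 (2 * ρ))
    fun x hx => by rw [hη.eq_zero x hx]; simp, ← integral_const_mul]
  refine setIntegral_mono_on hI.integrableOn (integrableOn_ball3 (by fun_prop) _)
    measurableSet_ball fun x _ => ?_
  refine le_trans ?_ (sum_sq_mul_sqrt_le (norm_nonneg (u x)) (norm_nonneg (b x))
    (norm_nonneg (w x)))
  rw [density_eq]
  have hv : η x ^ 2 * (‖u x‖ ^ 2 + ‖b x‖ ^ 2 + ‖w x‖ ^ 2) ≤ ‖u x‖ ^ 2 + ‖b x‖ ^ 2 + ‖w x‖ ^ 2 :=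
    mul_le_of_le_one_left (by positivity) (pow_le_one₀ (hη.nonneg x) (hη.le_one x))
  gcongr

/-- Dirichlet integral estimate for `p ∈ [3, 9/2)`. -/
theorem dirichlet_estimate_high_p
    (p : ℝ) (hp1 : 3 ≤ p) (hp2 : p < 9 / 2) :
    ∃ C : ℝ, 0 < C ∧
      ∀ u w b : E3 → E3, ∀ P : E3 → ℝ, IsMMPSolution u w b P →
      ∀ ρ : ℝ, 1 < ρ →
        (∫ x in ball3 ρ, (gradSq u x + gradSq b x + gradSq w x)) ≤
          C * (ρ ^ (1 - 6 / p) *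
                (lpnorm p u (ball3 (2 * ρ)) + lpnorm p b (ball3 (2 * ρ))
                  + lpnorm p w (ball3 (2 * ρ))) ^ 2
              + ρ ^ (2 - 9 / p) *
                (lpnorm p u (ball3 (2 * ρ)) + lpnorm p b (ball3 (2 * ρ))
                  + lpnorm p w (ball3 (2 * ρ))) ^ 3) := by
  obtain ⟨K, hK, hcut⟩ := exists_isCutoff
  obtain ⟨C, hC, hest⟩ := integral_cutoff_mul_dissipation_le hK
  have hm : 0 < volume.real (ball3 2) :=
    ENNReal.toReal_pos (measure_ball_pos _ _ two_pos).ne' measure_ball_lt_top.ne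
  have hm2 := Real.rpow_pos_of_pos hm (1 - (2 : ℕ) / p)
  have hm3 := Real.rpow_pos_of_pos hm (1 - (3 : ℕ) / p)
  refine ⟨C * (volume.real (ball3 2) ^ (1 - (2 : ℕ) / p)
    + 9 * volume.real (ball3 2) ^ (1 - (3 : ℕ) / p)), by positivity, ?_⟩
  intro u w b P h ρ hρ1
  have hρ : 0 < ρ := zero_lt_one.trans hρ1
  obtain ⟨η, hη⟩ := hcut ρ hρ
  have hu := h.smooth_u.continuous
  have hw := h.smooth_w.continuous
  have hb := h.smooth_b.continuous
  refine (integral_gradSq_le h hη).trans ((hest hρ h.components hη).trans ?_)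
  rw [mul_assoc]
  refine mul_le_mul_of_nonneg_left ?_ hC.le
  have h2 := (integral_cutoff_mul_density_le h hη).trans (integral_sum_norm_pow_le (p := p)
    (q := 2) two_pos (by push_cast; linarith) hρ hu hw hb)
  have h3 := (integral_cutoff_mul_sqrt_density_le h hη).trans (mul_le_mul_of_nonneg_left
    (integral_sum_norm_pow_le (p := p) (q := 3) three_pos (by push_cast; linarith) hρ hu hw hb)
    (by norm_num))
  have e2 : ρ ^ (1 - 6 / p) = ρ⁻¹ ^ 2 * ρ ^ (3 - 3 * ((2 : ℕ) : ℝ) / p) := by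
    rw [← Real.rpow_natCast, Real.inv_rpow hρ.le, ← Real.rpow_neg hρ.le, ← Real.rpow_add hρ]
    congr 1; push_cast; ring
  have e3 : ρ ^ (2 - 9 / p) = ρ⁻¹ * ρ ^ (3 - 3 * ((3 : ℕ) : ℝ) / p) := by
    rw [← Real.rpow_neg_one ρ, ← Real.rpow_add hρ]
    congr 1; push_cast; ring
  have h2r := mul_le_mul_of_nonneg_left h2 (by positivity : 0 ≤ ρ⁻¹ ^ 2)
  have h3r := mul_le_mul_of_nonneg_left h3 (by positivity : 0 ≤ ρ⁻¹)
  have hX : 0 ≤ lpnorm p u (ball3 (2 * ρ)) + lpnorm p b (ball3 (2 * ρ))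
      + lpnorm p w (ball3 (2 * ρ)) :=
    add_nonneg (add_nonneg (lpnorm_nonneg _ _ _) (lpnorm_nonneg _ _ _)) (lpnorm_nonneg _ _ _)
  rw [e2, e3]
  generalize lpnorm p u (ball3 (2 * ρ)) + lpnorm p b (ball3 (2 * ρ))
      + lpnorm p w (ball3 (2 * ρ)) = X at *
  generalize volume.real (ball3 2) ^ (1 - ((2 : ℕ) : ℝ) / p) = m2 at *
  generalize volume.real (ball3 2) ^ (1 - ((3 : ℕ) : ℝ) / p) = m3 at *
  refine (add_le_add h2r h3r).trans ?_
  have q2 : 0 ≤ ρ⁻¹ ^ 2 * ρ ^ (3 - 3 * ((2 : ℕ) : ℝ) / p) * X ^ 2 := by positivity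
  have q3 : 0 ≤ ρ⁻¹ * ρ ^ (3 - 3 * ((3 : ℕ) : ℝ) / p) * X ^ 3 := by positivity
  linarith [mul_nonneg hm2.le q3, mul_nonneg hm3.le q2]
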